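/- Let h < h_star. Then there exists a constant c_h > 0 such that lim_{n→∞} P^{G_n}[ #{x ∈ G_n : |C_x^{G_n,h}| ≥ N_n^{c_h}} ≥ (η^+(h)/2)·N_n ] = 1, where C_x^{G_n,h} denotes the connected component of the level set {y ∈ G_n : Ψ_{G_n}(y) ≥ h} containing x. -/

import Mathlib

open MeasureTheory ProbabilityTheory Filter Set
open scoped ENNReal NNReal ENat Classical

namespace GFF

variable {V : Type*} {T : Type*}

/-- Number of ordered adjacent pairs inside `U` (twice the number of edges of the induced
subgraph). -/
noncomputable def adjPairs (G : SimpleGraph V) (U : Set V) : ℕ :=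
  Set.ncard {p : V × V | p.1 ∈ U ∧ p.2 ∈ U ∧ G.Adj p.1 p.2}

/-- `U` (assumed connected) induces a tree, i.e. has tree excess zero. -/
def TxZero (G : SimpleGraph V) (U : Set V) : Prop :=
  adjPairs G U = 2 * (Set.ncard U - 1)

/-- Closed ball of radius `R` for the graph distance. -/
def gball (G : SimpleGraph V) (x : V) (R : ℕ) : Set V := {y | G.dist x y ≤ R}

/-- Set of vertices within distance `R` of the set `A`. -/
def sball (G : SimpleGraph V) (A : Set V) (R : ℕ) : Set V := {y | ∃ a ∈ A, G.dist a y ≤ R}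

/-- Connected component containing `x` of the level set `{ω ≥ h}`. -/
def levelComp (G : SimpleGraph V) (h : ℝ) (ω : V → ℝ) (x : V) : Set V :=
  {y | ∃ p : G.Walk x y, ∀ v ∈ p.support, h ≤ ω v}

/-- `G` is `d`-regular. -/
def IsReg (G : SimpleGraph V) (d : ℕ) : Prop := ∀ v, Nat.card (G.neighborSet v) = d

/-- `G` is an infinite `d`-regular tree. -/
def IsRegTree (G : SimpleGraph V) (d : ℕ) : Prop :=
  G.Connected ∧ G.IsAcyclic ∧ IsReg G d

/-- Transition matrix of SRW on a `d`-regular graph. -/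
noncomputable def transP [Fintype V] (G : SimpleGraph V) (d : ℕ) : Matrix V V ℝ :=
  Matrix.of fun u v => if G.Adj u v then ((d : ℝ))⁻¹ else 0

/-- All non-zero eigenvalues of `I - P` are at least `β`. -/
def SpectralGapLB [Fintype V] (G : SimpleGraph V) (d : ℕ) (β : ℝ) : Prop :=
  ∀ (f : V → ℝ) (lam : ℝ),
    Matrix.mulVec ((1 : Matrix V V ℝ) - transP G d) f = lam • f → f ≠ 0 → lam = 0 ∨ β ≤ lam

/-- `P_x[X̄_t = y]` for the continuous-time SRW with i.i.d. mean-one exponential holding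
times (Poissonized jump chain). -/
noncomputable def heatK [Fintype V] (G : SimpleGraph V) (d : ℕ) (t : ℝ) (x y : V) : ℝ :=
  ∑' k : ℕ, Real.exp (-t) * t ^ k / (Nat.factorial k) * ((transP G d) ^ k) x y

/-- The zero-average Green function. -/
noncomputable def zGreen [Fintype V] (G : SimpleGraph V) (d Nn : ℕ) (x y : V) : ℝ :=
  ∫ t in Set.Ioi (0 : ℝ), (heatK G d t x y - 1 / (Nn : ℝ))

/-- Green function of SRW on the `d`-regular tree. -/
noncomputable def treeGreen (G : SimpleGraph V) (d : ℕ) (x y : V) : ℝ :=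
  (((d : ℝ) - 1) / ((d : ℝ) - 2)) * (((d : ℝ) - 1)⁻¹) ^ (G.dist x y)

/-- `μ` is the law of the centred Gaussian field with covariance `K`. -/
def IsGaussianField {I : Type*} (μ : Measure (I → ℝ)) (K : I → I → ℝ) : Prop :=
  IsProbabilityMeasure μ ∧
    ∀ c : I →₀ ℝ,
      μ.map (fun ω => ∑ i ∈ c.support, c i * ω i) =
        gaussianReal 0 (Real.toNNReal (∑ i ∈ c.support, ∑ j ∈ c.support, c i * c j * K i j))

/-- One-step transition probability of SRW. -/
noncomputable def srwStep (G : SimpleGraph V) (d : ℕ) (u v : V) : ℝ≥0∞ :=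
  if G.Adj u v then (d : ℝ≥0∞)⁻¹ else 0

/-- `W x` is the law of discrete-time SRW on `G` started at `x`. -/
def IsSRW [MeasurableSpace V] (G : SimpleGraph V) (d : ℕ) (W : V → Measure (ℕ → V)) : Prop :=
  (∀ x, IsProbabilityMeasure (W x)) ∧
    ∀ (x : V) (k : ℕ) (p : ℕ → V),
      W x {ω | ∀ i ≤ k, ω i = p i} =
        (if p 0 = x then 1 else 0) * ∏ i ∈ Finset.range k, srwStep G d (p i) (p (i + 1))

/-- Entrance time of the set `A` (`⊤` if never entered). -/
noncomputable def hitTime (A : Set V) (ω : ℕ → V) : ℕ∞ :=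
  sInf ((Nat.cast : ℕ → ℕ∞) '' {k | ω k ∈ A})

/-- Exit time of the set `U`. -/
noncomputable def exitTime (U : Set V) (ω : ℕ → V) : ℕ∞ := hitTime Uᶜ ω

/-- Position of the walk at the entrance time of `A`. -/
noncomputable def stopAt (A : Set V) (ω : ℕ → V) : V := ω (hitTime A ω).toNat

/-- `π` is a cover tree of `G` at `x`. -/
def IsCoverMap (Gt : SimpleGraph T) (G : SimpleGraph V) (o : T) (x : V) (π : T → V) : Prop :=
  π o = x ∧ Function.Surjective π ∧ ∀ y : T, π '' (Gt.neighborSet y) = G.neighborSet (π y)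

/-- `T_d^+`: the vertices of the tree whose geodesic to `o` avoids the fixed neighbour
`obar` of `o`. -/
def treePlus (Gt : SimpleGraph T) (o obar : T) : Set T :=
  {z | Gt.dist z obar = Gt.dist z o + 1}

/-- `S^+_{T_d}(o,R)`. -/
def spherePlus (Gt : SimpleGraph T) (o obar : T) (R : ℕ) : Set T :=
  {z | z ∈ treePlus Gt o obar ∧ Gt.dist o z = R}

/-- The critical value for level-set percolation on the tree (w.r.t. the law `μT`). -/
noncomputable def hstar (Gt : SimpleGraph T) (o : T) (μT : Measure (T → ℝ)) : ℝ :=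
  sInf {h : ℝ | μT {ω | (levelComp Gt h ω o).Infinite} = 0}

/-- The forward percolation probability `η⁺(h)`. -/
noncomputable def etaPlus (Gt : SimpleGraph T) (o obar : T) (μT : Measure (T → ℝ)) (h : ℝ) :
    ℝ :=
  (μT {ω | (levelComp Gt h ω o ∩ treePlus Gt o obar).Infinite}).toReal

/-- `s_n`. -/
noncomputable def sn (d Nn : ℕ) : ℕ :=
  max 1 ⌊(8 : ℝ) * Real.logb ((d : ℝ) - 1) (Real.logb ((d : ℝ) - 1) (Nn : ℝ))⌋₊

/-- `c₀ = αβ/(d-1)`. -/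
noncomputable def c0 (d : ℕ) (α β : ℝ) : ℝ := α * β / ((d : ℝ) - 1)

/-- `r_n`. -/
noncomputable def rn (d : ℕ) (α β : ℝ) (Nn : ℕ) : ℕ :=
  max 1 ⌊(c0 d α β / 18) * Real.logb ((d : ℝ) - 1) (Nn : ℝ)⌋₊

/-- `R_n`. -/
noncomputable def Rn (d : ℕ) (α β : ℝ) (Nn : ℕ) : ℕ :=
  max 1 ⌊(c0 d α β / 6) * Real.logb ((d : ℝ) - 1) (Nn : ℝ)⌋₊

/-- `F_A(x,s)`: the vertices of `B(A,s) ∖ A` connected to `x` within `B(A,s) ∖ A`. -/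
def Fset (G : SimpleGraph V) (A : Set V) (s : ℕ) (x : V) : Set V :=
  {z | ∃ p : G.Walk x z, ∀ v ∈ p.support, v ∈ sball G A s ∧ v ∉ A}

/-- Good vertex at the boundary of `A`. -/
def GoodVertex (G : SimpleGraph V) (A : Set V) (s : ℕ) (x : V) : Prop :=
  x ∉ A ∧ (∃! y, y ∈ A ∧ G.Adj x y) ∧
    TxZero G (Fset G A s x) ∧
    ∀ y : V, y ∉ A → (∃ a ∈ A, G.Adj y a) → y ≠ x →
      ∀ p : G.Walk y x, (∀ v ∈ p.support, v ∉ A) → ∃ v ∈ p.support, v ∉ sball G A s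

end GFF

set_option linter.unusedVariables false
set_option linter.unusedSectionVars false

namespace SMC

/-! ### Part 1: analytic study of the branching recursion -/

noncomputable def FF (D : ℕ) (x : ℝ) : ℝ := 1 - (1 - x) ^ D

noncomputable def Av (γ : Measure ℝ) (D : ℕ) (ψ : ℝ → ℝ) (a : ℝ) : ℝ := ∫ x, ψ (a / D + x) ∂γ

noncomputable def Op (γ : Measure ℝ) (D : ℕ) (Φ : ℝ → ℝ) (h : ℝ) (ψ : ℝ → ℝ) (a : ℝ) : ℝ :=
  if h ≤ a then Φ (Av γ D ψ a) else 0

noncomputable abbrev Th (γ : Measure ℝ) (D : ℕ) (h : ℝ) := Op γ D (FF D) h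

noncomputable abbrev Ln (γ : Measure ℝ) (D : ℕ) (h : ℝ) := Op γ D (fun x => (D : ℝ) * x) h

noncomputable def st (h θ : ℝ) (a : ℝ) : ℝ := if h ≤ a then θ else 0

lemma FF_nonneg {D : ℕ} {x : ℝ} (h0 : 0 ≤ x) (h1 : x ≤ 1) : 0 ≤ FF D x := by
  unfold FF
  have := pow_le_one₀ (n := D) (by linarith : 0 ≤ 1 - x) (by linarith)
  linarith

lemma FF_le_one {D : ℕ} {x : ℝ} (h1 : x ≤ 1) : FF D x ≤ 1 := by
  unfold FF
  have := pow_nonneg (by linarith : 0 ≤ 1 - x) D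
  linarith

lemma FF_mono {D : ℕ} {x y : ℝ} (hxy : x ≤ y) (h1 : y ≤ 1) : FF D x ≤ FF D y := by
  unfold FF
  have := pow_le_pow_left₀ (by linarith : 0 ≤ 1 - y) (by linarith : 1 - y ≤ 1 - x) D
  linarith

lemma FF_succ (D : ℕ) (x : ℝ) : FF (D + 1) x = x + (1 - x) * FF D x := by
  unfold FF; ring

lemma le_FF {D : ℕ} (hD : 2 ≤ D) {x : ℝ} (h0 : 0 ≤ x) (h1 : x ≤ 1) : x ≤ FF D x := by
  obtain ⟨k, rfl⟩ : ∃ k, D = k + 1 := ⟨D - 1, by omega⟩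
  rw [FF_succ]
  have := FF_nonneg (D := k) h0 h1
  nlinarith

lemma FF_le {D : ℕ} (hD : 2 ≤ D) {x : ℝ} (h0 : 0 ≤ x) (h1 : x ≤ 1) :
    FF D x ≤ D * x - x ^ 2 := by
  induction D, hD using Nat.le_induction with
  | base => unfold FF; push_cast; nlinarith
  | succ k hk ih =>
    rw [FF_succ]
    have hk' : (2 : ℝ) ≤ k := by exact_mod_cast hk
    have : (1 - x) * FF k x ≤ (1 - x) * (k * x - x ^ 2) :=
      mul_le_mul_of_nonneg_left ih (by linarith)
    push_cast
    have h3 : x ^ 3 ≤ k * x ^ 2 := by nlinarith [sq_nonneg x]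
    nlinarith

lemma FF_ge {D : ℕ} {x : ℝ} (h0 : 0 ≤ x) (h1 : x ≤ 1) :
    D * x - (D : ℝ) ^ 2 * x ^ 2 ≤ FF D x := by
  induction D with
  | zero => simp [FF]
  | succ k ih =>
    rw [FF_succ]
    have hk' : (0 : ℝ) ≤ k := by positivity
    have : (1 - x) * (k * x - (k : ℝ) ^ 2 * x ^ 2) ≤ (1 - x) * FF k x :=
      mul_le_mul_of_nonneg_left ih (by linarith)
    push_cast
    have h3 : 0 ≤ (k : ℝ) ^ 2 * x ^ 3 := by positivity
    have h4 : 0 ≤ (k : ℝ) * x ^ 2 := by positivity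
    nlinarith [sq_nonneg x]

lemma FF_geom (D : ℕ) (x : ℝ) : FF D x = x * ∑ i ∈ Finset.range D, (1 - x) ^ i := by
  unfold FF
  have := mul_neg_geom_sum (1 - x) D
  rw [← this]; ring

lemma FF_scale {D : ℕ} (hD : 2 ≤ D) {x t : ℝ} (h0 : 0 ≤ x) (h1 : x ≤ 1) (t0 : 0 ≤ t) (t1 : t ≤ 1) :
    t * (1 + (1 - t) * x / D) * FF D x ≤ FF D (t * x) := by
  rw [FF_geom, FF_geom]
  set S := ∑ i ∈ Finset.range D, (1 - x) ^ i with hS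
  have htx : t * x ≤ x := by nlinarith
  have htx0 : 0 ≤ t * x := by positivity
  have hSD : S ≤ D := by
    calc S ≤ ∑ i ∈ Finset.range D, (1 : ℝ) :=
          Finset.sum_le_sum fun i _ => pow_le_one₀ (by linarith) (by linarith)
      _ = D := by simp
  have key : S + (1 - t) * x ≤ ∑ i ∈ Finset.range D, (1 - t * x) ^ i := by
    rw [hS]; clear hS hSD S
    induction D, hD using Nat.le_induction with
    | base => simp [Finset.sum_range_succ]; nlinarith
    | succ k hk ih =>
      rw [Finset.sum_range_succ, Finset.sum_range_succ]
      have := pow_le_pow_left₀ (by linarith : 0 ≤ 1 - x) (by linarith : 1 - x ≤ 1 - t * x) k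
      linarith
  have hD0 : (0 : ℝ) < D := by positivity
  have h5 : (1 + (1 - t) * x / D) * S ≤ ∑ i ∈ Finset.range D, (1 - t * x) ^ i := by
    refine le_trans ?_ key
    have : (1 - t) * x / D * S ≤ (1 - t) * x := by
      rw [div_mul_eq_mul_div, div_le_iff₀ hD0]
      have : 0 ≤ (1 - t) * x := mul_nonneg (by linarith) h0
      exact mul_le_mul_of_nonneg_left hSD this
    linarith
  have := mul_le_mul_of_nonneg_left h5 htx0
  linarith [this]

structure Nice (ψ : ℝ → ℝ) : Prop where
  mono : Monotone ψ
  nonneg : ∀ a, 0 ≤ ψ a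
  le_one : ∀ a, ψ a ≤ 1

lemma st_mono (h θ : ℝ) (h0 : 0 ≤ θ) : Monotone (st h θ) := by
  intro a b hab
  unfold st
  split_ifs <;> linarith

lemma st_nice {h θ : ℝ} (h0 : 0 ≤ θ) (h1 : θ ≤ 1) : Nice (st h θ) := by
  refine ⟨st_mono h θ h0, fun a => ?_, fun a => ?_⟩ <;> unfold st <;> split_ifs <;> linarith

variable {γ : Measure ℝ} [IsProbabilityMeasure γ] {D : ℕ}

lemma shift_meas {ψ : ℝ → ℝ} (hψ : Measurable ψ) (a : ℝ) :
    Measurable fun x => ψ (a / D + x) := hψ.comp (by fun_prop)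

lemma integrable_shift {ψ : ℝ → ℝ} (hψ : Measurable ψ) {B : ℝ} (hB : ∀ a, |ψ a| ≤ B) (a : ℝ) :
    Integrable (fun x => ψ (a / D + x)) γ :=
  Integrable.of_bound (shift_meas hψ a).aestronglyMeasurable B
    (Eventually.of_forall fun x => by simpa using hB _)

lemma Av_le_Av {ψ ψ' : ℝ → ℝ} (hψ : Measurable ψ) (hψ' : Measurable ψ') {B B' : ℝ}
    (hB : ∀ a, |ψ a| ≤ B) (hB' : ∀ a, |ψ' a| ≤ B') (hle : ∀ a, ψ a ≤ ψ' a) (a : ℝ) :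
    Av γ D ψ a ≤ Av γ D ψ' a :=
  integral_mono (integrable_shift hψ hB a) (integrable_shift hψ' hB' a) fun x => hle _

lemma Av_mono {ψ : ℝ → ℝ} (hψ : Monotone ψ) {B : ℝ} (hB : ∀ a, |ψ a| ≤ B) :
    Monotone (Av γ D ψ) := by
  intro a b hab
  refine integral_mono (integrable_shift hψ.measurable hB a) (integrable_shift hψ.measurable hB b)
    fun x => hψ ?_
  have : a / D ≤ b / D := by gcongr
  linarith

lemma Av_bdd {ψ : ℝ → ℝ} {B : ℝ} (hB : ∀ a, |ψ a| ≤ B) (a : ℝ) : |Av γ D ψ a| ≤ B := by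
  have := norm_integral_le_of_norm_le_const (μ := γ) (f := fun x => ψ (a / D + x)) (C := B)
    (Eventually.of_forall fun x => by simpa using hB _)
  simpa [Av] using this

lemma Av_const_mul {ψ : ℝ → ℝ} (c a : ℝ) : Av γ D (fun b => c * ψ b) a = c * Av γ D ψ a := by
  simp [Av, integral_const_mul]

lemma Nice.abs {ψ : ℝ → ℝ} (hψ : Nice ψ) (a : ℝ) : |ψ a| ≤ 1 := by
  rw [abs_of_nonneg (hψ.nonneg a)]; exact hψ.le_one a

lemma Nice.Av_nonneg {ψ : ℝ → ℝ} (hψ : Nice ψ) (a : ℝ) : 0 ≤ Av γ D ψ a :=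
  integral_nonneg fun _ => hψ.nonneg _

lemma Nice.Av_le_one {ψ : ℝ → ℝ} (hψ : Nice ψ) (a : ℝ) : Av γ D ψ a ≤ 1 :=
  (abs_le.1 (Av_bdd hψ.abs a)).2

lemma Nice.Th {ψ : ℝ → ℝ} (hψ : Nice ψ) (h : ℝ) : Nice (Th γ D h ψ) := by
  refine ⟨fun a b hab => ?_, fun a => ?_, fun a => ?_⟩
  · unfold SMC.Th Op
    split_ifs with h1 h2 h2
    · exact FF_mono (Av_mono hψ.mono hψ.abs hab) (hψ.Av_le_one b)
    · linarith
    · exact FF_nonneg (hψ.Av_nonneg b) (hψ.Av_le_one b)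
    · exact le_rfl
  · unfold SMC.Th Op
    split_ifs with h1
    · exact FF_nonneg (hψ.Av_nonneg _) (hψ.Av_le_one _)
    · exact le_rfl
  · unfold SMC.Th Op
    split_ifs with h1
    · exact FF_le_one (hψ.Av_le_one _)
    · exact zero_le_one

lemma Nice.iter {ψ : ℝ → ℝ} (hψ : Nice ψ) (h : ℝ) (n : ℕ) : Nice ((SMC.Th γ D h)^[n] ψ) := by
  induction n with
  | zero => exact hψ
  | succ n ih => rw [Function.iterate_succ_apply']; exact ih.Th h

lemma Th_le_Th {ψ ψ' : ℝ → ℝ} (hψ : Nice ψ) (hψ' : Nice ψ') (hle : ∀ a, ψ a ≤ ψ' a) (h a : ℝ) :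
    Th γ D h ψ a ≤ Th γ D h ψ' a := by
  unfold SMC.Th Op
  split_ifs with h1
  · exact FF_mono (Av_le_Av hψ.mono.measurable hψ'.mono.measurable hψ.abs hψ'.abs hle a)
      (hψ'.Av_le_one a)
  · exact le_rfl

lemma iter_le_iter {ψ ψ' : ℝ → ℝ} (hψ : Nice ψ) (hψ' : Nice ψ') (hle : ∀ a, ψ a ≤ ψ' a) (h : ℝ)
    (n : ℕ) (a : ℝ) : (Th γ D h)^[n] ψ a ≤ (Th γ D h)^[n] ψ' a := by
  induction n generalizing a with
  | zero => exact hle a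
  | succ n ih =>
    rw [Function.iterate_succ_apply', Function.iterate_succ_apply']
    exact Th_le_Th (hψ.iter h n) (hψ'.iter h n) ih h a

/-- Linear iterates are monotone and bounded. -/
lemma Ln_iter (h : ℝ) (n : ℕ) :
    Monotone ((Ln γ D h)^[n] (st h 1)) ∧ (∀ a, 0 ≤ (Ln γ D h)^[n] (st h 1) a) ∧
      ∀ a, (Ln γ D h)^[n] (st h 1) a ≤ (D : ℝ) ^ n := by
  induction n with
  | zero =>
    have := st_nice (h := h) zero_le_one le_rfl
    exact ⟨this.mono, this.nonneg, by simpa using this.le_one⟩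
  | succ n ih =>
    obtain ⟨h1, h2, h3⟩ := ih
    rw [Function.iterate_succ_apply']
    set ψ := (Ln γ D h)^[n] (st h 1)
    have hab : ∀ a, |ψ a| ≤ (D : ℝ) ^ n := fun a => by rw [abs_of_nonneg (h2 a)]; exact h3 a
    have hn : ∀ a, 0 ≤ Av γ D ψ a := fun a => integral_nonneg fun _ => h2 _
    refine ⟨fun a b hle => ?_, fun a => ?_, fun a => ?_⟩
    · unfold Ln Op
      split_ifs
      · exact mul_le_mul_of_nonneg_left (Av_mono h1 hab hle) (by positivity)
      · linarith
      · exact mul_nonneg (by positivity) (hn b)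
      · exact le_rfl
    · unfold Ln Op
      split_ifs
      · exact mul_nonneg (by positivity) (hn a)
      · exact le_rfl
    · unfold Ln Op
      split_ifs
      · rw [pow_succ']
        exact mul_le_mul_of_nonneg_left (abs_le.1 (Av_bdd hab a)).2 (by positivity)
      · positivity

/-- Convergence of iterates as the level decreases to `h`. -/
lemma iter_tendsto [NullSingletonClass γ] {Φ : ℝ → ℝ} (hΦ : Continuous Φ) (θ h : ℝ) (u : ℕ → ℝ)
    (hu : ∀ i, h < u i) (hu' : Tendsto u atTop (nhds h)) (B : ℕ → ℝ)
    (hB : ∀ n h a, |(Op γ D Φ h)^[n] (st h θ) a| ≤ B n)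
    (hm : ∀ n h, Measurable ((Op γ D Φ h)^[n] (st h θ))) (n : ℕ) (a : ℝ) (ha : a ≠ h) :
    Tendsto (fun i => (Op γ D Φ (u i))^[n] (st (u i) θ) a) atTop
      (nhds ((Op γ D Φ h)^[n] (st h θ) a)) := by
  induction n generalizing a with
  | zero =>
    simp only [Function.iterate_zero, id]
    rcases lt_or_gt_of_ne ha with h1 | h1
    · have : ∀ i, st (u i) θ a = st h θ a := fun i => by
        unfold st; rw [if_neg (by linarith [hu i]), if_neg (by linarith)]
      simp [this]
    · refine tendsto_const_nhds.congr' ?_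
      filter_upwards [hu'.eventually_lt_const h1] with i hi
      unfold st; rw [if_pos hi.le, if_pos h1.le]
  | succ n ih =>
    simp only [Function.iterate_succ_apply']
    rcases lt_or_gt_of_ne ha with h1 | h1
    · unfold Op
      rw [if_neg (by linarith)]
      refine tendsto_const_nhds.congr fun i => ?_
      rw [if_neg (by linarith [hu i])]
    · have hAv : Tendsto (fun i => Av γ D ((Op γ D Φ (u i))^[n] (st (u i) θ)) a) atTop
          (nhds (Av γ D ((Op γ D Φ h)^[n] (st h θ)) a)) := by
        unfold Av
        refine tendsto_integral_of_dominated_convergence (fun _ => B n)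
          (fun i => (shift_meas (hm n (u i)) a).aestronglyMeasurable) (integrable_const _)
          (fun i => Eventually.of_forall fun x => by simpa using hB n _ _) ?_
        have : ∀ᵐ x ∂γ, x ≠ h - a / D := by
          simp [ae_iff, measure_singleton]
        filter_upwards [this] with x hx
        exact ih _ fun hh => hx (by linarith)
      have h2 := (hΦ.tendsto _).comp hAv
      unfold Op
      rw [if_pos h1.le]
      refine h2.congr' ?_
      filter_upwards [hu'.eventually_lt_const h1] with i hi
      rw [if_pos hi.le]; rfl

lemma Ln_st_smul (h θ : ℝ) (n : ℕ) (a : ℝ) :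
    (Ln γ D h)^[n] (st h θ) a = θ * (Ln γ D h)^[n] (st h 1) a := by
  induction n generalizing a with
  | zero => simp [st]
  | succ n ih =>
    rw [Function.iterate_succ_apply', Function.iterate_succ_apply']
    have : (Ln γ D h)^[n] (st h θ) = fun b => θ * (Ln γ D h)^[n] (st h 1) b := funext ih
    rw [this]
    unfold Ln Op
    rw [Av_const_mul]
    split_ifs <;> ring

lemma Th_pos {h a : ℝ} (ψ : ℝ → ℝ) (ha : h ≤ a) : Th γ D h ψ a = FF D (Av γ D ψ a) := if_pos ha
lemma Th_neg {h a : ℝ} (ψ : ℝ → ℝ) (ha : ¬ h ≤ a) : Th γ D h ψ a = 0 := if_neg ha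
lemma Ln_pos {h a : ℝ} (ψ : ℝ → ℝ) (ha : h ≤ a) : Ln γ D h ψ a = D * Av γ D ψ a := if_pos ha
lemma Ln_neg {h a : ℝ} (ψ : ℝ → ℝ) (ha : ¬ h ≤ a) : Ln γ D h ψ a = 0 := if_neg ha

set_option maxHeartbeats 2000000 in
theorem growth (hD : 2 ≤ D) [NullSingletonClass γ] (hγ : ∀ K : ℝ, 0 < γ (Ici K))
    (γ0 : Measure ℝ) [IsProbabilityMeasure γ0] [NullSingletonClass γ0] (h η η' : ℝ)
    (hη0 : 0 < η) (hη' : η' < η)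
    (hη : ∀ n, η ≤ ∫ a, (Th γ D h)^[n] (st h 1) a ∂γ0) :
    ∃ h1 > h, ∃ (j n0 : ℕ) (θ0 : ℝ), 1 ≤ j ∧ 0 < θ0 ∧ θ0 ≤ 1 ∧
      ∀ i : ℕ, η' ≤ ∫ a, (Th γ D h1)^[n0 + j * i] (st h1 (θ0 * (2 / 3) ^ i)) a ∂γ0 := by
  have hDpos : (0 : ℝ) < D := by positivity
  have hD1 : (1 : ℝ) ≤ D := by exact_mod_cast (by omega : 1 ≤ D)
  have hs : ∀ n, Nice ((Th γ D h)^[n] (st h 1)) :=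
    fun n => (st_nice zero_le_one le_rfl).iter h n
  -- Step A
  obtain ⟨x0, hx0, hx1, hx⟩ : ∃ x0 : ℝ, 0 < x0 ∧ x0 ≤ 1 ∧
      ∀ n, x0 ≤ Av γ D ((Th γ D h)^[n] (st h 1)) h := by
    obtain ⟨K, hK⟩ : ∃ K : ℝ, γ0.real (Ioi K) ≤ η / 2 := by
      have h1 : Tendsto (fun K : ℝ => γ0 (Ioi K)) atTop (nhds (γ0 (⋂ K : ℝ, Ioi K))) :=
        tendsto_measure_iInter_atTop (fun K => measurableSet_Ioi.nullMeasurableSet)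
          (fun a b hab => Ioi_subset_Ioi hab) ⟨0, measure_ne_top _ _⟩
      have h2 : (⋂ K : ℝ, Ioi K) = ∅ := by
        ext x; simp only [mem_iInter, mem_Ioi, mem_empty_iff_false, iff_false, not_forall]
        exact ⟨x, lt_irrefl _⟩
      rw [h2, measure_empty] at h1
      have h3 := (ENNReal.tendsto_toReal ENNReal.zero_ne_top).comp h1
      simp only [ENNReal.toReal_zero] at h3
      obtain ⟨K, hK⟩ := (h3.eventually_lt_const (show (0 : ℝ) < η / 2 by linarith)).exists
      exact ⟨K, hK.le⟩
    have hsK : ∀ n, η / 2 ≤ (Th γ D h)^[n] (st h 1) K := by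
      intro n
      set s := (Th γ D h)^[n] (st h 1)
      have h1 : ∫ a, s a ∂γ0 ≤ ∫ a, (s K + (Ioi K).indicator (fun _ => (1 : ℝ)) a) ∂γ0 := by
        refine integral_mono_of_nonneg (Eventually.of_forall (hs n).nonneg) ?_
          (Eventually.of_forall fun a => ?_)
        · exact (integrable_const _).add ((integrable_const _).indicator measurableSet_Ioi)
        · by_cases ha : a ∈ Ioi K
          · simp only [ha, indicator_of_mem]
            linarith [(hs n).le_one a, (hs n).nonneg K]
          · simp only [ha, not_false_iff, indicator_of_notMem, add_zero]
            exact (hs n).mono (not_lt.1 ha)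
      rw [integral_add (integrable_const _) ((integrable_const _).indicator measurableSet_Ioi)] at h1
      simp only [integral_const, probReal_univ, one_smul,
        integral_indicator_const _ measurableSet_Ioi, smul_eq_mul, mul_one] at h1
      linarith [hη n]
    have hg : 0 < γ.real (Ici (K - h / D)) := by
      rw [measureReal_def, ENNReal.toReal_pos_iff]
      exact ⟨hγ _, measure_lt_top _ _⟩
    have hg1 : γ.real (Ici (K - h / D)) ≤ 1 := measureReal_le_one
    have hη2 : η / 2 ≤ 1 := (hsK 0).trans ((hs 0).le_one K)
    refine ⟨η / 2 * γ.real (Ici (K - h / D)), by positivity, by nlinarith, fun n => ?_⟩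
    have : ∫ x, (Ici (K - h / D)).indicator (fun _ => η / 2) x ∂γ ≤
        Av γ D ((Th γ D h)^[n] (st h 1)) h := by
      refine integral_mono ((integrable_const _).indicator measurableSet_Ici)
        (integrable_shift (hs n).mono.measurable (hs n).abs h) fun x => ?_
      by_cases hx : x ∈ Ici (K - h / D)
      · simp only [hx, indicator_of_mem]
        refine (hsK n).trans ((hs n).mono ?_)
        have := mem_Ici.1 hx
        linarith
      · simp only [hx, not_false_iff, indicator_of_notMem]
        exact (hs n).nonneg _
    rw [integral_indicator_const _ measurableSet_Ici, smul_eq_mul] at this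
    linarith
  have hxa : ∀ n a, h ≤ a → x0 ≤ Av γ D ((Th γ D h)^[n] (st h 1)) a := fun n a ha =>
    (hx n).trans (Av_mono (hs n).mono (hs n).abs ha)
  -- Step B
  set ρ : ℝ := 1 - x0 / D with hρ
  have hx0D : 0 < x0 / D := by positivity
  have hx0D1 : x0 / D ≤ 1 := by rw [div_le_one hDpos]; linarith
  have hρ0 : 0 ≤ ρ := by linarith
  have hρ1 : ρ < 1 := by linarith
  have hB : ∀ n a, (Th γ D h)^[n] (st h 1) a ≤ ρ ^ n * (Ln γ D h)^[n] (st h 1) a := by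
    intro n
    induction n with
    | zero => intro a; simp
    | succ n ih =>
      intro a
      rw [Function.iterate_succ_apply', Function.iterate_succ_apply']
      obtain ⟨l1, l2, l3⟩ := Ln_iter (γ := γ) (D := D) h n
      by_cases ha : h ≤ a
      · rw [Th_pos _ ha, Ln_pos _ ha]
        have e1 := FF_le hD ((hs n).Av_nonneg (γ := γ) (D := D) a) ((hs n).Av_le_one a)
        have e2 := hxa n a ha
        set x := Av γ D ((Th γ D h)^[n] (st h 1)) a with hxdef
        have e3 : x ≤ Av γ D (fun b => ρ ^ n * (Ln γ D h)^[n] (st h 1) b) a := by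
          refine Av_le_Av (hs n).mono.measurable (l1.measurable.const_mul _) (hs n).abs
            (B' := ρ ^ n * (D : ℝ) ^ n) (fun b => ?_) ih a
          rw [abs_of_nonneg (mul_nonneg (pow_nonneg hρ0 n) (l2 b))]
          exact mul_le_mul_of_nonneg_left (l3 b) (pow_nonneg hρ0 n)
        rw [Av_const_mul] at e3
        have e4 : D * x - x ^ 2 ≤ ρ * (D * x) := by
          have : ρ * (D * x) = D * x - x0 * x := by rw [hρ]; field_simp
          rw [this]; nlinarith
        calc FF D x ≤ ρ * (D * x) := e1.trans e4
          _ ≤ ρ * (D * (ρ ^ n * Av γ D ((Ln γ D h)^[n] (st h 1)) a)) := by gcongr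
          _ = _ := by ring
      · rw [Th_neg _ ha, Ln_neg _ ha]; simp
  obtain ⟨k, hk⟩ : ∃ k, 2 < (Ln γ D h)^[k + 1] (st h 1) h := by
    obtain ⟨k, hk⟩ := exists_pow_lt_of_lt_one (show 0 < x0 / 3 by positivity) hρ1
    refine ⟨k, ?_⟩
    have e1 := hB (k + 1) h
    have e2 : x0 ≤ (Th γ D h)^[k + 1] (st h 1) h := by
      rw [Function.iterate_succ_apply']
      rw [Th_pos _ le_rfl]
      exact (hx k).trans (le_FF hD ((hs k).Av_nonneg _) ((hs k).Av_le_one _))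
    have e3 : ρ ^ (k + 1) ≤ x0 / 3 := by
      rw [pow_succ]
      nlinarith [pow_nonneg hρ0 k]
    by_contra hcon
    push Not at hcon
    have e4 : 0 ≤ (Ln γ D h)^[k + 1] (st h 1) h := (Ln_iter h (k + 1)).2.1 h
    nlinarith
  -- parameters
  set j := k + 1 with hj
  have hjpos : (0 : ℝ) < j := by positivity
  have hj1 : (1 : ℝ) ≤ j := by rw [hj]; push_cast; linarith [(Nat.cast_nonneg k : (0:ℝ) ≤ k)]
  set θ0 : ℝ := 1 / (4 * j * (D : ℝ) ^ (j + 1)) with hθ0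
  have hθpos : 0 < θ0 := by positivity
  have hDj : (1 : ℝ) ≤ (D : ℝ) ^ (j + 1) := one_le_pow₀ hD1
  have hθ1 : θ0 ≤ 1 := by
    rw [hθ0, div_le_one (by positivity)]
    nlinarith
  -- Step F
  set κ : ℝ := 1 - θ0 * (x0 / D) with hκ
  have hκ0 : 0 ≤ κ := by rw [hκ]; nlinarith
  have hκ1 : κ < 1 := by rw [hκ]; have := mul_pos hθpos hx0D; linarith
  have hF : ∀ n a, (1 - (1 - θ0) * κ ^ n) * (Th γ D h)^[n] (st h 1) a ≤
      (Th γ D h)^[n] (st h θ0) a := by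
    intro n
    induction n with
    | zero => intro a; simp [st]
    | succ n ih =>
      intro a
      rw [Function.iterate_succ_apply', Function.iterate_succ_apply']
      set t := 1 - (1 - θ0) * κ ^ n with ht
      have hκn : κ ^ n ≤ 1 := pow_le_one₀ hκ0 hκ1.le
      have hκn0 : 0 ≤ κ ^ n := pow_nonneg hκ0 n
      have t1 : t ≤ 1 := by rw [ht]; nlinarith
      have t0 : θ0 ≤ t := by rw [ht]; nlinarith
      have hnθ := (st_nice (h := h) hθpos.le hθ1).iter (γ := γ) (D := D) h n
      by_cases ha : h ≤ a
      · rw [Th_pos _ ha, Th_pos _ ha]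
        have e2 := hxa n a ha
        have x1 := (hs n).Av_le_one (γ := γ) (D := D) a
        set x := Av γ D ((Th γ D h)^[n] (st h 1)) a with hxdef
        have e3 : t * x ≤ Av γ D ((Th γ D h)^[n] (st h θ0)) a := by
          rw [hxdef, ← Av_const_mul]
          refine Av_le_Av ((hs n).mono.measurable.const_mul _) hnθ.mono.measurable (B := 1)
            (fun b => ?_) hnθ.abs ih a
          rw [abs_mul, abs_of_nonneg (by linarith : 0 ≤ t)]
          exact mul_le_one₀ t1 (abs_nonneg _) ((hs n).abs b)
        have xn : 0 ≤ x := by linarith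
        have e5 := FF_scale hD xn x1 (by linarith : 0 ≤ t) t1
        have e6 := FF_mono (D := D) e3 (hnθ.Av_le_one a)
        have e7 : 1 - (1 - θ0) * κ ^ (n + 1) ≤ t * (1 + (1 - t) * x / D) := by
          have q1 : (1 - θ0) * κ ^ (n + 1) = (1 - t) * κ := by rw [ht, pow_succ]; ring
          rw [q1, hκ]
          have q2 : x0 / D ≤ x / D := by gcongr
          have tt0 : 0 ≤ t := by linarith
          have q3 : θ0 * (x0 / D) ≤ t * (x / D) := by gcongr
          have q4 := mul_le_mul_of_nonneg_left q3 (by linarith : 0 ≤ 1 - t)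
          have q5 : t * (1 + (1 - t) * x / D) = t + (1 - t) * (t * (x / D)) := by ring
          rw [q5]; nlinarith
        have e8 := mul_le_mul_of_nonneg_right e7 (FF_nonneg (D := D) xn x1)
        linarith
      · rw [Th_neg _ ha, Th_neg _ ha]; simp
  obtain ⟨n0, hn0⟩ : ∃ n0, η' < ∫ a, (Th γ D h)^[n0] (st h θ0) a ∂γ0 := by
    have lim : Tendsto (fun n => (1 - (1 - θ0) * κ ^ n) * η) atTop (nhds ((1 - (1 - θ0) * 0) * η)) :=
      ((tendsto_const_nhds.sub ((tendsto_pow_atTop_nhds_zero_of_lt_one hκ0 hκ1).const_mul _)).mul_const _)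
    have : η' < (1 - (1 - θ0) * 0) * η := by linarith
    obtain ⟨n, hn⟩ := (lim.eventually_const_lt this).exists
    refine ⟨n, hn.trans_le ?_⟩
    have hnθ := (st_nice (h := h) hθpos.le hθ1).iter (γ := γ) (D := D) h n
    have hκn : κ ^ n ≤ 1 := pow_le_one₀ hκ0 hκ1.le
    have hκn0 : 0 ≤ κ ^ n := pow_nonneg hκ0 n
    calc (1 - (1 - θ0) * κ ^ n) * η ≤ (1 - (1 - θ0) * κ ^ n) * ∫ a, (Th γ D h)^[n] (st h 1) a ∂γ0 :=
          mul_le_mul_of_nonneg_left (hη n) (by nlinarith)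
      _ = ∫ a, (1 - (1 - θ0) * κ ^ n) * (Th γ D h)^[n] (st h 1) a ∂γ0 := by
          rw [integral_const_mul]
      _ ≤ _ := by
          refine integral_mono ?_ ?_ (hF n)
          · exact (Integrable.of_bound (hs n).mono.measurable.aestronglyMeasurable 1
              (Eventually.of_forall (hs n).abs)).const_mul _
          · exact Integrable.of_bound hnθ.mono.measurable.aestronglyMeasurable 1
              (Eventually.of_forall hnθ.abs)
  -- perturbation of the level
  let u : ℕ → ℝ := fun i => h + 1 / ((i : ℝ) + 1)
  have hu : ∀ i, h < u i := fun i => by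
    have : 0 < 1 / ((i : ℝ) + 1) := by positivity
    simp only [u]; linarith
  have hu' : Tendsto u atTop (nhds h) := by
    have := (tendsto_one_div_add_atTop_nhds_zero_nat (𝕜 := ℝ)).const_add h
    simpa [u] using this
  have hLlim : Tendsto (fun i => (D : ℝ) * Av γ D ((Ln γ D (u i))^[k] (st (u i) 1)) h) atTop
      (nhds ((D : ℝ) * Av γ D ((Ln γ D h)^[k] (st h 1)) h)) := by
    refine Tendsto.const_mul _ ?_
    unfold Av
    have hb : ∀ n h a, |(Ln γ D h)^[n] (st h 1) a| ≤ (D : ℝ) ^ n := fun n h a => by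
      rw [abs_of_nonneg ((Ln_iter h n).2.1 a)]; exact (Ln_iter h n).2.2 a
    refine tendsto_integral_of_dominated_convergence (fun _ => (D : ℝ) ^ k)
      (fun i => (shift_meas (Ln_iter (u i) k).1.measurable h).aestronglyMeasurable)
      (integrable_const _)
      (fun i => Eventually.of_forall fun x => by simpa using hb k _ _) ?_
    have : ∀ᵐ x ∂γ, x ≠ h - h / D := by simp [ae_iff, measure_singleton]
    filter_upwards [this] with x hx
    exact iter_tendsto (by fun_prop) 1 h u hu hu' (fun n => (D : ℝ) ^ n) hb
      (fun n h => (Ln_iter h n).1.measurable) k _ (fun hh => hx (by linarith))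
  have hLev : ∀ᶠ i in atTop, 2 < (Ln γ D (u i))^[j] (st (u i) 1) (u i) := by
    have e0 : (D : ℝ) * Av γ D ((Ln γ D h)^[k] (st h 1)) h = (Ln γ D h)^[k + 1] (st h 1) h := by
      rw [Function.iterate_succ_apply']; rw [Ln_pos _ le_rfl]
    rw [e0] at hLlim
    filter_upwards [hLlim.eventually_const_lt hk] with i hi
    refine hi.trans_le ?_
    rw [hj, Function.iterate_succ_apply']; rw [Ln_pos _ le_rfl]
    obtain ⟨l1, l2, l3⟩ := Ln_iter (γ := γ) (D := D) (u i) k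
    exact mul_le_mul_of_nonneg_left (Av_mono l1 (B := (D : ℝ) ^ k)
      (fun a => by rw [abs_of_nonneg (l2 a)]; exact l3 a) (hu i).le) hDpos.le
  have hTlim : Tendsto (fun i => ∫ a, (Th γ D (u i))^[n0] (st (u i) θ0) a ∂γ0) atTop
      (nhds (∫ a, (Th γ D h)^[n0] (st h θ0) a ∂γ0)) := by
    have hN : ∀ n h, Nice ((Th γ D h)^[n] (st h θ0)) := fun n h =>
      (st_nice hθpos.le hθ1).iter h n
    refine tendsto_integral_of_dominated_convergence (fun _ => (1 : ℝ))
      (fun i => (hN _ _).mono.measurable.aestronglyMeasurable)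
      (integrable_const _)
      (fun i => Eventually.of_forall fun x => by simpa using (hN _ _).abs _) ?_
    have : ∀ᵐ x ∂γ0, x ≠ h := by simp [ae_iff, measure_singleton]
    filter_upwards [this] with x hx
    exact iter_tendsto (by unfold FF; fun_prop) θ0 h u hu hu' (fun n => 1) (fun n h => (hN n h).abs)
      (fun n h => (hN n h).mono.measurable) n0 _ hx
  obtain ⟨i, hi1, hi2⟩ := (hLev.and (hTlim.eventually_const_lt hn0)).exists
  refine ⟨u i, hu i, j, n0, θ0, by omega, hθpos, hθ1, ?_⟩
  set h1 := u i
  -- Step D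
  have hDD : ∀ θ, 0 ≤ θ → θ ≤ θ0 → ∀ a, st h1 (3 / 2 * θ) a ≤ (Th γ D h1)^[j] (st h1 θ) a := by
    intro θ hθ hθθ
    have hθ1' : θ ≤ 1 := hθθ.trans hθ1
    have hN : ∀ n, Nice ((Th γ D h1)^[n] (st h1 θ)) := fun n => (st_nice hθ hθ1').iter h1 n
    set q : ℝ := 1 - (D : ℝ) ^ (j + 1) * θ with hq
    have hqθ : (D : ℝ) ^ (j + 1) * θ ≤ 1 / (4 * j) := by
      calc (D : ℝ) ^ (j + 1) * θ ≤ (D : ℝ) ^ (j + 1) * θ0 := by gcongr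
        _ = 1 / (4 * j) := by rw [hθ0]; field_simp
    have h4j : 1 / (4 * (j : ℝ)) ≤ 1 := by rw [div_le_one (by positivity)]; linarith
    have hq0 : 0 ≤ q := by linarith
    have up : ∀ n a, (Th γ D h1)^[n] (st h1 θ) a ≤ (D : ℝ) ^ n * θ := by
      intro n
      induction n with
      | zero => intro a; simp only [Function.iterate_zero, id, pow_zero, one_mul]; unfold st; split_ifs <;> linarith
      | succ n ih =>
        intro a
        rw [Function.iterate_succ_apply']
        by_cases ha : h1 ≤ a
        · rw [Th_pos _ ha]
          have e1 := FF_le hD ((hN n).Av_nonneg (γ := γ) (D := D) a) ((hN n).Av_le_one a)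
          have e2 := (abs_le.1 (Av_bdd (γ := γ) (D := D) (ψ := (Th γ D h1)^[n] (st h1 θ)) (B := (D : ℝ) ^ n * θ) (fun b => by
            rw [abs_of_nonneg ((hN n).nonneg b)]; exact ih b) a)).2
          have := mul_le_mul_of_nonneg_left e2 hDpos.le
          rw [pow_succ']
          nlinarith [sq_nonneg (Av γ D ((Th γ D h1)^[n] (st h1 θ)) a)]
        · rw [Th_neg _ ha]; positivity
    have lo : ∀ n, n ≤ j → ∀ a, q ^ n * (Ln γ D h1)^[n] (st h1 θ) a ≤ (Th γ D h1)^[n] (st h1 θ) a := by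
      intro n
      induction n with
      | zero => intro _ a; simp
      | succ n ih =>
        intro hn a
        have ih := ih (by omega)
        rw [Function.iterate_succ_apply', Function.iterate_succ_apply']
        obtain ⟨l1, l2, l3⟩ := Ln_iter (γ := γ) (D := D) h1 n
        have l0 : (Ln γ D h1)^[n] (st h1 θ) = fun a => θ * (Ln γ D h1)^[n] (st h1 1) a :=
          funext (Ln_st_smul h1 θ n)
        by_cases ha : h1 ≤ a
        · rw [Th_pos _ ha, Ln_pos _ ha]
          have e0 := (hN n).Av_nonneg (γ := γ) (D := D) a
          have e1 := FF_ge (D := D) e0 ((hN n).Av_le_one a)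
          have e2 := (abs_le.1 (Av_bdd (γ := γ) (D := D) (ψ := (Th γ D h1)^[n] (st h1 θ)) (B := (D : ℝ) ^ n * θ) (fun b => by
            rw [abs_of_nonneg ((hN n).nonneg b)]; exact up n b) a)).2
          have e3 : q ^ n * Av γ D ((Ln γ D h1)^[n] (st h1 θ)) a ≤
              Av γ D ((Th γ D h1)^[n] (st h1 θ)) a := by
            rw [← Av_const_mul]
            refine Av_le_Av ?_ (hN n).mono.measurable (B := q ^ n * (θ * (D : ℝ) ^ n)) (fun b => ?_)
              (hN n).abs ih a
            · rw [l0]; exact (l1.measurable.const_mul _).const_mul _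
            · rw [l0, abs_of_nonneg (mul_nonneg (pow_nonneg hq0 n) (mul_nonneg hθ (l2 b)))]
              have := l3 b
              have := pow_nonneg hq0 n
              gcongr
          set y := Av γ D ((Th γ D h1)^[n] (st h1 θ)) a
          have e4 : (D : ℝ) * y ≤ (D : ℝ) ^ (j + 1) * θ := by
            calc (D : ℝ) * y ≤ D * ((D : ℝ) ^ n * θ) := by gcongr
              _ = (D : ℝ) ^ (n + 1) * θ := by ring
              _ ≤ _ := by
                have : (D : ℝ) ^ (n + 1) ≤ (D : ℝ) ^ (j + 1) := pow_le_pow_right₀ hD1 (by omega)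
                gcongr
          have e5 : q * (D * y) ≤ FF D y := by
            refine le_trans ?_ e1
            have : 0 ≤ D * y := by positivity
            nlinarith
          calc q ^ (n + 1) * (D * Av γ D ((Ln γ D h1)^[n] (st h1 θ)) a)
              = q * (D * (q ^ n * Av γ D ((Ln γ D h1)^[n] (st h1 θ)) a)) := by ring
            _ ≤ q * (D * y) := by gcongr
            _ ≤ _ := e5
        · rw [Th_neg _ ha, Ln_neg _ ha]; simp
    have hqj : 3 / 4 ≤ q ^ j := by
      have := one_add_mul_le_pow (a := q - 1) (by linarith) j
      have h5 : (j : ℝ) * ((D : ℝ) ^ (j + 1) * θ) ≤ 1 / 4 := by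
        calc (j : ℝ) * ((D : ℝ) ^ (j + 1) * θ) ≤ j * (1 / (4 * j)) := by gcongr
          _ = 1 / 4 := by field_simp
      have h6 : 1 + (q - 1) = q := by ring
      rw [h6] at this
      nlinarith
    have fin : 3 / 2 * θ ≤ (Th γ D h1)^[j] (st h1 θ) h1 := by
      refine le_trans ?_ (lo j le_rfl h1)
      rw [Ln_st_smul]
      have : 0 ≤ q ^ j - 3 / 4 := by linarith
      have h7 : (3 / 4 : ℝ) * 2 ≤ q ^ j * (Ln γ D h1)^[j] (st h1 1) h1 := by
        apply mul_le_mul hqj hi1.le (by norm_num) (by linarith)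
      nlinarith
    intro a
    unfold st
    split_ifs with ha
    · exact fin.trans ((hN j).mono ha)
    · exact (hN j).nonneg a
  have hE : ∀ m a, st h1 θ0 a ≤ (Th γ D h1)^[j * m] (st h1 (θ0 * (2 / 3) ^ m)) a := by
    intro m
    induction m with
    | zero => intro a; simp
    | succ m ih =>
      intro a
      have p1 : θ0 * (2 / 3 : ℝ) ^ (m + 1) ≤ θ0 := mul_le_of_le_one_right hθpos.le
        (pow_le_one₀ (by norm_num) (by norm_num))
      have p2 : θ0 * (2 / 3 : ℝ) ^ m ≤ θ0 := mul_le_of_le_one_right hθpos.le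
        (pow_le_one₀ (by norm_num) (by norm_num))
      have p0 : 0 ≤ θ0 * (2 / 3 : ℝ) ^ (m + 1) := by positivity
      have p0' : 0 ≤ θ0 * (2 / 3 : ℝ) ^ m := by positivity
      rw [show j * (m + 1) = j * m + j by ring, Function.iterate_add_apply]
      refine (ih a).trans (iter_le_iter (st_nice p0' (p2.trans hθ1))
        ((st_nice p0 (p1.trans hθ1)).iter h1 j) (fun b => ?_) h1 _ a)
      have := hDD _ p0 p1 b
      have e : 3 / 2 * (θ0 * (2 / 3 : ℝ) ^ (m + 1)) = θ0 * (2 / 3) ^ m := by rw [pow_succ]; ring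
      rwa [e] at this
  intro m
  have p2 : θ0 * (2 / 3 : ℝ) ^ m ≤ 1 := (mul_le_of_le_one_right hθpos.le
        (pow_le_one₀ (by norm_num) (by norm_num))).trans hθ1
  have p0' : 0 ≤ θ0 * (2 / 3 : ℝ) ^ m := by positivity
  have n1 := (st_nice (h := h1) p0' p2).iter (γ := γ) (D := D) h1 (j * m)
  have n2 := (st_nice (h := h1) hθpos.le hθ1)
  refine hi2.le.trans ?_
  simp only [Function.iterate_add_apply]
  refine integral_mono (Integrable.of_bound (n2.iter h1 n0).mono.measurable.aestronglyMeasurable 1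
      (Eventually.of_forall (n2.iter h1 n0).abs))
    (Integrable.of_bound (n1.iter h1 n0).mono.measurable.aestronglyMeasurable 1
      (Eventually.of_forall (n1.iter h1 n0).abs)) fun a => ?_
  exact iter_le_iter n2 n1 (hE m) h1 n0 a

end SMC

namespace SMC

/-! ### Part 2: Gaussian vectors -/

structure GV {Ω ι : Type*} [MeasurableSpace Ω] (P : Measure Ω) (X : ι → Ω → ℝ)
    (K : ι → ι → ℝ) : Prop where
  law : HasGaussianLaw (fun ω i => X i ω) P
  mean : ∀ i, ∫ ω, X i ω ∂P = 0
  cov : ∀ i j, covariance (X i) (X j) P = K i j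

section GV
variable {Ω Ω' ι κ : Type*} [MeasurableSpace Ω] [MeasurableSpace Ω'] [Fintype ι] [Fintype κ]
  {P : Measure Ω} {Q : Measure Ω'} {X : ι → Ω → ℝ} {K : ι → ι → ℝ} {Y : κ → Ω' → ℝ} {K' : κ → κ → ℝ}

lemma GV.prob (h : GV P X K) : IsProbabilityMeasure P := h.law.isProbabilityMeasure

lemma GV.memLp (h : GV P X K) (i : ι) : MemLp (X i) 2 P := (h.law.eval i).memLp_two

lemma GV.aem (h : GV P X K) (i : ι) : AEMeasurable (X i) P := (h.law.eval i).aemeasurable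

lemma dual_apply (L : (ι → ℝ) →L[ℝ] ℝ) (x : ι → ℝ) :
    L x = ∑ i, L (Pi.single i 1) * x i := by
  conv_lhs => rw [← Finset.univ_sum_single x]
  rw [map_sum]
  refine Finset.sum_congr rfl fun i _ => ?_
  have : (Pi.single i (x i) : ι → ℝ) = x i • Pi.single i (1 : ℝ) := by
    rw [← Pi.single_smul]; simp
  rw [this, map_smul, smul_eq_mul, mul_comm]

lemma GV.mean_lin (h : GV P X K) (c : ι → ℝ) : ∫ ω, ∑ i, c i * X i ω ∂P = 0 := by
  have := h.prob
  rw [integral_finsetSum]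
  · refine Finset.sum_eq_zero fun i _ => ?_
    rw [integral_const_mul, h.mean, mul_zero]
  · intro i _
    exact ((h.memLp i).integrable (by norm_num)).const_mul _

lemma GV.cov_lin (h : GV P X K) (c c' : ι → ℝ) :
    covariance (fun ω => ∑ i, c i * X i ω) (fun ω => ∑ i, c' i * X i ω) P
      = ∑ i, ∑ j, c i * c' j * K i j := by
  have := h.prob
  rw [covariance_fun_sum_fun_sum (fun i => (h.memLp i).const_mul _)
    (fun i => (h.memLp i).const_mul _)]
  refine Finset.sum_congr rfl fun i _ => Finset.sum_congr rfl fun j _ => ?_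
  rw [covariance_const_mul_left, covariance_const_mul_right, h.cov]; ring

lemma GV.var_lin (h : GV P X K) (c : ι → ℝ) :
    variance (fun ω => ∑ i, c i * X i ω) P = ∑ i, ∑ j, c i * c j * K i j := by
  rw [← h.cov_lin, covariance_self]
  exact Finset.aemeasurable_fun_sum _ fun i _ => (h.aem i).const_mul _

lemma GV.lin (h : GV P X K) (A : κ → ι → ℝ) :
    GV P (fun k ω => ∑ i, A k i * X i ω) (fun k l => ∑ i, ∑ j, A k i * A l j * K i j) := by
  refine ⟨?_, fun k => h.mean_lin _, fun k l => h.cov_lin _ _⟩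
  have := h.law.map_fun (ContinuousLinearMap.pi fun k =>
    ∑ i, A k i • ContinuousLinearMap.proj (R := ℝ) (φ := fun _ : ι => ℝ) i)
  refine this.congr (Eventually.of_forall fun ω => ?_)
  ext k
  simp

lemma GV.congr_K {K2 : ι → ι → ℝ} (h : GV P X K) (hK : ∀ i j, K i j = K2 i j) : GV P X K2 :=
  ⟨h.law, h.mean, fun i j => by rw [h.cov, hK]⟩

lemma GV.reindex (h : GV P X K) (e : κ → ι) : GV P (fun k => X (e k)) (fun k l => K (e k) (e l)) := by
  refine ⟨?_, fun k => h.mean _, fun k l => h.cov _ _⟩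
  exact h.law.map_fun (ContinuousLinearMap.pi fun k =>
    ContinuousLinearMap.proj (R := ℝ) (φ := fun _ : ι => ℝ) (e k))

lemma GV.unique {Y : ι → Ω' → ℝ} (h : GV P X K) (h' : GV Q Y K) :
    P.map (fun ω i => X i ω) = Q.map (fun ω i => Y i ω) := by
  have := h.prob
  have := h'.prob
  have := h.law.isGaussian_map
  have := h'.law.isGaussian_map
  refine Measure.ext_of_charFunDual (funext fun L => ?_)
  rw [h.law.charFunDual_map_eq_fun, h'.law.charFunDual_map_eq_fun]
  have e : (fun ω => L (fun i => X i ω)) = fun ω => ∑ i, L (Pi.single i 1) * X i ω :=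
    funext fun ω => dual_apply L _
  have e' : (fun ω => L (fun i => Y i ω)) = fun ω => ∑ i, L (Pi.single i 1) * Y i ω :=
    funext fun ω => dual_apply L _
  rw [e, e', h.mean_lin, h'.mean_lin, h.var_lin, h'.var_lin]

lemma GV.pair [IsProbabilityMeasure P] [IsProbabilityMeasure Q] (h : GV P X K) (h' : GV Q Y K') :
    GV (P.prod Q) (fun s ω => Sum.elim (fun i => X i ω.1) (fun j => Y j ω.2) s)
      (Sum.elim (fun i => Sum.elim (fun j => K i j) (fun _ => 0))
        (fun i => Sum.elim (fun _ => 0) (fun j => K' i j))) := by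
  have l1 : HasGaussianLaw (fun ω : Ω × Ω' => fun i => X i ω.1) (P.prod Q) := by
    constructor
    have := (measurePreserving_fst (μ := P) (ν := Q)).map_eq
    have e : (fun ω : Ω × Ω' => fun i => X i ω.1) = (fun ω i => X i ω) ∘ Prod.fst := rfl
    rw [e, ← AEMeasurable.map_map_of_aemeasurable (by rw [this]; exact h.law.aemeasurable)
      measurable_fst.aemeasurable, this]
    exact h.law.isGaussian_map
  have l2 : HasGaussianLaw (fun ω : Ω × Ω' => fun i => Y i ω.2) (P.prod Q) := by
    constructor
    have := (measurePreserving_snd (μ := P) (ν := Q)).map_eq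
    have e : (fun ω : Ω × Ω' => fun i => Y i ω.2) = (fun ω i => Y i ω) ∘ Prod.snd := rfl
    rw [e, ← AEMeasurable.map_map_of_aemeasurable (by rw [this]; exact h'.law.aemeasurable)
      measurable_snd.aemeasurable, this]
    exact h'.law.isGaussian_map
  have hind := indepFun_prod₀ h.law.aemeasurable h'.law.aemeasurable
  have hl := IndepFun.hasGaussianLaw l1 l2 hind
  have pf : ∀ f : Ω → ℝ, AEMeasurable f P → ∫ ω, f ω.1 ∂(P.prod Q) = ∫ ω, f ω ∂P := fun f hf => by
    have := integral_map (μ := P.prod Q) (φ := Prod.fst) (f := f) measurable_fst.aemeasurable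
      (by rw [measurePreserving_fst.map_eq]; exact hf.aestronglyMeasurable)
    rw [← this, measurePreserving_fst.map_eq]
  have ps : ∀ f : Ω' → ℝ, AEMeasurable f Q → ∫ ω, f ω.2 ∂(P.prod Q) = ∫ ω, f ω ∂Q := fun f hf => by
    have := integral_map (μ := P.prod Q) (φ := Prod.snd) (f := f) measurable_snd.aemeasurable
      (by rw [measurePreserving_snd.map_eq]; exact hf.aestronglyMeasurable)
    rw [← this, measurePreserving_snd.map_eq]
  refine ⟨?_, fun s => ?_, fun s t => ?_⟩
  · have := hl.map_fun (ContinuousLinearMap.pi fun s : ι ⊕ κ => Sum.elim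
      (fun i => (ContinuousLinearMap.proj (R := ℝ) (φ := fun _ : ι => ℝ) i).comp
        (ContinuousLinearMap.fst ℝ (ι → ℝ) (κ → ℝ)))
      (fun i => (ContinuousLinearMap.proj (R := ℝ) (φ := fun _ : κ => ℝ) i).comp
        (ContinuousLinearMap.snd ℝ (ι → ℝ) (κ → ℝ))) s)
    refine this.congr (Eventually.of_forall fun ω => ?_)
    ext s
    rcases s with s | s <;> simp
  · rcases s with s | s
    · simpa using (pf (X s) (h.aem s)).trans (h.mean s)
    · simpa using (ps (Y s) (h'.aem s)).trans (h'.mean s)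
  · have m1 : ∀ i, MemLp (fun ω : Ω × Ω' => X i ω.1) 2 (P.prod Q) := fun i => (l1.eval i).memLp_two
    have m2 : ∀ i, MemLp (fun ω : Ω × Ω' => Y i ω.2) 2 (P.prod Q) := fun i => (l2.eval i).memLp_two
    have hc : ∀ i j, covariance (fun ω : Ω × Ω' => X i ω.1) (fun ω => Y j ω.2) (P.prod Q) = 0 :=
      fun i j => covariance_fst_snd_prod (h.memLp i) (h'.memLp j)
    rcases s with s | s <;> rcases t with t | t <;> simp only [Sum.elim_inl, Sum.elim_inr]
    · rw [← h.cov, covariance_eq_sub (m1 s) (m1 t), covariance_eq_sub (h.memLp s) (h.memLp t),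
        pf _ (h.aem s), pf _ (h.aem t)]
      congr 1
      exact pf (X s * X t) ((h.aem s).mul (h.aem t))
    · exact hc s t
    · rw [covariance_comm]; exact hc t s
    · rw [← h'.cov, covariance_eq_sub (m2 s) (m2 t), covariance_eq_sub (h'.memLp s) (h'.memLp t),
        ps _ (h'.aem s), ps _ (h'.aem t)]
      congr 1
      exact ps (Y s * Y t) ((h'.aem s).mul (h'.aem t))

lemma GV.multi {S : Matrix ι ι ℝ} (hS : S.PosSemidef) :
    GV (multivariateGaussian 0 S) (fun i x => x i) S := by
  refine ⟨?_, fun i => ?_, fun i j => covariance_eval_multivariateGaussian hS i j⟩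
  · have := IsGaussian.hasGaussianLaw_id (μ := multivariateGaussian (0 : EuclideanSpace ℝ ι) S)
    exact this.map_equiv_fun (PiLp.continuousLinearEquiv 2 ℝ (fun _ : ι => ℝ))
  · have := ContinuousLinearMap.integral_comp_comm (μ := multivariateGaussian (0 : EuclideanSpace ℝ ι) S)
      (EuclideanSpace.proj i : EuclideanSpace ℝ ι →L[ℝ] ℝ) (φ := fun x => x) IsGaussian.integrable_id
    rw [integral_id_multivariateGaussian] at this
    simpa using this

lemma GV.abs_le (h : GV P X K) (i : ι) : ∫ ω, |X i ω| ∂P ≤ √(K i i) := by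
  have := h.prob
  refine Real.le_sqrt_of_sq_le ?_
  rw [← h.cov, covariance_eq_sub (h.memLp i) (h.memLp i), h.mean]
  have h1 := variance_nonneg |X i| P
  rw [variance_eq_sub (h.memLp i).abs] at h1
  have h2 : ∫ ω, (|X i| ^ 2) ω ∂P = ∫ ω, (X i * X i) ω ∂P := by
    congr with ω; simp [sq]
  have h3 : ∫ x, |X i| x ∂P = ∫ x, |X i x| ∂P := rfl
  rw [h2, h3] at h1
  linarith

/-- `Φ` is Lipschitz for the `ℓ¹` norm and bounded by one. -/
structure LipB (L : ℝ) (Φ : (ι → ℝ) → ℝ) : Prop where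
  nonneg : 0 ≤ L
  meas : Measurable Φ
  bdd : ∀ a, |Φ a| ≤ 1
  lip : ∀ a b, |Φ a - Φ b| ≤ L * ∑ i, |a i - b i|

lemma GV.perturb [IsProbabilityMeasure P] (h : GV P X K) {S : Matrix ι ι ℝ} (hS : S.PosSemidef)
    {L : ℝ} {Φ : (ι → ℝ) → ℝ} (hΦ : LipB L Φ) :
    GV (P.prod (multivariateGaussian 0 S)) (fun i ω => X i ω.1 + ω.2 i) (fun i j => K i j + S i j) ∧
    |∫ ω, Φ (fun i => X i ω) ∂P -
      ∫ ω, Φ (fun i => X i ω.1 + ω.2 i) ∂(P.prod (multivariateGaussian 0 S))| ≤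
      L * ∑ i, √(S i i) := by
  have hm := GV.multi hS
  have hp := h.pair hm
  constructor
  · have := hp.lin (κ := ι) (fun k => Sum.elim (fun i => if i = k then 1 else 0)
      (fun i => if i = k then 1 else 0))
    refine ⟨?_, fun k => ?_, fun k l => ?_⟩
    · have := this.law
      simpa using this
    · have := this.mean k
      simpa using this
    · have := this.cov k l
      simpa using this
  · have pf : ∀ f : Ω → ℝ, AEMeasurable f P →
      ∫ ω, f ω.1 ∂(P.prod (multivariateGaussian 0 S)) = ∫ ω, f ω ∂P := fun f hf => by
      have := integral_map (μ := P.prod (multivariateGaussian 0 S)) (φ := Prod.fst) (f := f)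
        measurable_fst.aemeasurable
        (by rw [measurePreserving_fst.map_eq]; exact hf.aestronglyMeasurable)
      rw [← this, measurePreserving_fst.map_eq]
    have ma : AEMeasurable (fun ω => Φ (fun i => X i ω)) P :=
      hΦ.meas.comp_aemeasurable h.law.aemeasurable
    have m1 : AEMeasurable (fun ω : Ω × EuclideanSpace ℝ ι => (fun i => X i ω.1))
        (P.prod (multivariateGaussian 0 S)) :=
      AEMeasurable.comp_fst (ν := multivariateGaussian 0 S) h.law.aemeasurable
    have m2 : AEMeasurable (fun ω : Ω × EuclideanSpace ℝ ι => (fun i => X i ω.1 + ω.2 i))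
        (P.prod (multivariateGaussian 0 S)) := by
      rw [aemeasurable_pi_iff] at m1 ⊢
      intro i
      refine (m1 i).add ?_
      exact Measurable.aemeasurable (by fun_prop)
    have i1 : Integrable (fun ω : Ω × EuclideanSpace ℝ ι => Φ (fun i => X i ω.1))
        (P.prod (multivariateGaussian 0 S)) :=
      Integrable.of_bound (hΦ.meas.comp_aemeasurable m1).aestronglyMeasurable 1
        (Eventually.of_forall fun ω => hΦ.bdd _)
    have i2 : Integrable (fun ω : Ω × EuclideanSpace ℝ ι => Φ (fun i => X i ω.1 + ω.2 i))
        (P.prod (multivariateGaussian 0 S)) :=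
      Integrable.of_bound (hΦ.meas.comp_aemeasurable m2).aestronglyMeasurable 1
        (Eventually.of_forall fun ω => hΦ.bdd _)
    have hi : ∀ i, Integrable (fun ω : Ω × EuclideanSpace ℝ ι => |ω.2 i|)
        (P.prod (multivariateGaussian 0 S)) := fun i =>
      ((hp.memLp (Sum.inr i)).integrable (by norm_num)).abs
    rw [← pf _ ma, ← integral_sub i1 i2]
    calc |∫ ω : Ω × EuclideanSpace ℝ ι, (Φ (fun i => X i ω.1) - Φ (fun i => X i ω.1 + ω.2 i))
          ∂(P.prod (multivariateGaussian 0 S))|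
        ≤ ∫ ω : Ω × EuclideanSpace ℝ ι, |Φ (fun i => X i ω.1) - Φ (fun i => X i ω.1 + ω.2 i)|
          ∂(P.prod (multivariateGaussian 0 S)) := abs_integral_le_integral_abs
      _ ≤ ∫ ω : Ω × EuclideanSpace ℝ ι, L * ∑ i, |ω.2 i| ∂(P.prod (multivariateGaussian 0 S)) := by
          refine integral_mono (i1.sub i2).abs
            ((integrable_finsetSum _ fun i _ => hi i).const_mul L) fun ω => ?_
          refine (hΦ.lip _ _).trans (le_of_eq ?_)
          congr 1
          refine Finset.sum_congr rfl fun i _ => ?_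
          rw [← abs_neg]; congr 1; ring
      _ = L * ∑ i, ∫ ω : Ω × EuclideanSpace ℝ ι, |ω.2 i| ∂(P.prod (multivariateGaussian 0 S)) := by
          rw [integral_const_mul, integral_finsetSum _ fun i _ => hi i]
      _ ≤ L * ∑ i, √(S i i) := by
          refine mul_le_mul_of_nonneg_left (Finset.sum_le_sum fun i _ => ?_) hΦ.nonneg
          simpa using hp.abs_le (Sum.inr i)

theorem gauss_compare {Y : ι → Ω' → ℝ} {K2 : ι → ι → ℝ} [IsProbabilityMeasure P]
    [IsProbabilityMeasure Q] (h : GV P X K) (h' : GV Q Y K2) {ε : ℝ} (hε : 0 ≤ ε)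
    (hK : ∀ i j, |K i j - K2 i j| ≤ ε) {L : ℝ} {Φ : (ι → ℝ) → ℝ} (hΦ : LipB L Φ) :
    |∫ ω, Φ (fun i => X i ω) ∂P - ∫ ω, Φ (fun i => Y i ω) ∂Q| ≤
      2 * L * ((Fintype.card ι : ℝ) * √(((Fintype.card ι : ℝ) + 1) * ε)) := by
  set m : ℝ := (Fintype.card ι : ℝ) with hm
  have hm0 : 0 ≤ m := by positivity
  let S1 : Matrix ι ι ℝ := (m * ε) • (1 : Matrix ι ι ℝ)
  let S2 : Matrix ι ι ℝ := Matrix.of (fun i j => K i j - K2 i j) + S1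
  have p1 : S1.PosSemidef := by
    refine Matrix.PosSemidef.of_dotProduct_mulVec_nonneg ?_ fun x => ?_
    · ext i j; simp [S1, Matrix.one_apply, eq_comm]
    · simp only [S1, Matrix.smul_mulVec, Matrix.one_mulVec, dotProduct_smul, smul_eq_mul]
      refine mul_nonneg (by positivity) ?_
      simp only [dotProduct, Pi.star_apply, star_trivial]
      exact Finset.sum_nonneg fun i _ => mul_self_nonneg _
  have p2 : S2.PosSemidef := by
    refine Matrix.PosSemidef.of_dotProduct_mulVec_nonneg ?_ fun x => ?_
    · ext i j
      simp only [S2, S1, Matrix.conjTranspose_apply, Matrix.add_apply, Matrix.of_apply,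
        Matrix.smul_apply, star_trivial, Matrix.one_apply, ← h.cov, ← h'.cov]
      rw [covariance_comm (X j), covariance_comm (Y j)]
      simp [eq_comm]
    · have e : star x ⬝ᵥ (Matrix.mulVec S2 x) =
          (∑ i, ∑ j, x i * x j * (K i j - K2 i j)) + m * ε * ∑ i, x i ^ 2 := by
        simp only [S2, Matrix.add_mulVec, dotProduct_add, S1, Matrix.smul_mulVec,
          Matrix.one_mulVec, dotProduct_smul, smul_eq_mul]
        congr 1
        · simp only [dotProduct, Matrix.mulVec, Pi.star_apply, star_trivial, Finset.mul_sum,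
            Matrix.of_apply]
          exact Finset.sum_congr rfl fun i _ => Finset.sum_congr rfl fun j _ => by ring
        · simp only [dotProduct, Pi.star_apply, star_trivial, sq]
      rw [e]
      have b1 : ∑ i, ∑ j, -(ε * (|x i| * |x j|)) ≤ ∑ i, ∑ j, x i * x j * (K i j - K2 i j) := by
        refine Finset.sum_le_sum fun i _ => Finset.sum_le_sum fun j _ => ?_
        have := abs_le.1 (show |x i * x j * (K i j - K2 i j)| ≤ |x i| * |x j| * ε by
          rw [abs_mul, abs_mul]; exact mul_le_mul_of_nonneg_left (hK i j) (by positivity))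
        linarith [this.1]
      have b2 : ∑ i, ∑ j, -(ε * (|x i| * |x j|)) = -(ε * (∑ i, |x i|) ^ 2) := by
        simp only [Finset.sum_neg_distrib, ← Finset.mul_sum, sq, Finset.sum_mul_sum]
      have b3 : (∑ i, |x i|) ^ 2 ≤ m * ∑ i, x i ^ 2 := by
        have := sq_sum_le_card_mul_sum_sq (s := Finset.univ) (f := fun i => |x i|)
        simpa [sq_abs, hm] using this
      have := mul_le_mul_of_nonneg_left b3 hε
      rw [b2] at b1
      nlinarith
  obtain ⟨g1, e1⟩ := h.perturb p1 hΦ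
  obtain ⟨g2, e2⟩ := h'.perturb p2 hΦ
  have hS : ∀ i j, K i j + S1 i j = K2 i j + S2 i j := fun i j => by simp [S2]; ring
  have hu := (g1.congr_K hS).unique g2
  have e3 : ∫ ω, Φ (fun i => X i ω.1 + ω.2 i) ∂(P.prod (multivariateGaussian 0 S1)) =
      ∫ ω, Φ (fun i => Y i ω.1 + ω.2 i) ∂(Q.prod (multivariateGaussian 0 S2)) := by
    have a1 := integral_map g1.law.aemeasurable hΦ.meas.aestronglyMeasurable
    have a2 := integral_map g2.law.aemeasurable hΦ.meas.aestronglyMeasurable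
    rw [← a1, ← a2, hu]
  have f1 : ∑ i, √(S1 i i) ≤ m * √((m + 1) * ε) := by
    calc ∑ i, √(S1 i i) ≤ ∑ i : ι, √((m + 1) * ε) := by
          refine Finset.sum_le_sum fun i _ => Real.sqrt_le_sqrt ?_
          simp [S1]; nlinarith
      _ = _ := by simp [hm]
  have f2 : ∑ i, √(S2 i i) ≤ m * √((m + 1) * ε) := by
    calc ∑ i, √(S2 i i) ≤ ∑ i : ι, √((m + 1) * ε) := by
          refine Finset.sum_le_sum fun i _ => Real.sqrt_le_sqrt ?_
          have := (abs_le.1 (hK i i)).2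
          simp [S2, S1]; nlinarith
      _ = _ := by simp [hm]
  have f1' := mul_le_mul_of_nonneg_left f1 hΦ.nonneg
  have f2' := mul_le_mul_of_nonneg_left f2 hΦ.nonneg
  rw [e3] at e1
  rw [abs_le] at e1 e2 ⊢
  constructor <;> linarith [e1.1, e1.2, e2.1, e2.2]

end GV

section field
variable {I ι : Type*} [Fintype ι] {μ : Measure (I → ℝ)} {K : I → I → ℝ}

lemma gf_law (hμ : GFF.IsGaussianField μ K) (e : ι → I) (c : ι → ℝ) :
    μ.map (fun ω => ∑ i, c i * ω (e i)) =
      gaussianReal 0 (Real.toNNReal (∑ i, ∑ j, c i * c j * K (e i) (e j))) := by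
  let C : I →₀ ℝ := ∑ i, Finsupp.single (e i) (c i)
  have key : ∀ f : I → ℝ, ∑ s ∈ C.support, C s * f s = ∑ i, c i * f (e i) := fun f => by
    have : C.sum (fun s a => a * f s) = ∑ i, c i * f (e i) := by
      rw [← Finsupp.sum_finsetSum_index (h := fun s a => a * f s) (fun _ => zero_mul _)
        (fun _ _ _ => add_mul _ _ _)]
      refine Finset.sum_congr rfl fun i _ => ?_
      rw [Finsupp.sum_single_index (zero_mul _)]
    exact this
  have h := hμ.2 C
  have e1 : (fun ω : I → ℝ => ∑ i ∈ C.support, C i * ω i) = fun ω => ∑ i, c i * ω (e i) :=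
    funext fun ω => key ω
  have e2 : ∑ i ∈ C.support, ∑ j ∈ C.support, C i * C j * K i j
      = ∑ i, ∑ j, c i * c j * K (e i) (e j) := by
    have : ∀ i, ∑ j ∈ C.support, C i * C j * K i j = C i * ∑ j, c j * K i (e j) := fun i => by
      rw [← key, Finset.mul_sum]
      exact Finset.sum_congr rfl fun j _ => by ring
    simp_rw [this]
    rw [key]
    refine Finset.sum_congr rfl fun i _ => ?_
    rw [Finset.mul_sum]
    exact Finset.sum_congr rfl fun j _ => by ring
  rw [e1, e2] at h
  exact h

lemma gf_GV (hμ : GFF.IsGaussianField μ K) (hs : ∀ i j, K i j = K j i) (h0 : ∀ i, 0 ≤ K i i)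
    (h2 : ∀ i j, 0 ≤ K i i + K j j + 2 * K i j) (e : ι → I) :
    GV μ (fun i ω => ω (e i)) (fun i j => K (e i) (e j)) := by
  have hp := hμ.1
  have hm : ∀ i : I, AEMeasurable (fun ω : I → ℝ => ω i) μ := fun i => (measurable_pi_apply i).aemeasurable
  have l1 : ∀ i : I, μ.map (fun ω => ω i) = gaussianReal 0 (Real.toNNReal (K i i)) := fun i => by
    have := gf_law hμ (fun _ : Unit => i) (fun _ => 1)
    simpa using this
  have L1 : ∀ i : I, HasLaw (fun ω : I → ℝ => ω i) (gaussianReal 0 (Real.toNNReal (K i i))) μ :=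
    fun i => ⟨hm i, l1 i⟩
  have mem : ∀ i : I, MemLp (fun ω : I → ℝ => ω i) 2 μ := fun i => by
    have : HasGaussianLaw (fun ω : I → ℝ => ω i) μ := ⟨by rw [l1]; infer_instance⟩
    exact this.memLp_two
  have v1 : ∀ i : I, variance (fun ω : I → ℝ => ω i) μ = K i i := fun i => by
    rw [(L1 i).variance_eq, variance_id_gaussianReal, Real.coe_toNNReal _ (h0 i)]
  have v2 : ∀ i j : I, variance (fun ω : I → ℝ => ω i + ω j) μ = K i i + K j j + 2 * K i j :=
    fun i j => by
    have := gf_law hμ (fun b : Bool => if b then i else j) (fun _ => 1)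
    simp only [Fintype.sum_bool, one_mul, if_true, Bool.false_eq_true, if_false] at this
    have L2 : HasLaw (fun ω : I → ℝ => ω i + ω j)
      (gaussianReal 0 (Real.toNNReal (K i i + K i j + (K j i + K j j)))) μ :=
      ⟨(hm i).add (hm j), this⟩
    rw [L2.variance_eq, variance_id_gaussianReal, Real.coe_toNNReal, hs j i]
    · ring
    · have := h2 i j; rw [hs j i]; linarith
  have cv : ∀ i j : I, covariance (fun ω : I → ℝ => ω i) (fun ω => ω j) μ = K i j := fun i j => by
    have := variance_fun_add (mem i) (mem j)
    rw [v2, v1, v1] at this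
    linarith
  refine ⟨?_, fun i => ?_, fun i j => cv _ _⟩
  · constructor
    refine isGaussian_of_map_eq_gaussianReal fun L => ?_
    refine ⟨0, Real.toNNReal (∑ i, ∑ j, L (Pi.single i 1) * L (Pi.single j 1) * K (e i) (e j)), ?_⟩
    rw [Measure.map_map (by fun_prop) (by fun_prop), ← gf_law hμ e]
    congr 1
    funext ω
    exact dual_apply L _
  · rw [(L1 (e i)).integral_eq, integral_id_gaussianReal]

end field

end SMC

namespace SMC

/-! ### Part 3: coding trees by words -/

section codes
variable {V : Type*} {G : SimpleGraph V} {D : ℕ}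

def UP (G : SimpleGraph V) (B : Set V) : Prop :=
  ∀ (u v : V) (p q : G.Walk u v), p.IsPath → q.IsPath → (∀ w ∈ p.support, w ∈ B) →
    (∀ w ∈ q.support, w ∈ B) → p.support = q.support

lemma UP_of_acyclic {B : Set V} (h : (G.induce B).IsAcyclic) : UP G B := by
  intro u v p q hp hq hpB hqB
  have hs : ∀ (p : G.Walk u v) (hpB : ∀ w ∈ p.support, w ∈ B),
      (p.induce B hpB).support.map Subtype.val = p.support := fun p hpB => by
    rw [SimpleGraph.Walk.support_induce]; simp
  have hP : ∀ (p : G.Walk u v) (hpB : ∀ w ∈ p.support, w ∈ B), p.IsPath → (p.induce B hpB).IsPath :=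
    fun p hpB hp => by
      rw [SimpleGraph.Walk.isPath_def]
      refine List.Nodup.of_map Subtype.val ?_
      rw [hs]; exact hp.support_nodup
  have e := (h.subsingleton_path _ _).elim ⟨p.induce B hpB, hP p hpB hp⟩ ⟨q.induce B hqB, hP q hqB hq⟩
  rw [Subtype.mk.injEq] at e
  rw [← hs p hpB, ← hs q hqB, e]

lemma UP_univ (h : G.IsAcyclic) : UP G univ := by
  intro u v p q hp hq _ _
  have := (h.subsingleton_path _ _).elim ⟨p, hp⟩ ⟨q, hq⟩
  rw [Subtype.mk.injEq] at this
  rw [this]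

lemma dist_le_of_mem {u v w : V} (p : G.Walk u v) (hw : w ∈ p.support) :
    G.dist u w ≤ p.length ∧ G.dist w v ≤ p.length := by
  have h1 := SimpleGraph.dist_le (p.takeUntil w hw)
  have h2 := SimpleGraph.dist_le (p.dropUntil w hw)
  exact ⟨h1.trans (p.length_takeUntil_le_length hw), h2.trans (p.length_dropUntil_le_length hw)⟩

lemma closer_unique (hc : G.Connected) {B : Set V} (hB : UP G B) {u v a b : V} (ha : G.Adj u a)
    (hb : G.Adj u b) (hav : G.dist a v ≤ G.dist u v) (hbv : G.dist b v ≤ G.dist u v)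
    (hR : ∀ w, G.dist u w ≤ G.dist u v + 1 → w ∈ B) : a = b := by
  have key : ∀ a, G.Adj u a → G.dist a v ≤ G.dist u v → ∃ p : G.Walk u v, p.IsPath ∧
      (∀ w ∈ p.support, w ∈ B) ∧ p.support.tail.head? = some a := by
    intro a ha hav
    obtain ⟨p, hp, hl⟩ := hc.exists_path_of_dist a v
    have hu : u ∉ p.support := by
      intro hu
      have h0 := congrArg SimpleGraph.Walk.length (p.take_spec hu)
      rw [SimpleGraph.Walk.length_append] at h0
      have h1 := SimpleGraph.dist_le (p.takeUntil u hu)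
      have h2 := SimpleGraph.dist_le (p.dropUntil u hu)
      have h3 : 0 < G.dist a u := hc.pos_dist_of_ne ha.ne'
      omega
    refine ⟨.cons ha p, hp.cons hu, ?_, ?_⟩
    · intro w hw
      rw [SimpleGraph.Walk.support_cons, List.mem_cons] at hw
      rcases hw with rfl | hw
      · exact hR _ (by simp)
      · have h1 := (dist_le_of_mem p hw).1
        have h2 := hc.dist_triangle (u := u) (v := a) (w := w)
        have h3 : G.dist u a = 1 := SimpleGraph.dist_eq_one_iff_adj.2 ha
        exact hR _ (by omega)
    · rw [SimpleGraph.Walk.support_cons, List.tail_cons]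
      cases p <;> simp
  obtain ⟨p, p1, p2, p3⟩ := key a ha hav
  obtain ⟨q, q1, q2, q3⟩ := key b hb hbv
  rw [hB u v p q p1 q1 p2 q2, q3] at p3
  exact (Option.some.inj p3).symm

structure Code (G : SimpleGraph V) (c : List (Fin D) → V) : Prop where
  adj : ∀ l i, G.Adj (c l) (c (i :: l))
  sib : ∀ l i j, c (i :: l) = c (j :: l) → i = j
  back : ∀ l i j, c (i :: j :: l) ≠ c l

lemma exists_code (hreg : GFF.IsReg G (D + 1)) {x x' : V} (hx : G.Adj x x') :
    ∃ c : List (Fin D) → V, Code G c ∧ c [] = x ∧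
      (∀ y, G.Adj x y → y ≠ x' → ∃ i, c [i] = y) ∧
      (∀ l j y, G.Adj (c (j :: l)) y → y ≠ c l → ∃ i, c (i :: j :: l) = y) := by
  have hch : ∀ p q : V, G.Adj q p → ∃ f : Fin D → V, Function.Injective f ∧
      Set.range f = G.neighborSet q \ {p} := by
    intro p q h
    have h1 : (G.neighborSet q).ncard = D + 1 := hreg q
    have hf : (G.neighborSet q).Finite := Set.finite_of_ncard_pos (by omega)
    have h2 : (G.neighborSet q \ {p}).ncard = D := by
      rw [Set.ncard_sdiff_singleton_of_mem (by exact h)]; omega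
    have : Finite ↑(G.neighborSet q \ {p}) := hf.subset Set.sdiff_subset
    have e : Fin D ≃ ↑(G.neighborSet q \ {p}) := (Finite.equivFinOfCardEq h2).symm
    refine ⟨fun i => (e i : V), fun i j hij => e.injective (Subtype.ext hij), ?_⟩
    ext y
    constructor
    · rintro ⟨i, rfl⟩; exact (e i).2
    · intro hy; exact ⟨e.symm ⟨y, hy⟩, by simp⟩
  let ch : V → V → Fin D → V := fun p q => if h : G.Adj q p then (hch p q h).choose else fun _ => p
  have ch1 : ∀ p q, G.Adj q p → Function.Injective (ch p q) := fun p q h => by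
    simp only [ch, dif_pos h]; exact (hch p q h).choose_spec.1
  have ch2 : ∀ p q, G.Adj q p → Set.range (ch p q) = G.neighborSet q \ {p} := fun p q h => by
    simp only [ch, dif_pos h]; exact (hch p q h).choose_spec.2
  have ch3 : ∀ p q i, G.Adj q p → G.Adj q (ch p q i) ∧ ch p q i ≠ p := fun p q i h => by
    have : ch p q i ∈ G.neighborSet q \ {p} := by rw [← ch2 p q h]; exact ⟨i, rfl⟩
    exact this
  let s : List (Fin D) → V × V := fun l => List.rec (x', x) (fun i _ pq => (pq.2, ch pq.1 pq.2 i)) l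
  have s1 : ∀ i l, s (i :: l) = ((s l).2, ch (s l).1 (s l).2 i) := fun _ _ => rfl
  have inv : ∀ l, G.Adj (s l).2 (s l).1 := by
    intro l
    induction l with
    | nil => exact hx
    | cons i l ih => rw [s1]; exact (ch3 _ _ i ih).1.symm
  refine ⟨fun l => (s l).2, ⟨fun l i => (ch3 _ _ i (inv l)).1, fun l i j h => ch1 _ _ (inv l) h,
    fun l i j => (ch3 _ _ i (inv (j :: l))).2⟩, rfl, fun y hy hne => ?_, fun l j y hy hne => ?_⟩
  · have : y ∈ Set.range (ch x' x) := by rw [ch2 _ _ hx]; exact ⟨hy, hne⟩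
    exact this
  · have : y ∈ Set.range (ch (s (j :: l)).1 (s (j :: l)).2) := by
      rw [ch2 _ _ (inv (j :: l))]; exact ⟨hy, hne⟩
    exact this

variable {c : List (Fin D) → V}

lemma Code.dist_le (hc : G.Connected) (h : Code G c) (l : List (Fin D)) :
    G.dist (c []) (c l) ≤ l.length := by
  induction l with
  | nil => simp
  | cons i l ih =>
    have h2 := hc.dist_triangle (u := c []) (v := c l) (w := c (i :: l))
    have h3 : G.dist (c l) (c (i :: l)) = 1 := SimpleGraph.dist_eq_one_iff_adj.2 (h.adj l i)
    simp only [List.length_cons]; omega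

lemma Code.step (hc : G.Connected) (h : Code G c) {B : Set V} (hB : UP G B) {r : ℕ}
    (hR : ∀ w, G.dist (c []) w ≤ 3 * r + 1 → w ∈ B) :
    ∀ n (i : Fin D) (l m : List (Fin D)), l.length + m.length ≤ n → m.length ≤ l.length + 1 →
      l.length + 1 ≤ r → m ≠ i :: l → G.dist (c (i :: l)) (c m) = G.dist (c l) (c m) + 1 := by
  intro n
  induction n with
  | zero =>
    intro i l m h1 h2 h3 h4
    obtain rfl : l = [] := List.eq_nil_of_length_eq_zero (by omega)
    obtain rfl : m = [] := List.eq_nil_of_length_eq_zero (by omega)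
    rw [SimpleGraph.dist_comm]
    simpa using h.adj [] i
  | succ n ih =>
    intro i l m h1 h2 h3 h4
    have hai := h.adj l i
    by_cases hlm : c l = c m
    · rw [← hlm, SimpleGraph.dist_comm]
      simpa using hai
    have tri := hc.dist_triangle (u := c (i :: l)) (v := c l) (w := c m)
    have one : G.dist (c (i :: l)) (c l) = 1 := SimpleGraph.dist_eq_one_iff_adj.2 hai.symm
    by_contra hne
    have hle : G.dist (c (i :: l)) (c m) ≤ G.dist (c l) (c m) := by omega
    have bl := h.dist_le hc l
    have bm := h.dist_le hc m
    have R : ∀ w, G.dist (c l) w ≤ G.dist (c l) (c m) + 1 → w ∈ B := by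
      intro w hw
      have t1 := hc.dist_triangle (u := c []) (v := c l) (w := w)
      have t2 := hc.dist_triangle (u := c l) (v := c []) (w := c m)
      rw [SimpleGraph.dist_comm (u := c l) (v := c [])] at t2
      exact hR w (by omega)
    have fin : ∀ a, G.Adj (c l) a → G.dist a (c m) ≤ G.dist (c l) (c m) → a = c (i :: l) :=
      fun a ha hd => closer_unique hc hB ha hai hd hle R
    by_cases hj : ∃ j, m = j :: l
    · obtain ⟨j, rfl⟩ := hj
      have := fin _ (h.adj l j) (by simp)
      exact h4 (by rw [h.sib _ _ _ this])
    rcases l with _ | ⟨k, l'⟩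
    · rcases m with _ | ⟨j, m'⟩
      · exact hlm rfl
      · simp at h2
        obtain rfl : m' = [] := h2
        exact hj ⟨j, rfl⟩
    simp only [List.length_cons] at *
    have hml : m ≠ k :: l' := fun e => hlm (by rw [e])
    have hd : G.dist (c l') (c m) ≤ G.dist (c (k :: l')) (c m) := by
      by_cases hm : m.length ≤ l'.length + 1
      · have := ih k l' m (by omega) hm (by omega) hml
        omega
      · rcases m with _ | ⟨j, m'⟩
        · simp at hm
        simp only [List.length_cons] at *
        have hm' : m' ≠ k :: l' := fun e => hj ⟨j, by rw [e]⟩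
        have a1 := ih j m' (k :: l') (by simp; omega) (by simp; omega) (by omega)
          (fun e => by have := congrArg List.length e; simp at this; omega)
        have a2 := ih j m' l' (by omega) (by omega) (by omega)
          (fun e => by have := congrArg List.length e; simp at this; omega)
        have a3 := ih k l' m' (by omega) (by omega) (by omega) hm'
        rw [SimpleGraph.dist_comm (u := c l')] at a3 ⊢
        rw [SimpleGraph.dist_comm (u := c (k :: l'))] at a3 ⊢
        omega
    exact h.back l' i k (fin _ (h.adj l' k).symm hd).symm

lemma Code.inj (hc : G.Connected) (h : Code G c) {B : Set V} (hB : UP G B) {r : ℕ}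
    (hR : ∀ w, G.dist (c []) w ≤ 3 * r + 1 → w ∈ B) {l m : List (Fin D)} (hl : l.length ≤ r)
    (hm : m.length ≤ r) (he : c l = c m) : l = m := by
  by_contra hne
  wlog hlm : m.length ≤ l.length generalizing l m
  · exact this hm hl he.symm (Ne.symm hne) (by omega)
  rcases l with _ | ⟨i, l⟩
  · simp at hlm; exact hne hlm.symm
  have := h.step hc hB hR _ i l m le_rfl (by simpa using hlm) (by simpa using hl) (Ne.symm hne)
  rw [he] at this
  simp at this

lemma Code.dist_eq {V' : Type*} {G' : SimpleGraph V'} {c' : List (Fin D) → V'}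
    (hc : G.Connected) (h : Code G c) {B : Set V} (hB : UP G B) {r : ℕ}
    (hR : ∀ w, G.dist (c []) w ≤ 3 * r + 1 → w ∈ B)
    (hc' : G'.Connected) (h' : Code G' c') {B' : Set V'} (hB' : UP G' B')
    (hR' : ∀ w, G'.dist (c' []) w ≤ 3 * r + 1 → w ∈ B') :
    ∀ n (l m : List (Fin D)), l.length + m.length ≤ n → l.length ≤ r → m.length ≤ r →
      G.dist (c l) (c m) = G'.dist (c' l) (c' m) := by
  intro n
  induction n with
  | zero =>
    intro l m h1 _ _
    obtain rfl : l = [] := List.eq_nil_of_length_eq_zero (by omega)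
    obtain rfl : m = [] := List.eq_nil_of_length_eq_zero (by omega)
    simp
  | succ n ih =>
    intro l m hn hl hm
    by_cases hne : l = m
    · subst hne; simp
    wlog hlm : m.length ≤ l.length generalizing l m
    · rw [SimpleGraph.dist_comm, SimpleGraph.dist_comm (u := c' l)]
      exact this m l (by omega) hm hl (Ne.symm hne) (by omega)
    rcases l with _ | ⟨i, l⟩
    · simp at hlm; exact absurd hlm.symm hne
    simp only [List.length_cons] at *
    rw [h.step hc hB hR _ i l m le_rfl hlm hl (Ne.symm hne),
      h'.step hc' hB' hR' _ i l m le_rfl hlm hl (Ne.symm hne), ih l m (by omega) (by omega) hm]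

/-- words of length `k` -/
noncomputable def words (D : ℕ) : ℕ → Finset (List (Fin D))
  | 0 => {[]}
  | k + 1 => ((words D k) ×ˢ (Finset.univ : Finset (Fin D))).image fun p => p.2 :: p.1

lemma mem_words {k : ℕ} {l : List (Fin D)} : l ∈ words D k ↔ l.length = k := by
  induction k generalizing l with
  | zero => simp [words]
  | succ k ih =>
    simp only [words, Finset.mem_image, Finset.mem_product, Finset.mem_univ, and_true]
    constructor
    · rintro ⟨⟨p, i⟩, hp, rfl⟩
      simp [ih.1 hp]
    · intro hl
      rcases l with _ | ⟨i, l⟩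
      · simp at hl
      · exact ⟨(l, i), ih.2 (by simpa using hl), rfl⟩

lemma card_words (k : ℕ) : (words D k).card = D ^ k := by
  induction k with
  | zero => simp [words]
  | succ k ih =>
    rw [words, Finset.card_image_of_injective, Finset.card_product, ih]
    · simp [pow_succ]
    · rintro ⟨a, b⟩ ⟨a', b'⟩ h
      simp only [List.cons.injEq] at h
      rw [h.1, h.2]

lemma prod_words_succ (k : ℕ) (f : List (Fin D) → ℝ) :
    ∏ m ∈ words D (k + 1), f m = ∏ l ∈ words D k, ∏ i, f (i :: l) := by
  rw [words, Finset.prod_image, Finset.prod_product]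
  rintro ⟨a, b⟩ _ ⟨a', b'⟩ _ h
  simp only [List.cons.injEq] at h
  rw [h.1, h.2]

noncomputable def WL (D r : ℕ) : Finset (List (Fin D)) :=
  (Finset.range (r + 1)).biUnion (words D)

lemma mem_WL {r : ℕ} {l : List (Fin D)} : l ∈ WL D r ↔ l.length ≤ r := by
  simp [WL, mem_words]

lemma card_WL (hD : 2 ≤ D) (r : ℕ) : (WL D r).card ≤ D ^ (r + 1) := by
  refine (Finset.card_biUnion_le).trans ?_
  simp_rw [card_words]
  exact (Nat.geomSum_lt hD (fun k hk => by simpa using hk)).le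

/-- the word and all its ancestors are above level `h` -/
def alive (h : ℝ) (η : List (Fin D) → ℝ) : List (Fin D) → Prop
  | [] => h ≤ η []
  | i :: l => h ≤ η (i :: l) ∧ alive h η l

lemma alive.val {h : ℝ} {η : List (Fin D) → ℝ} {l : List (Fin D)} (hl : alive h η l) : h ≤ η l := by
  cases l with
  | nil => exact hl
  | cons i l => exact hl.1

lemma alive_congr {h : ℝ} {η η' : List (Fin D) → ℝ} {l : List (Fin D)}
    (he : ∀ m : List (Fin D), m.length ≤ l.length → η m = η' m) : alive h η l ↔ alive h η' l := by
  induction l with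
  | nil => simp [alive, he []]
  | cons i l ih =>
    simp only [alive]
    rw [he _ le_rfl, ih fun m hm => he m (by simp; omega)]

lemma alive_mono {h h' : ℝ} {η η' : List (Fin D) → ℝ} {l : List (Fin D)}
    (he : ∀ m : List (Fin D), m.length ≤ l.length → h ≤ η m → h' ≤ η' m) (ha : alive h η l) :
    alive h' η' l := by
  induction l with
  | nil => exact he [] le_rfl ha
  | cons i l ih => exact ⟨he _ le_rfl ha.1, ih (fun m hm => he m (by simp; omega)) ha.2⟩

noncomputable def Z (k : ℕ) (h : ℝ) (η : List (Fin D) → ℝ) : ℕ := ((words D k).filter (alive h η)).card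

lemma Code.levelComp (h : Code G c) {a : ℝ} {ω : V → ℝ} {l : List (Fin D)}
    (hl : alive a (fun m => ω (c m)) l) : c l ∈ GFF.levelComp G a ω (c []) := by
  induction l with
  | nil => exact ⟨.nil, by simpa [alive] using hl⟩
  | cons i l ih =>
    obtain ⟨p, hp⟩ := ih hl.2
    refine ⟨p.concat (h.adj l i), fun v hv => ?_⟩
    rw [SimpleGraph.Walk.support_concat, List.mem_append] at hv
    rcases hv with hv | hv
    · exact hp v hv
    · simp at hv; rw [hv]; exact hl.1

lemma Code.Z_le [Finite V] (hc : G.Connected) (h : Code G c) {B : Set V} (hB : UP G B) {r : ℕ}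
    (hR : ∀ w, G.dist (c []) w ≤ 3 * r + 1 → w ∈ B) (a : ℝ) (ω : V → ℝ) :
    Z r a (fun m => ω (c m)) ≤ (GFF.levelComp G a ω (c [])).ncard := by
  rw [Z, ← Set.ncard_coe_finset]
  refine Set.ncard_le_ncard_of_injOn c (fun l hl => ?_) (fun l hl m hm e => ?_) (Set.toFinite _)
  · simp at hl; exact h.levelComp hl.2
  · simp [mem_words] at hl hm
    exact h.inj hc hB hR hl.1.le hm.1.le e

lemma Code.cover (hG : G.Connected) (hac : G.IsAcyclic) {x x' : V} (hx : G.Adj x x') (h : Code G c)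
    (hc0 : c [] = x) (h1 : ∀ y, G.Adj x y → y ≠ x' → ∃ i, c [i] = y)
    (h2 : ∀ l j y, G.Adj (c (j :: l)) y → y ≠ c l → ∃ i, c (i :: j :: l) = y) {a : ℝ} {ω : V → ℝ}
    (hinf : (GFF.levelComp G a ω x ∩ GFF.treePlus G x x').Infinite) (n : ℕ) :
    ∃ l : List (Fin D), l.length = n ∧ alive a (fun m => ω (c m)) l := by
  let pred : List (Fin D) → V := fun l => match l with | [] => x' | _ :: l => c l
  have key : ∀ (u z : V) (q : G.Walk u z), q.IsPath → (∀ v ∈ q.support, a ≤ ω v) →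
      ∀ l, c l = u → alive a (fun m => ω (c m)) l → pred l ∉ q.support →
      ∃ m, alive a (fun m => ω (c m)) m ∧ c m = z := by
    intro u z q
    induction q with
    | nil => intro _ _ l hl hal _; exact ⟨l, hal, hl⟩
    | @cons u y z huy q ih =>
      intro hp hs l hl hal hpr
      rw [SimpleGraph.Walk.cons_isPath_iff] at hp
      have hy : y ≠ pred l := fun e => hpr (by rw [← e]; simp)
      obtain ⟨i, hi⟩ : ∃ i, c (i :: l) = y := by
        rcases l with _ | ⟨j, l⟩
        · refine h1 y ?_ hy
          rw [← hc0, hl]; exact huy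
        · exact h2 l j y (by rw [hl]; exact huy) hy
      refine ih hp.1 (fun v hv => hs v (by simp [hv])) (i :: l) hi ⟨?_, hal⟩ ?_
      · show a ≤ ω (c (i :: l))
        rw [hi]; exact hs y (by simp)
      · show c l ∉ q.support
        rw [hl]; exact hp.2
  have sub : GFF.levelComp G a ω x ∩ GFF.treePlus G x x' ⊆ c '' {m | alive a (fun m => ω (c m)) m} := by
    rintro z ⟨⟨p, hp⟩, hz⟩
    have hs : ∀ v ∈ p.bypass.support, a ≤ ω v := fun v hv => hp v (p.support_bypass_subset_support hv)
    obtain ⟨g, hg, hgl⟩ := hG.exists_path_of_dist x z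
    have hU := UP_univ hac _ _ _ _ p.bypass_isPath hg (fun _ _ => mem_univ _) (fun _ _ => mem_univ _)
    obtain ⟨m, hm, hmz⟩ := key x z p.bypass p.bypass_isPath hs [] hc0
      (by show a ≤ ω (c []); rw [hc0]; exact hs x (by simp)) (by
        show x' ∉ p.bypass.support
        rw [hU]
        intro hx'
        have h0 := congrArg SimpleGraph.Walk.length (g.take_spec hx')
        rw [SimpleGraph.Walk.length_append] at h0
        have h1 := SimpleGraph.dist_le (g.takeUntil x' hx')
        have h2 := SimpleGraph.dist_le (g.dropUntil x' hx')
        have h3 : 0 < G.dist x x' := hG.pos_dist_of_ne hx.ne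
        have h4 : G.dist z x' = G.dist z x + 1 := hz
        rw [SimpleGraph.dist_comm, SimpleGraph.dist_comm (u := z)] at h4
        omega)
    exact ⟨m, hm, hmz⟩
  by_contra hno
  push Not at hno
  have long : ∀ l : List (Fin D), n ≤ l.length → ¬ alive a (fun m => ω (c m)) l := by
    intro l
    induction l with
    | nil => intro hl; exact hno _ (by simp at hl; simp [hl])
    | cons i l ih =>
      intro hl hal
      rcases hl.eq_or_lt with e | e
      · exact hno _ e.symm hal
      · exact ih (by simp at e; omega) hal.2
  refine hinf (Set.Finite.subset (((WL D n).finite_toSet).image c) (sub.trans (Set.image_mono ?_)))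
  intro m hm
  by_contra hc
  simp [mem_WL] at hc
  exact long m hc.le hm

end codes

end SMC

namespace SMC

/-! ### Part 4: branching structure of the tree field -/

structure TreeField {Ω : Type*} [MeasurableSpace Ω] (D : ℕ) (P : Measure Ω)
    (X : List (Fin D) → Ω → ℝ) (K : List (Fin D) → List (Fin D) → ℝ) : Prop where
  gv : ∀ {ι : Type} [Fintype ι] (e : ι → List (Fin D)),
    GV P (fun i => X (e i)) (fun i j => K (e i) (e j))
  meas : ∀ l, Measurable (X l)
  symm : ∀ l m, K l m = K m l
  diag : ∀ l, K l l = (D : ℝ) / (D - 1)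
  step : ∀ i l m, m.length ≤ l.length + 1 → m ≠ i :: l → K (i :: l) m = K l m / D

noncomputable abbrev gam (D : ℕ) : Measure ℝ := gaussianReal 0 (Real.toNNReal (((D : ℝ) + 1) / D))
noncomputable abbrev gam0 (D : ℕ) : Measure ℝ := gaussianReal 0 (Real.toNNReal ((D : ℝ) / (D - 1)))

section
variable {Ω : Type*} [MeasurableSpace Ω] {D : ℕ} {P : Measure Ω}
  {X : List (Fin D) → Ω → ℝ} {K : List (Fin D) → List (Fin D) → ℝ}

lemma TreeField.prob (T : TreeField D P X K) : IsProbabilityMeasure P :=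
  (T.gv (fun _ : Unit => [])).prob

lemma TreeField.mem (T : TreeField D P X K) (l) : MemLp (X l) 2 P :=
  (T.gv (fun _ : Unit => l)).memLp ()

lemma TreeField.mean (T : TreeField D P X K) (l) : ∫ ω, X l ω ∂P = 0 :=
  (T.gv (fun _ : Unit => l)).mean ()

lemma TreeField.cov (T : TreeField D P X K) (l m) : covariance (X l) (X m) P = K l m :=
  (T.gv (fun b : Bool => if b then l else m)).cov true false

lemma TreeField.law0 (T : TreeField D P X K) (l) : P.map (X l) = gam0 D := by
  have h := ((T.gv (fun _ : Unit => l)).law.eval ()).map_eq_gaussianReal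
  rw [T.mean, ← covariance_self (T.meas l).aemeasurable, T.cov, T.diag] at h
  exact h

noncomputable def Yf (X : List (Fin D) → Ω → ℝ) (m : List (Fin D)) (ω : Ω) : ℝ := X m ω - (D : ℝ)⁻¹ * X m.tail ω

lemma TreeField.cov_XY (T : TreeField D P X K) {l : List (Fin D)} {i : Fin D} {p : List (Fin D)}
    (h : l.length ≤ p.length + 1) (hne : l ≠ i :: p) : covariance (X l) (Yf X (i :: p)) P = 0 := by
  have := T.prob
  have e : covariance (X l) (Yf X (i :: p)) P
      = covariance (X l) (fun ω => X (i :: p) ω - (D : ℝ)⁻¹ * X p ω) P := rfl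
  rw [e, covariance_fun_sub_right (T.mem _) (T.mem _) ((T.mem _).const_mul _),
    covariance_const_mul_right, T.cov, T.cov, T.symm l, T.step i p l h hne, T.symm p]
  ring

lemma TreeField.cov_YY (T : TreeField D P X K) {j i : Fin D} {q p : List (Fin D)}
    (h : q.length = p.length) (hne : j :: q ≠ i :: p) :
    covariance (Yf X (j :: q)) (Yf X (i :: p)) P = 0 := by
  have := T.prob
  have e : covariance (Yf X (j :: q)) (Yf X (i :: p)) P
      = covariance (fun ω => X (j :: q) ω - (D : ℝ)⁻¹ * X q ω) (Yf X (i :: p)) P := rfl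
  have hm : MemLp (Yf X (i :: p)) 2 P := (T.mem _).sub ((T.mem _).const_mul _)
  rw [e, covariance_fun_sub_left (T.mem _) ((T.mem _).const_mul _) hm,
    covariance_const_mul_left, T.cov_XY (by simp [h]) hne, T.cov_XY (by omega)
      (fun e => by have := congrArg List.length e; simp at this; omega)]
  ring

lemma TreeField.var_Y (hD : 2 ≤ D) (T : TreeField D P X K) (i : Fin D) (p : List (Fin D)) :
    covariance (Yf X (i :: p)) (Yf X (i :: p)) P = ((D : ℝ) + 1) / D := by
  have := T.prob
  have e : covariance (Yf X (i :: p)) (Yf X (i :: p)) P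
      = covariance (fun ω => X (i :: p) ω - (D : ℝ)⁻¹ * X p ω) (Yf X (i :: p)) P := rfl
  have hm : MemLp (Yf X (i :: p)) 2 P := (T.mem _).sub ((T.mem _).const_mul _)
  rw [e, covariance_fun_sub_left (T.mem _) ((T.mem _).const_mul _) hm, covariance_const_mul_left,
    T.cov_XY (l := p) (by omega) (fun e => by have := congrArg List.length e; simp at this)]
  have e2 : covariance (X (i :: p)) (Yf X (i :: p)) P
      = covariance (X (i :: p)) (fun ω => X (i :: p) ω - (D : ℝ)⁻¹ * X p ω) P := rfl
  rw [e2, covariance_fun_sub_right (T.mem _) (T.mem _) ((T.mem _).const_mul _),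
    covariance_const_mul_right, T.cov, T.cov, T.step i p p (by omega)
      (fun e => by have := congrArg List.length e; simp at this), T.diag, T.diag]
  have h2 : (2 : ℝ) ≤ D := by exact_mod_cast hD
  have : (D : ℝ) - 1 ≠ 0 := by linarith
  have : (D : ℝ) ≠ 0 := by linarith
  field_simp
  ring

lemma TreeField.joint (T : TreeField D P X K) (k : ℕ) :
    HasGaussianLaw (fun ω => ((fun l : WL D k => X l ω), (fun m : words D (k + 1) => Yf X m ω))) P := by
  have h := (T.gv (ι := WL D k ⊕ (words D (k + 1) ⊕ words D (k + 1)))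
    (Sum.elim (fun l => l.1) (Sum.elim (fun m => m.1) (fun m => m.1.tail)))).law
  let pr : (WL D k ⊕ (words D (k + 1) ⊕ words D (k + 1))) →
      ((WL D k ⊕ (words D (k + 1) ⊕ words D (k + 1))) → ℝ) →L[ℝ] ℝ :=
    fun i => ContinuousLinearMap.proj (R := ℝ) (φ := fun _ => ℝ) i
  exact h.map_fun ((ContinuousLinearMap.pi fun l : WL D k => pr (Sum.inl l)).prod
    (ContinuousLinearMap.pi fun m : words D (k + 1) =>
      pr (Sum.inr (Sum.inl m)) - (D : ℝ)⁻¹ • pr (Sum.inr (Sum.inr m))))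

lemma words_cons {k : ℕ} (m : words D (k + 1)) : ∃ i p, (m : List (Fin D)) = i :: p ∧ p.length = k := by
  obtain ⟨m, hm⟩ := m
  rw [mem_words] at hm
  rcases m with _ | ⟨i, p⟩
  · simp at hm
  · exact ⟨i, p, rfl, by simpa using hm⟩

lemma TreeField.meas_Y (T : TreeField D P X K) (m : List (Fin D)) : Measurable (Yf X m) :=
  (T.meas _).sub ((T.meas _).const_mul _)

lemma TreeField.law (hD : 2 ≤ D) (T : TreeField D P X K) (k : ℕ) :
    P.map (fun ω => ((fun l : WL D k => X l ω), (fun m : words D (k + 1) => Yf X m ω))) =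
      (P.map (fun ω => (fun l : WL D k => X l ω))).prod
        (Measure.pi fun _ : words D (k + 1) => gam D) := by
  have := T.prob
  have hj := T.joint k
  have hind : IndepFun (fun ω => (fun l : WL D k => X l ω))
      (fun ω => (fun m : words D (k + 1) => Yf X m ω)) P := by
    refine hj.indepFun_of_covariance_eval fun l m => ?_
    obtain ⟨i, p, hm, hp⟩ := words_cons m
    have hl := mem_WL.1 l.2
    rw [hm]
    exact T.cov_XY (by omega) fun e => by
      have := congrArg List.length e; simp at this; omega
  have hY := hj.snd
  have hind2 : iIndepFun (fun m : words D (k + 1) => Yf X m) P := by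
    refine hY.iIndepFun_of_covariance_eq_zero fun m m' hne => ?_
    obtain ⟨i, p, hm, hp⟩ := words_cons m
    obtain ⟨i', p', hm', hp'⟩ := words_cons m'
    rw [hm, hm']
    refine T.cov_YY (by omega) fun e => hne (Subtype.ext ?_)
    rw [hm, hm', e]
  rw [(indepFun_iff_map_prod_eq_prod_map_map
    (measurable_pi_lambda _ fun l => T.meas _).aemeasurable
    (measurable_pi_lambda _ fun l => T.meas_Y _).aemeasurable).1 hind,
    (iIndepFun_iff_map_fun_eq_pi_map fun m => (T.meas_Y _).aemeasurable).1 hind2]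
  congr 2
  funext m
  obtain ⟨i, p, hm, hp⟩ := words_cons m
  have hg : HasGaussianLaw (Yf X m) P := hY.eval m
  rw [hg.map_eq_gaussianReal, ← covariance_self (T.meas_Y _).aemeasurable, hm, T.var_Y hD]
  congr 1
  have e : ∫ ω, Yf X (i :: p) ω ∂P = ∫ ω, (X (i :: p) ω - (D : ℝ)⁻¹ * X p ω) ∂P := rfl
  rw [e, integral_sub ((T.mem _).integrable (by norm_num))
    (((T.mem _).integrable (by norm_num)).const_mul _), integral_const_mul, T.mean, T.mean]
  simp

lemma meas_alive (h : ℝ) (l : List (Fin D)) : MeasurableSet {η : List (Fin D) → ℝ | alive h η l} := by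
  induction l with
  | nil => exact measurableSet_le measurable_const (measurable_pi_apply _)
  | cons i l ih => exact (measurableSet_le measurable_const (measurable_pi_apply _)).inter ih

/-- extension by zero -/
noncomputable def ext {r : ℕ} (u : WL D r → ℝ) (l : List (Fin D)) : ℝ :=
  if h : l ∈ WL D r then u ⟨l, h⟩ else 0

lemma meas_ext {r : ℕ} : Measurable (ext : (WL D r → ℝ) → List (Fin D) → ℝ) := by
  refine measurable_pi_lambda _ fun l => ?_
  unfold ext
  split_ifs with h
  · exact measurable_pi_apply _
  · exact measurable_const

lemma ext_of_le {r : ℕ} {η : List (Fin D) → ℝ} {l : List (Fin D)} (h : l.length ≤ r) :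
    ext (fun l : WL D r => η l) l = η l := by
  unfold ext; rw [dif_pos (mem_WL.2 h)]

lemma alive_ext {r : ℕ} {a : ℝ} {η : List (Fin D) → ℝ} {l : List (Fin D)} (h : l.length ≤ r) :
    alive a (ext (fun l : WL D r => η l)) l ↔ alive a η l :=
  alive_congr fun m hm => ext_of_le (by omega)

lemma branch (hD : 2 ≤ D) (T : TreeField D P X K) (k : ℕ) {ψ : ℝ → ℝ} (hψ : Nice ψ) {h : ℝ}
    (hψ0 : ∀ a < h, ψ a = 0) :
    ∫ ω, ∏ m ∈ words D (k + 1), (1 - if alive h (fun l => X l ω) m then ψ (X m ω) else 0) ∂P =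
    ∫ ω, ∏ l ∈ words D k, (1 - if alive h (fun l => X l ω) l then Th (gam D) D h ψ (X l ω) else 0) ∂P := by
  have := T.prob
  let F : (WL D k → ℝ) × (words D (k + 1) → ℝ) → ℝ := fun uw =>
    ∏ m : words D (k + 1), (1 - if alive h (ext uw.1) m.1.tail then
      ψ (ext uw.1 m.1.tail / D + uw.2 m) else 0)
  have mF : Measurable F := by
    refine Finset.measurable_prod _ fun m _ => measurable_const.sub ?_
    refine Measurable.ite ?_ (hψ.mono.measurable.comp ?_) measurable_const
    · exact (meas_ext.comp measurable_fst) (meas_alive h m.1.tail)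
    · exact ((((measurable_pi_apply _).comp meas_ext).comp measurable_fst).div_const _).add
        ((measurable_pi_apply m).comp measurable_snd)
  have bF : ∀ uw, ‖F uw‖ ≤ 1 := fun uw => by
    have : ∀ m : words D (k + 1), 0 ≤ (1 - if alive h (ext uw.1) m.1.tail then
      ψ (ext uw.1 m.1.tail / D + uw.2 m) else 0) ∧ (1 - if alive h (ext uw.1) m.1.tail then
      ψ (ext uw.1 m.1.tail / D + uw.2 m) else 0) ≤ 1 := fun m => by
      split_ifs
      · have := hψ.nonneg (ext uw.1 m.1.tail / D + uw.2 m)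
        have := hψ.le_one (ext uw.1 m.1.tail / D + uw.2 m)
        constructor <;> linarith
      · simp
    rw [Real.norm_of_nonneg (Finset.prod_nonneg fun m _ => (this m).1)]
    exact Finset.prod_le_one (fun m _ => (this m).1) (fun m _ => (this m).2)
  have e1 : ∀ ω, ∏ m ∈ words D (k + 1), (1 - if alive h (fun l => X l ω) m then ψ (X m ω) else 0)
      = F (fun l => X l ω, fun m => Yf X m ω) := fun ω => by
    rw [← Finset.prod_coe_sort]
    refine Finset.prod_congr rfl fun m _ => ?_
    obtain ⟨i, p, hm, hp⟩ := words_cons m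
    simp only [hm, List.tail_cons]
    rw [alive_ext hp.le (η := fun l => X l ω), ext_of_le hp.le (η := fun l => X l ω)]
    have : X p ω / D + Yf X (i :: p) ω = X (i :: p) ω := by
      simp only [Yf, List.tail_cons]; ring
    rw [this]
    simp only [alive]
    by_cases ha : h ≤ X (i :: p) ω
    · simp [ha]
    · simp [ha, hψ0 _ (lt_of_not_ge ha)]
  simp_rw [e1]
  have mU : Measurable (fun ω => ((fun l : WL D k => X l ω))) := measurable_pi_lambda _ fun l => T.meas _
  have mUW : Measurable (fun ω => ((fun l : WL D k => X l ω), (fun m : words D (k + 1) => Yf X m ω))) :=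
    mU.prodMk (measurable_pi_lambda _ fun m => T.meas_Y _)
  have : IsProbabilityMeasure (P.map (fun ω => (fun l : WL D k => X l ω))) :=
    Measure.isProbabilityMeasure_map mU.aemeasurable
  rw [← integral_map (φ := fun ω => ((fun l : WL D k => X l ω), (fun m : words D (k + 1) => Yf X m ω)))
    mUW.aemeasurable mF.aestronglyMeasurable, T.law hD, integral_prod _
      (Integrable.of_bound mF.aestronglyMeasurable 1 (Eventually.of_forall bF))]
  have e2 : ∀ u : WL D k → ℝ, ∫ w, F (u, w) ∂(Measure.pi fun _ : words D (k + 1) => gam D) =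
      ∏ l ∈ words D k, (1 - if alive h (ext u) l then Th (gam D) D h ψ (ext u l) else 0) := fun u => by
    have := integral_fintype_prod_eq_prod (μ := fun _ : words D (k + 1) => gam D)
      (fun m x => 1 - if alive h (ext u) m.1.tail then ψ (ext u m.1.tail / D + x) else 0)
    simp only [F]
    rw [this]
    rw [Finset.prod_coe_sort (words D (k + 1)) (fun m => ∫ x, (1 - if alive h (ext u) m.tail then
      ψ (ext u m.tail / D + x) else 0) ∂(gam D)), prod_words_succ]
    refine Finset.prod_congr rfl fun l _ => ?_
    show ∏ i : Fin D, ∫ x, (1 - if alive h (ext u) l then ψ (ext u l / D + x) else 0) ∂gam D = _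
    rw [Finset.prod_const, Finset.card_univ, Fintype.card_fin]
    split_ifs with ha
    · rw [integral_sub (integrable_const _) (integrable_shift hψ.mono.measurable hψ.abs _),
        Th_pos ψ ha.val]
      simp [FF, Av]
    · simp
  simp_rw [e2]
  rw [integral_map mU.aemeasurable]
  · refine integral_congr_ae (Eventually.of_forall fun ω => ?_)
    refine Finset.prod_congr rfl fun l hl => ?_
    have hl := (mem_words.1 hl).le
    rw [alive_ext hl (η := fun l => X l ω), ext_of_le hl (η := fun l => X l ω)]
  · refine Measurable.aestronglyMeasurable ?_
    refine Finset.measurable_prod _ fun m _ => measurable_const.sub ?_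
    have mm : Measurable fun u : WL D k → ℝ => ext u m := (measurable_pi_apply m).comp meas_ext
    exact Measurable.ite (meas_ext (meas_alive h m)) ((hψ.Th h).mono.measurable.comp mm) measurable_const

lemma branch_iter (hD : 2 ≤ D) (T : TreeField D P X K) (n : ℕ) {ψ : ℝ → ℝ} (hψ : Nice ψ) {h : ℝ}
    (hψ0 : ∀ a < h, ψ a = 0) :
    ∫ a, (Th (gam D) D h)^[n] ψ a ∂(gam0 D) =
    1 - ∫ ω, ∏ m ∈ words D n, (1 - if alive h (fun l => X l ω) m then ψ (X m ω) else 0) ∂P := by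
  have := T.prob
  induction n generalizing ψ with
  | zero =>
    simp only [Function.iterate_zero, id, words, Finset.prod_singleton]
    have mi : Integrable (fun ω => ψ (X [] ω)) P := Integrable.of_bound
      (hψ.mono.measurable.comp (T.meas [])).aestronglyMeasurable 1
      (Eventually.of_forall fun ω => hψ.abs _)
    have : ∀ ω, (if alive h (fun l => X l ω) [] then ψ (X [] ω) else 0) = ψ (X [] ω) := fun ω => by
      split_ifs with ha
      · rfl
      · rw [hψ0 _ (lt_of_not_ge ha)]
    simp_rw [this]
    rw [integral_sub (integrable_const _) mi, ← T.law0 [], integral_map (T.meas _).aemeasurable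
      hψ.mono.measurable.aestronglyMeasurable]
    simp
  | succ n ih =>
    rw [Function.iterate_succ, Function.comp_apply, ih (hψ.Th h) (fun a ha => Th_neg ψ (not_le.2 ha)),
      branch hD T n hψ hψ0]

lemma prod_alive (h θ : ℝ) (n : ℕ) (η : List (Fin D) → ℝ) :
    ∏ m ∈ words D n, (1 - if alive h η m then st h θ (η m) else 0) = (1 - θ) ^ Z n h η := by
  rw [Z, ← Finset.prod_const, Finset.prod_filter]
  refine Finset.prod_congr rfl fun m _ => ?_
  split_ifs with ha
  · rw [st, if_pos ha.val]
  · simp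

lemma meas_Z (k : ℕ) (h : ℝ) : Measurable (fun η : List (Fin D) → ℝ => (Z k h η : ℝ)) := by
  have : (fun η : List (Fin D) → ℝ => (Z k h η : ℝ)) =
      fun η => ∑ m ∈ words D k, if alive h η m then (1 : ℝ) else 0 := by
    funext η; simp [Z]
  rw [this]
  exact Finset.measurable_sum _ fun m _ =>
    Measurable.ite (meas_alive h m) measurable_const measurable_const

theorem tree_growth (hD : 2 ≤ D) (T : TreeField D P X K) {h η η' : ℝ} (hη0 : 0 < η) (hη' : η' < η)
    (hη : ∀ n, η ≤ P.real {ω | 1 ≤ Z n h (fun l => X l ω)}) :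
    ∃ h1 > h, ∃ (j n0 : ℕ) (δ : ℝ), 1 ≤ j ∧ 0 < δ ∧
      ∀ i : ℕ, η' ≤ P.real {ω | δ * (3 / 2) ^ i ≤ (Z (n0 + j * i) h1 (fun l => X l ω) : ℝ)} := by
  have := T.prob
  have h2 : (2 : ℝ) ≤ D := by exact_mod_cast hD
  have mX : Measurable (fun ω => fun l => X l ω) := measurable_pi_lambda _ fun l => T.meas l
  have mZ : ∀ k a, Measurable (fun ω => (Z k a (fun l => X l ω) : ℝ)) := fun k a => (meas_Z k a).comp mX
  have v1 : Real.toNNReal (((D : ℝ) + 1) / D) ≠ 0 := by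
    rw [Ne, Real.toNNReal_eq_zero, not_le]; positivity
  have v0 : Real.toNNReal ((D : ℝ) / (D - 1)) ≠ 0 := by
    rw [Ne, Real.toNNReal_eq_zero, not_le]
    exact div_pos (by linarith) (by linarith)
  have := nullSingletonClass_gaussianReal (μ := 0) v1
  have := nullSingletonClass_gaussianReal (μ := 0) v0
  have hγ : ∀ K : ℝ, 0 < gam D (Ici K) := fun K => by
    rw [pos_iff_ne_zero]
    intro h0
    have := gaussianReal_absolutelyContinuous' 0 v1 h0
    simp at this
  obtain ⟨h1, hh1, j, n0, θ0, hj, hθ0, hθ1, H⟩ := growth hD hγ (gam0 D) h η ((η + η') / 2) hη0 (by linarith) (by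
    intro n
    rw [branch_iter hD T n (st_nice zero_le_one le_rfl) (fun a ha => if_neg (not_le.2 ha))]
    simp_rw [prod_alive]
    have e : (fun ω => ((1 : ℝ) - 1) ^ Z n h (fun l => X l ω)) =
        fun ω => 1 - Set.indicator {ω | 1 ≤ Z n h (fun l => X l ω)} (fun _ => (1 : ℝ)) ω := by
      funext ω
      by_cases hz : 1 ≤ Z n h (fun l => X l ω)
      · rw [Set.indicator_of_mem (by exact hz), sub_self, zero_pow (by omega)]
      · rw [Set.indicator_of_notMem (by exact hz), (by omega : Z n h (fun l => X l ω) = 0)]; simp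
    have ms : MeasurableSet {ω | 1 ≤ Z n h (fun l => X l ω)} := by
      have := measurableSet_le (measurable_const (a := (1 : ℝ))) (mZ n h)
      simpa using this
    rw [e, integral_sub (integrable_const _) ((integrable_const _).indicator ms),
      integral_indicator_const _ ms]
    simpa using hη n)
  have hsub : 0 < η - η' := by linarith
  refine ⟨h1, hh1, j, n0, (η - η') / 2 / θ0, hj, by positivity, fun i => ?_⟩
  have Hi := H i
  have hp1 : (0 : ℝ) < (2 / 3) ^ i := by positivity
  have hp2 : ((2 : ℝ) / 3) ^ i ≤ 1 := pow_le_one₀ (by norm_num) (by norm_num)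
  have ht0 : 0 ≤ θ0 * (2 / 3) ^ i := by positivity
  have ht1 : θ0 * (2 / 3) ^ i ≤ 1 := by nlinarith
  rw [branch_iter hD T _ (st_nice ht0 ht1) (fun a ha => if_neg (not_le.2 ha))] at Hi
  simp_rw [prod_alive] at Hi
  set θ := θ0 * (2 / 3) ^ i with hθ
  set M := (η - η') / 2 / θ0 * (3 / 2) ^ i with hM
  have hθM : θ * M = (η - η') / 2 := by
    rw [hθ, hM]
    have : ((2 : ℝ) / 3) ^ i * (3 / 2) ^ i = 1 := by rw [← mul_pow]; norm_num
    have e3 : θ0 * ((η - η') / 2 / θ0) = (η - η') / 2 := by field_simp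
    linear_combination (((2 : ℝ) / 3) ^ i * (3 / 2) ^ i) * e3 + (η - η') / 2 * this
  set n := n0 + j * i
  have ms : MeasurableSet {ω | M ≤ (Z n h1 (fun l => X l ω) : ℝ)} :=
    measurableSet_le measurable_const (mZ n h1)
  have hle : ∫ ω, (1 - θ * M - Set.indicator {ω | M ≤ (Z n h1 (fun l => X l ω) : ℝ)} (fun _ => (1 : ℝ)) ω) ∂P
      ≤ ∫ ω, (1 - θ) ^ Z n h1 (fun l => X l ω) ∂P := by
    refine integral_mono ((integrable_const _).sub ((integrable_const _).indicator ms)) ?_ fun ω => ?_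
    · refine Integrable.of_bound (C := 1) ?_ (Eventually.of_forall fun ω => ?_)
      · refine Measurable.aestronglyMeasurable ?_
        have : (fun ω => (1 - θ) ^ Z n h1 (fun l => X l ω)) =
            fun ω => ∏ m ∈ words D n, (1 - if alive h1 (fun l => X l ω) m then st h1 θ (X m ω) else 0) :=
          funext fun ω => (prod_alive h1 θ n (fun l => X l ω)).symm
        rw [this]
        refine Finset.measurable_prod _ fun m _ => measurable_const.sub ?_
        exact Measurable.ite (mX (meas_alive h1 m))
          ((st_mono h1 θ ht0).measurable.comp (T.meas m)) measurable_const
      · rw [Real.norm_of_nonneg (pow_nonneg (by linarith) _)]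
        exact pow_le_one₀ (by linarith) (by linarith)
    · have hpos : 0 ≤ (1 - θ) ^ Z n h1 (fun l => X l ω) := pow_nonneg (by linarith) _
      have hθM0 : 0 ≤ θ * M := by rw [hθM]; linarith
      by_cases hz : M ≤ (Z n h1 (fun l => X l ω) : ℝ)
      · show 1 - θ * M - _ ≤ _
        rw [Set.indicator_of_mem (by exact hz)]; linarith
      · show 1 - θ * M - _ ≤ _
        rw [Set.indicator_of_notMem (by exact hz)]
        have b := one_add_mul_le_pow (a := -θ) (by linarith) (Z n h1 (fun l => X l ω))
        have : (1 + -θ) = 1 - θ := by ring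
        rw [this] at b
        have : θ * (Z n h1 (fun l => X l ω) : ℝ) ≤ θ * M := mul_le_mul_of_nonneg_left (not_le.1 hz).le ht0
        linarith
  rw [integral_sub (integrable_const _) ((integrable_const _).indicator ms),
      integral_indicator_const _ ms] at hle
  simp at hle
  linarith

end

end SMC

namespace SMC

/-! ### Part 5: the tree field -/

lemma treeGreen_eq {T : Type*} (Gt : SimpleGraph T) (D : ℕ) (x y : T) :
    GFF.treeGreen Gt (D + 1) x y = (D : ℝ) / (D - 1) * ((D : ℝ)⁻¹) ^ (Gt.dist x y) := by
  have h1 : ((D + 1 : ℕ) : ℝ) - 1 = D := by push_cast; ring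
  have h2 : ((D + 1 : ℕ) : ℝ) - 2 = D - 1 := by push_cast; ring
  rw [GFF.treeGreen, h1, h2]

theorem tree_part {T : Type} {D : ℕ} (hD : 2 ≤ D) {Gt : SimpleGraph T} {o obar : T}
    (hob : Gt.Adj o obar) (ht : GFF.IsRegTree Gt (D + 1)) {μT : Measure (T → ℝ)}
    (hμ : GFF.IsGaussianField μT (GFF.treeGreen Gt (D + 1))) :
    ∃ w : List (Fin D) → T, Code Gt w ∧
      TreeField D μT (fun l ω => ω (w l)) (fun l m => GFF.treeGreen Gt (D + 1) (w l) (w m)) ∧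
      ∀ h n, GFF.etaPlus Gt o obar μT h ≤ μT.real {ω | 1 ≤ Z n h (fun l => ω (w l))} := by
  obtain ⟨hc, hac, hreg⟩ := ht
  obtain ⟨w, hw, hw0, h1, h2⟩ := exists_code hreg hob
  have hD1 : (2 : ℝ) ≤ D := by exact_mod_cast hD
  have hpos : ∀ x y, 0 ≤ GFF.treeGreen Gt (D + 1) x y := fun x y => by
    rw [treeGreen_eq]
    have : (0 : ℝ) ≤ D / (D - 1) := div_nonneg (by linarith) (by linarith)
    positivity
  have hsymm : ∀ x y, GFF.treeGreen Gt (D + 1) x y = GFF.treeGreen Gt (D + 1) y x := fun x y => by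
    rw [treeGreen_eq, treeGreen_eq, SimpleGraph.dist_comm]
  have hP := hμ.1
  refine ⟨w, hw, ⟨fun e => gf_GV hμ hsymm (fun i => hpos i i) (fun i j => ?_) (fun i => w (e i)),
    fun l => measurable_pi_apply _, fun l m => hsymm _ _, fun l => ?_, fun i l m hl hm => ?_⟩, fun h n => ?_⟩
  · have := hpos i i
    have := hpos j j
    have := hpos i j
    linarith
  · rw [treeGreen_eq, SimpleGraph.dist_self]; simp
  · rw [treeGreen_eq, treeGreen_eq, Code.step hc hw (UP_univ hac) (r := l.length + 1)
      (fun _ _ => mem_univ _) (l.length + m.length) i l m le_rfl hl le_rfl hm, pow_succ]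
    ring
  · rw [GFF.etaPlus, ← measureReal_def]
    refine measureReal_mono ?_ (measure_ne_top _ _)
    intro ω hω
    obtain ⟨l, hl, ha⟩ := Code.cover hc hac hob hw hw0 h1 h2 hω n
    exact Finset.card_pos.2 ⟨l, Finset.mem_filter.2 ⟨mem_words.2 hl, ha⟩⟩

end SMC

namespace SMC

/-! ### Part 6: spectral representation of the zero-average Green function -/

section
variable {V : Type} [Fintype V] {G : SimpleGraph V} {d : ℕ}

lemma deg_sum (hreg : GFF.IsReg G d) (x : V) : ∑ y, (if G.Adj x y then (1 : ℝ) else 0) = d := by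
  rw [Finset.sum_boole]
  congr 1
  rw [← hreg x, Nat.card_eq_fintype_card, Fintype.card_subtype]
  rfl

lemma exists_eig (G : SimpleGraph V) (d : ℕ) : ∃ (b : V → V → ℝ) (μ : V → ℝ),
    (∀ x y, ∑ i, b i x * b i y = if x = y then 1 else 0) ∧
    (∀ i, ∑ x, b i x * b i x = 1) ∧
    (∀ i, Matrix.mulVec ((1 : Matrix V V ℝ) - GFF.transP G d) (b i) = μ i • b i) := by
  have hA : ((1 : Matrix V V ℝ) - GFF.transP G d).IsHermitian := by
    refine Matrix.IsHermitian.sub Matrix.isHermitian_one ?_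
    ext x y
    simp [GFF.transP, G.adj_comm]
  refine ⟨fun i => hA.eigenvectorBasis i, hA.eigenvalues, fun x y => ?_, fun i => ?_,
    fun i => hA.mulVec_eigenvectorBasis i⟩
  · have := congrFun (congrFun (Unitary.coe_mul_star_self hA.eigenvectorUnitary) x) y
    rw [Matrix.mul_apply] at this
    simpa [Matrix.star_apply, Matrix.one_apply] using this
  · have := congrFun (congrFun (Unitary.coe_star_mul_self hA.eigenvectorUnitary) i) i
    rw [Matrix.mul_apply] at this
    simpa [Matrix.star_apply] using this

lemma harm_const (hd : 0 < d) (hc : G.Connected) (hreg : GFF.IsReg G d) {f : V → ℝ}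
    (hf : Matrix.mulVec ((1 : Matrix V V ℝ) - GFF.transP G d) f = 0) (x y : V) : f x = f y := by
  have h0 : Matrix.mulVec (G.lapMatrix ℝ) f = 0 := by
    funext x
    have h1 := congrFun hf x
    have hd' : (d : ℝ) ≠ 0 := by positivity
    have hdeg : (G.degree x : ℝ) = d := by
      rw [SimpleGraph.degree_eq_sum_if_adj, deg_sum hreg]
    rw [SimpleGraph.lapMatrix_mulVec_apply, hdeg]
    simp only [Matrix.sub_mulVec, Matrix.one_mulVec, Pi.sub_apply, Pi.zero_apply] at h1
    have h2 : Matrix.mulVec (GFF.transP G d) f x = (d : ℝ)⁻¹ * ∑ u ∈ G.neighborFinset x, f u := by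
      simp only [Matrix.mulVec, dotProduct, GFF.transP, Matrix.of_apply, Finset.mul_sum]
      rw [← Finset.sum_filter_add_sum_filter_not Finset.univ (fun y => G.Adj x y)]
      rw [Finset.sum_eq_zero (s := Finset.univ.filter fun y => ¬ G.Adj x y), add_zero]
      · refine Finset.sum_congr (by ext; simp) fun y hy => ?_
        rw [if_pos (by simpa using hy)]
      · intro y hy
        rw [if_neg (by simpa using hy), zero_mul]
    rw [h2] at h1
    field_simp at h1
    rw [Pi.zero_apply]
    linarith
  exact SimpleGraph.lapMatrix_mulVec_eq_zero_iff_forall_reachable G |>.1 h0 x y (hc.preconnected x y)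

lemma A_apply (f : V → ℝ) (x : V) :
    Matrix.mulVec ((1 : Matrix V V ℝ) - GFF.transP G d) f x
      = f x - (∑ y, if G.Adj x y then f y else 0) / d := by
  rw [Matrix.sub_mulVec, Matrix.one_mulVec, Pi.sub_apply, Finset.sum_div]
  congr 1
  refine Finset.sum_congr rfl fun y _ => ?_
  show (if G.Adj x y then ((d : ℝ))⁻¹ else 0) * f y = _
  split_ifs <;> simp [div_eq_inv_mul]

lemma A_one (hd : 0 < d) (hreg : GFF.IsReg G d) :
    Matrix.mulVec ((1 : Matrix V V ℝ) - GFF.transP G d) (fun _ => 1) = 0 := by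
  funext x
  have hd' : (d : ℝ) ≠ 0 := by positivity
  rw [A_apply, deg_sum hreg, div_self hd', sub_self, Pi.zero_apply]

lemma A_symm (f g : V → ℝ) : ∑ x, f x * Matrix.mulVec ((1 : Matrix V V ℝ) - GFF.transP G d) g x =
    ∑ x, Matrix.mulVec ((1 : Matrix V V ℝ) - GFF.transP G d) f x * g x := by
  simp only [Matrix.mulVec, dotProduct, Finset.mul_sum, Finset.sum_mul]
  rw [Finset.sum_comm]
  refine Finset.sum_congr rfl fun x _ => Finset.sum_congr rfl fun y _ => ?_
  have : ((1 : Matrix V V ℝ) - GFF.transP G d) y x = ((1 : Matrix V V ℝ) - GFF.transP G d) x y := by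
    simp [GFF.transP, Matrix.one_apply, G.adj_comm, eq_comm]
  rw [this]; ring

structure Spec (G : SimpleGraph V) (d : ℕ) (β : ℝ) (Nn : ℕ) (b : V → V → ℝ) (μ : V → ℝ) : Prop where
  compl : ∀ x y, ∑ i, b i x * b i y = if x = y then 1 else 0
  eig : ∀ i, Matrix.mulVec ((1 : Matrix V V ℝ) - GFF.transP G d) (b i) = μ i • b i
  gap : ∀ i, μ i ≠ 0 → β ≤ μ i
  zero : ∀ x y, ∑ i with μ i = 0, b i x * b i y = 1 / (Nn : ℝ)

lemma exists_spec (hd : 0 < d) (hc : G.Connected) (hreg : GFF.IsReg G d) {β : ℝ}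
    (hgap : GFF.SpectralGapLB G d β) {Nn : ℕ} (hN : Nat.card V = Nn) : ∃ b μ, Spec G d β Nn b μ := by
  obtain ⟨b, μ, h1, h2, h3⟩ := exists_eig G d
  refine ⟨b, μ, h1, h3, fun i hi => ?_, fun x y => ?_⟩
  · refine (hgap (b i) (μ i) (h3 i) fun h0 => ?_).resolve_left hi
    have := h2 i
    rw [h0] at this
    simp at this
  · have hconst : ∀ y', ∑ i with μ i = 0, b i x * b i y' = ∑ i with μ i = 0, b i x * b i y := fun y' =>
      Finset.sum_congr rfl fun i hi => by
        have hi : μ i = 0 := by simpa using hi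
        rw [harm_const hd hc hreg (f := b i) (by rw [h3, hi, zero_smul]) y' y]
    have hs : ∑ y', ∑ i with μ i = 0, b i x * b i y' = 1 := by
      have : ∑ y', ∑ i, b i x * b i y' = 1 := by simp [h1]
      rw [← this, Finset.sum_comm, Finset.sum_comm (γ := V) (s := Finset.univ (α := V)) (t := Finset.univ),
        Finset.sum_filter]
      refine Finset.sum_congr rfl fun i _ => ?_
      split_ifs with hi
      · rfl
      · have := A_symm (G := G) (d := d) (b i) (fun _ => 1)
        rw [A_one hd hreg, h3] at this
        simp only [Pi.zero_apply, mul_zero, Finset.sum_const_zero, Pi.smul_apply, smul_eq_mul, mul_one,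
          ← Finset.mul_sum] at this
        rw [← Finset.mul_sum, (mul_eq_zero.1 this.symm).resolve_left hi, mul_zero]
    rw [Finset.sum_congr rfl fun y' _ => hconst y', Finset.sum_const, Finset.card_univ,
      ← Nat.card_eq_fintype_card, hN, nsmul_eq_mul] at hs
    have : (Nn : ℝ) ≠ 0 := fun h0 => by rw [h0, zero_mul] at hs; exact zero_ne_one hs
    rw [eq_div_iff this, mul_comm]
    exact hs

variable {β : ℝ} {Nn : ℕ} {b : V → V → ℝ} {μ : V → ℝ}

lemma Spec.pow (S : Spec G d β Nn b μ) (k : ℕ) (x y : V) :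
    ((GFF.transP G d) ^ k) x y = ∑ i, (1 - μ i) ^ k * (b i x * b i y) := by
  have hP : ∀ i, Matrix.mulVec (GFF.transP G d) (b i) = (1 - μ i) • b i := fun i => by
    have := S.eig i
    rw [Matrix.sub_mulVec, Matrix.one_mulVec] at this
    rw [sub_smul, one_smul, ← this]; abel
  have hk : ∀ i, Matrix.mulVec (GFF.transP G d ^ k) (b i) = (1 - μ i) ^ k • b i := fun i => by
    induction k with
    | zero => simp
    | succ k ih => rw [_root_.pow_succ, ← Matrix.mulVec_mulVec, hP, Matrix.mulVec_smul, ih, smul_smul, _root_.pow_succ,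
        mul_comm]
  have e : ∀ i, (1 - μ i) ^ k * (b i x * b i y) = ∑ z, (GFF.transP G d ^ k) x z * (b i z * b i y) := fun i => by
    have := congrFun (hk i) x
    simp only [Matrix.mulVec, dotProduct, Pi.smul_apply, smul_eq_mul] at this
    rw [← mul_assoc, ← this, Finset.sum_mul]
    exact Finset.sum_congr rfl fun _ _ => by ring
  simp_rw [e]
  rw [Finset.sum_comm]
  simp_rw [← Finset.mul_sum, S.compl]
  simp

lemma Spec.heat (S : Spec G d β Nn b μ) (t : ℝ) (x y : V) :
    GFF.heatK G d t x y = ∑ i, Real.exp (-μ i * t) * (b i x * b i y) := by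
  unfold GFF.heatK
  refine HasSum.tsum_eq ?_
  have : ∀ i, HasSum (fun k : ℕ => Real.exp (-t) * t ^ k / (Nat.factorial k) * ((1 - μ i) ^ k * (b i x * b i y)))
      (Real.exp (-μ i * t) * (b i x * b i y)) := fun i => by
    have h := (NormedSpace.expSeries_div_hasSum_exp (t * (1 - μ i))).mul_left (Real.exp (-t) * (b i x * b i y))
    rw [← Real.exp_eq_exp_ℝ] at h
    have e1 : (fun k : ℕ => Real.exp (-t) * t ^ k / (Nat.factorial k) * ((1 - μ i) ^ k * (b i x * b i y))) =
        fun k : ℕ => Real.exp (-t) * (b i x * b i y) * ((t * (1 - μ i)) ^ k / (Nat.factorial k)) := by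
      funext k
      rw [mul_pow]; ring
    have e2 : Real.exp (-μ i * t) * (b i x * b i y) = Real.exp (-t) * (b i x * b i y) * Real.exp (t * (1 - μ i)) := by
      have : -μ i * t = -t + t * (1 - μ i) := by ring
      rw [this, Real.exp_add]; ring
    rw [e1, e2]
    exact h
  convert hasSum_sum (s := Finset.univ) fun i _ => this i using 1
  funext k
  rw [S.pow, Finset.mul_sum]

lemma Spec.green (S : Spec G d β Nn b μ) (hβ : 0 < β) (x y : V) :
    GFF.zGreen G d Nn x y = ∑ i with μ i ≠ 0, b i x * b i y / μ i := by
  unfold GFF.zGreen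
  have e : ∀ t, GFF.heatK G d t x y - 1 / (Nn : ℝ) =
      ∑ i with μ i ≠ 0, Real.exp (-μ i * t) * (b i x * b i y) := fun t => by
    rw [S.heat, ← S.zero x y, ← Finset.sum_filter_add_sum_filter_not Finset.univ (fun i => μ i = 0)]
    rw [add_sub_assoc, add_comm, sub_add_eq_add_sub, sub_eq_iff_eq_add, add_comm]
    rw [add_comm]
    congr 1
    exact Finset.sum_congr rfl fun i hi => by
      rw [show μ i = 0 by simpa using hi]; simp
  simp_rw [e]
  rw [integral_finsetSum]
  · refine Finset.sum_congr rfl fun i hi => ?_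
    have := S.gap i (by simpa using hi)
    rw [integral_mul_const, integral_exp_mul_Ioi (by linarith)]
    simp
    ring
  · intro i hi
    have := S.gap i (by simpa using hi)
    exact (integrableOn_exp_mul_Ioi (by linarith) 0).mul_const _

lemma Spec.green_symm (S : Spec G d β Nn b μ) (hβ : 0 < β) (x y : V) :
    GFF.zGreen G d Nn x y = GFF.zGreen G d Nn y x := by
  rw [S.green hβ, S.green hβ]
  exact Finset.sum_congr rfl fun i _ => by rw [mul_comm]

lemma Spec.green_diag (S : Spec G d β Nn b μ) (hβ : 0 < β) (x : V) : 0 ≤ GFF.zGreen G d Nn x x := by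
  rw [S.green hβ]
  refine Finset.sum_nonneg fun i hi => div_nonneg (mul_self_nonneg _) ?_
  have := S.gap i (by simpa using hi)
  linarith

lemma Spec.green_psd (S : Spec G d β Nn b μ) (hβ : 0 < β) (x y : V) :
    0 ≤ GFF.zGreen G d Nn x x + GFF.zGreen G d Nn y y + 2 * GFF.zGreen G d Nn x y := by
  rw [S.green hβ, S.green hβ, S.green hβ, Finset.mul_sum, ← Finset.sum_add_distrib, ← Finset.sum_add_distrib]
  refine Finset.sum_nonneg fun i hi => ?_
  have := S.gap i (by simpa using hi)
  have e : b i x * b i x / μ i + b i y * b i y / μ i + 2 * (b i x * b i y / μ i) = (b i x + b i y) ^ 2 / μ i := by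
    ring
  rw [e]
  exact div_nonneg (sq_nonneg _) (by linarith)

lemma Spec.sum_green (S : Spec G d β Nn b μ) (hβ : 0 < β) (x : V) (e : V → ℝ) :
    ∑ y, GFF.zGreen G d Nn x y * e y = ∑ i with μ i ≠ 0, b i x * (∑ y, b i y * e y) / μ i := by
  simp_rw [S.green hβ, Finset.sum_mul]
  rw [Finset.sum_comm]
  refine Finset.sum_congr rfl fun i _ => ?_
  rw [Finset.mul_sum, Finset.sum_div]
  exact Finset.sum_congr rfl fun y _ => by ring

lemma Spec.green_A (S : Spec G d β Nn b μ) (hβ : 0 < β) (x : V) (v : V → ℝ) :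
    ∑ y, GFF.zGreen G d Nn x y * Matrix.mulVec ((1 : Matrix V V ℝ) - GFF.transP G d) v y
      = v x - (∑ y, v y) / Nn := by
  rw [S.sum_green hβ]
  have e1 : ∀ i ∈ Finset.univ.filter (fun i => μ i ≠ 0),
      b i x * (∑ y, b i y * Matrix.mulVec ((1 : Matrix V V ℝ) - GFF.transP G d) v y) / μ i =
      ∑ y, b i x * b i y * v y := fun i hi => by
    have hi : μ i ≠ 0 := by simpa using hi
    rw [A_symm, S.eig]
    simp only [Pi.smul_apply, smul_eq_mul, mul_assoc, ← Finset.mul_sum]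
    field_simp
  rw [Finset.sum_congr rfl e1]
  have e2 : ∑ i with μ i = 0, ∑ y, b i x * b i y * v y = (∑ y, v y) / Nn := by
    rw [Finset.sum_comm]
    simp_rw [← Finset.sum_mul, S.zero, ← Finset.mul_sum]
    ring
  have e3 : ∑ i, ∑ y, b i x * b i y * v y = v x := by
    rw [Finset.sum_comm]
    simp_rw [← Finset.sum_mul, S.compl]
    simp
  have e4 := Finset.sum_filter_add_sum_filter_not Finset.univ (fun i => μ i = 0)
    (fun i => ∑ y, b i x * b i y * v y)
  linarith

lemma Spec.green_l2 (S : Spec G d β Nn b μ) (hβ : 0 < β) (x : V) (e : V → ℝ) :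
    |∑ y, GFF.zGreen G d Nn x y * e y| ≤ √(∑ y, e y ^ 2) / β := by
  rw [S.sum_green hβ]
  have h1 : |∑ i with μ i ≠ 0, b i x * (∑ y, b i y * e y) / μ i| ≤
      ∑ i, |b i x| * |∑ y, b i y * e y| / β := by
    refine (Finset.abs_sum_le_sum_abs _ _).trans ?_
    refine (Finset.sum_le_sum (g := fun i => |b i x| * |∑ y, b i y * e y| / β) fun i hi => ?_).trans
      (Finset.sum_le_sum_of_subset_of_nonneg (Finset.filter_subset _ _) fun i _ _ => by positivity)
    have := S.gap i (by simpa using hi)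
    rw [abs_div, abs_mul, abs_of_pos (lt_of_lt_of_le hβ this)]
    gcongr
  refine h1.trans ?_
  rw [← Finset.sum_div]
  gcongr
  refine Real.le_sqrt_of_sq_le ?_
  refine (Finset.sum_mul_sq_le_sq_mul_sq _ _ _).trans ?_
  simp only [sq_abs]
  have e1 : ∑ i, b i x ^ 2 = 1 := by
    have := S.compl x x
    simp_rw [pow_two]; simpa using this
  have e2 : ∑ i, (∑ y, b i y * e y) ^ 2 = ∑ y, e y ^ 2 := by
    have : ∀ i, (∑ y, b i y * e y) ^ 2 = ∑ y, ∑ z, b i y * b i z * (e y * e z) := fun i => by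
      rw [pow_two, Finset.sum_mul_sum]
      exact Finset.sum_congr rfl fun y _ => Finset.sum_congr rfl fun z _ => by ring
    simp_rw [this]
    rw [Finset.sum_comm]
    refine Finset.sum_congr rfl fun y _ => ?_
    rw [Finset.sum_comm]
    simp_rw [← Finset.sum_mul, S.compl]
    simp [pow_two]
  rw [e1, e2, one_mul]

end

end SMC

namespace SMC

/-! ### Part 7: comparison of Green functions -/

section
variable {V : Type} [Fintype V] {G : SimpleGraph V} {D : ℕ}

lemma exists_closer (hc : G.Connected) {y z : V} (h : y ≠ z) : ∃ a, G.Adj y a ∧ G.dist a z + 1 = G.dist y z := by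
  obtain ⟨p, hp⟩ := hc.exists_walk_length_eq_dist y z
  cases p with
  | nil => exact absurd rfl h
  | cons hadj q =>
    rename_i a
    refine ⟨a, hadj, ?_⟩
    rw [SimpleGraph.Walk.length_cons] at hp
    have h1 := SimpleGraph.dist_le q
    have h2 := hc.dist_triangle (u := y) (v := a) (w := z)
    have h3 := SimpleGraph.dist_eq_one_iff_adj.2 hadj
    omega

lemma dist_adj (hc : G.Connected) {y a : V} (z : V) (h : G.Adj y a) :
    G.dist z y ≤ G.dist z a + 1 ∧ G.dist z a ≤ G.dist z y + 1 := by
  have h1 := hc.dist_triangle (u := z) (v := a) (w := y)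
  have h2 := hc.dist_triangle (u := z) (v := y) (w := a)
  have h3 := SimpleGraph.dist_eq_one_iff_adj.2 h
  have h4 := SimpleGraph.dist_eq_one_iff_adj.2 h.symm
  omega

lemma ball_card (hD : 2 ≤ D) (hc : G.Connected) (hreg : GFF.IsReg G (D + 1)) (z : V) (k : ℕ) :
    (Finset.univ.filter fun y => G.dist z y ≤ k).card + 1 ≤ 2 * (D + 1) ^ k := by
  induction k with
  | zero =>
    have : (Finset.univ.filter fun y => G.dist z y ≤ 0) = {z} := by
      ext y
      simp [hc.dist_eq_zero_iff, eq_comm]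
    rw [this]; simp
  | succ k ih =>
    have hsub : (Finset.univ.filter fun y => G.dist z y ≤ k + 1) ⊆
        insert z ((Finset.univ.filter fun y => G.dist z y ≤ k).biUnion fun y => G.neighborFinset y) := by
      intro y hy
      have hy : G.dist z y ≤ k + 1 := by simpa using hy
      by_cases hyz : y = z
      · simp [hyz]
      · obtain ⟨a, ha, hd⟩ := exists_closer hc hyz
        refine Finset.mem_insert_of_mem (Finset.mem_biUnion.2 ⟨a, ?_, by simpa using ha.symm⟩)
        have e1 := G.dist_comm (u := a) (v := z)
        have e2 := G.dist_comm (u := y) (v := z)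
        simp; omega
    have hdeg : ∀ y, (G.neighborFinset y).card = D + 1 := fun y => by
      rw [← hreg y, Nat.card_eq_fintype_card, SimpleGraph.card_neighborSet_eq_degree]; rfl
    have h1 := (Finset.card_le_card hsub).trans ((Finset.card_insert_le _ _).trans
      (Nat.add_le_add_right Finset.card_biUnion_le 1))
    simp only [hdeg, Finset.sum_const, smul_eq_mul] at h1
    set m := (Finset.univ.filter fun y => G.dist z y ≤ k).card
    have h2 : (m + 1) * (D + 1) ≤ 2 * (D + 1) ^ k * (D + 1) := Nat.mul_le_mul_right _ ih
    rw [pow_succ]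
    have h3 : (m + 1) * (D + 1) = m * (D + 1) + D + 1 := by ring
    have h4 : 2 * ((D + 1) ^ k * (D + 1)) = 2 * (D + 1) ^ k * (D + 1) := by ring
    omega

/-- truncated tree Green function -/
noncomputable def vf (G : SimpleGraph V) (D ρ : ℕ) (z y : V) : ℝ :=
  if G.dist z y ≤ ρ then (D : ℝ) / (D - 1) * ((D : ℝ)⁻¹) ^ G.dist z y else 0

lemma vf_bound (hD : 2 ≤ D) (ρ k : ℕ) (z y : V) (hk : k ≤ G.dist z y) :
    0 ≤ vf G D ρ z y ∧ vf G D ρ z y ≤ 2 * ((D : ℝ)⁻¹) ^ k := by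
  have hD' : (2 : ℝ) ≤ D := by exact_mod_cast hD
  have hC : (D : ℝ) / (D - 1) ≤ 2 := by rw [div_le_iff₀ (by linarith)]; linarith
  have hC0 : 0 ≤ (D : ℝ) / (D - 1) := div_nonneg (by linarith) (by linarith)
  unfold vf
  split_ifs
  · refine ⟨by positivity, ?_⟩
    have : ((D : ℝ)⁻¹) ^ G.dist z y ≤ ((D : ℝ)⁻¹) ^ k :=
      pow_le_pow_of_le_one (by positivity) (inv_le_one_of_one_le₀ (by linarith)) hk
    gcongr
  · exact ⟨le_rfl, by positivity⟩

lemma nbr_sum (hc : G.Connected) (hreg : GFF.IsReg G (D + 1)) {B : Set V} (hB : UP G B)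
    {z y : V} (hyz : y ≠ z) (hz : ∀ w, G.dist z w ≤ 2 * G.dist z y + 1 → w ∈ B) (f : ℕ → ℝ) :
    ∑ y', (if G.Adj y y' then f (G.dist z y') else 0) = D * f (G.dist z y + 1) + f (G.dist z y - 1) := by
  obtain ⟨a, ha, hd⟩ := exists_closer hc hyz
  have e1 := G.dist_comm (u := a) (v := z)
  have e2 := G.dist_comm (u := y) (v := z)
  have key : ∀ y', (if G.Adj y y' then f (G.dist z y') else 0) =
      (if G.Adj y y' then (1 : ℝ) else 0) * f (G.dist z y + 1) +
        if y' = a then f (G.dist z y - 1) - f (G.dist z y + 1) else 0 := fun y' => by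
    by_cases hya : y' = a
    · subst hya
      rw [if_pos ha, if_pos ha, if_pos rfl, (by omega : G.dist z y - 1 = G.dist z y')]; ring
    · rw [if_neg hya]
      by_cases hadj : G.Adj y y'
      · have hlt : ¬ G.dist y' z ≤ G.dist y z := fun hle =>
          hya (closer_unique hc hB hadj ha hle (by omega) fun w hw => hz w (by
            have := hc.dist_triangle (u := z) (v := y) (w := w)
            omega))
        have := dist_adj hc z hadj
        have e3 := G.dist_comm (u := y') (v := z)
        rw [if_pos hadj, if_pos hadj, (by omega : G.dist z y' = G.dist z y + 1)]; ring
      · rw [if_neg hadj, if_neg hadj]; ring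
  rw [Finset.sum_congr rfl fun y' _ => key y', Finset.sum_add_distrib, ← Finset.sum_mul, deg_sum hreg]
  simp
  ring

lemma vf_lap (hD : 2 ≤ D) (hc : G.Connected) (hreg : GFF.IsReg G (D + 1)) {B : Set V} (hB : UP G B)
    {z : V} {ρ : ℕ} (hρ : 1 ≤ ρ) (hz : ∀ w, G.dist z w ≤ 2 * ρ + 1 → w ∈ B) (y : V) :
    |Matrix.mulVec ((1 : Matrix V V ℝ) - GFF.transP G (D + 1)) (vf G D ρ z) y - (if y = z then 1 else 0)| ≤
      if G.dist z y ≤ ρ + 1 then 2 * ((D : ℝ)⁻¹) ^ (ρ - 1) else 0 := by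
  have hD' : (2 : ℝ) ≤ D := by exact_mod_cast hD
  have hD0 : (D : ℝ) ≠ 0 := by linarith
  have hD1 : (D : ℝ) - 1 ≠ 0 := by linarith
  have hD2 : (D : ℝ) + 1 ≠ 0 := by linarith
  have hnn : (0 : ℝ) ≤ 2 * ((D : ℝ)⁻¹) ^ (ρ - 1) := by positivity
  rw [A_apply]
  by_cases hyz : y = z
  · subst hyz
    rw [if_pos rfl, SimpleGraph.dist_self, if_pos (by omega)]
    have e : ∀ y', (if G.Adj y y' then vf G D ρ y y' else 0) =
        (if G.Adj y y' then (1 : ℝ) else 0) * ((D : ℝ) / (D - 1) * (D : ℝ)⁻¹) := fun y' => by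
      split_ifs with h
      · rw [vf, SimpleGraph.dist_eq_one_iff_adj.2 h, if_pos hρ]; simp
      · simp
    rw [Finset.sum_congr rfl fun y' _ => e y', ← Finset.sum_mul, deg_sum hreg, vf, SimpleGraph.dist_self,
      if_pos (by omega)]
    have : (D : ℝ) / (D - 1) * (D : ℝ)⁻¹ ^ 0 - ((D + 1 : ℕ) : ℝ) * ((D : ℝ) / (D - 1) * (D : ℝ)⁻¹) / ((D + 1 : ℕ) : ℝ) - 1 = 0 := by
      push_cast
      field_simp
      ring
    rw [this, abs_zero]; exact hnn
  rw [if_neg hyz, sub_zero]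
  by_cases h1 : G.dist z y + 1 ≤ ρ
  · rw [if_pos (by omega)]
    have e : ∀ y', (if G.Adj y y' then vf G D ρ z y' else 0) =
        (if G.Adj y y' then (fun k => (D : ℝ) / (D - 1) * (D : ℝ)⁻¹ ^ k) (G.dist z y') else 0) := fun y' => by
      split_ifs with h
      · have := dist_adj hc z h
        rw [vf, if_pos (by omega)]
      · rfl
    have ns := nbr_sum hc hreg hB hyz (fun w hw => hz w (by omega)) (fun k => (D : ℝ) / (D - 1) * (D : ℝ)⁻¹ ^ k)
    rw [Finset.sum_congr rfl fun y' _ => e y', ns, vf, if_pos (by omega)]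
    obtain ⟨k, hk⟩ : ∃ k, G.dist z y = k + 1 := ⟨G.dist z y - 1, by
      have : G.dist z y ≠ 0 := fun h => hyz (hc.dist_eq_zero_iff.1 h).symm
      omega⟩
    rw [hk]
    have : (D : ℝ) / (D - 1) * (D : ℝ)⁻¹ ^ (k + 1) - (D * ((D : ℝ) / (D - 1) * (D : ℝ)⁻¹ ^ (k + 1 + 1)) +
        (D : ℝ) / (D - 1) * (D : ℝ)⁻¹ ^ (k + 1 - 1)) / ((D + 1 : ℕ) : ℝ) = 0 := by
      rw [Nat.add_sub_cancel, pow_succ _ (k + 1), pow_succ _ k]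
      generalize (D : ℝ)⁻¹ ^ k = Q
      push_cast
      field_simp
      ring
    rw [this, abs_zero]; exact hnn
  · by_cases h2 : G.dist z y ≤ ρ + 1
    · rw [if_pos h2]
      have b1 := vf_bound (G := G) hD ρ (ρ - 1) z y (by omega)
      have b2 : ∀ y', 0 ≤ (if G.Adj y y' then vf G D ρ z y' else 0) ∧
          (if G.Adj y y' then vf G D ρ z y' else 0) ≤ (if G.Adj y y' then (1 : ℝ) else 0) * (2 * ((D : ℝ)⁻¹) ^ (ρ - 1)) := fun y' => by
        split_ifs with h
        · have := dist_adj hc z h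
          have := vf_bound (G := G) hD ρ (ρ - 1) z y' (by omega)
          rw [one_mul]; exact this
        · simp
      have s1 := Finset.sum_nonneg fun y' (_ : y' ∈ Finset.univ) => (b2 y').1
      have s2 := Finset.sum_le_sum fun y' (_ : y' ∈ Finset.univ) => (b2 y').2
      rw [← Finset.sum_mul, deg_sum hreg] at s2
      have hp : (0 : ℝ) < ((D + 1 : ℕ) : ℝ) := by positivity
      have s3 : (∑ y', if G.Adj y y' then vf G D ρ z y' else 0) / ((D + 1 : ℕ) : ℝ) ≤ 2 * ((D : ℝ)⁻¹) ^ (ρ - 1) := by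
        rw [div_le_iff₀ hp]; linarith
      have s4 : 0 ≤ (∑ y', if G.Adj y y' then vf G D ρ z y' else 0) / ((D + 1 : ℕ) : ℝ) := by positivity
      rw [abs_le]
      constructor <;> linarith
    · rw [if_neg h2, vf, if_neg (by omega), Finset.sum_eq_zero]
      · simp
      · intro y' _
        split_ifs with h
        · have := dist_adj hc z h
          rw [vf, if_neg (by omega)]
        · rfl

theorem green_compare {β : ℝ} {Nn : ℕ} {b : V → V → ℝ} {μ : V → ℝ} (hβ : 0 < β)
    (S : Spec G (D + 1) β Nn b μ) (hD : 2 ≤ D) (hc : G.Connected) (hreg : GFF.IsReg G (D + 1))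
    {B : Set V} (hB : UP G B)
    {z : V} {ρ : ℕ} (hρ : 1 ≤ ρ) (hz : ∀ w, G.dist z w ≤ 2 * ρ + 1 → w ∈ B) (x : V) :
    |GFF.zGreen G (D + 1) Nn x z - vf G D ρ z x| ≤
      4 * (D : ℝ) ^ 2 / β * √((3 / 4) ^ ρ) + 4 * ((D : ℝ) + 1) ^ ρ / Nn := by
  have hD' : (2 : ℝ) ≤ D := by exact_mod_cast hD
  have h1 := S.green_A hβ x (vf G D ρ z)
  set A := Matrix.mulVec ((1 : Matrix V V ℝ) - GFF.transP G (D + 1)) (vf G D ρ z) with hA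
  have h2 := S.green_l2 hβ x (fun y => A y - if y = z then 1 else 0)
  have h3 : ∑ y, GFF.zGreen G (D + 1) Nn x y * (A y - if y = z then 1 else 0) =
      vf G D ρ z x - (∑ y, vf G D ρ z y) / Nn - GFF.zGreen G (D + 1) Nn x z := by
    simp_rw [mul_sub]
    rw [Finset.sum_sub_distrib, h1]
    simp
  have h4 : ∑ y, (A y - if y = z then 1 else 0) ^ 2 ≤ (4 * (D : ℝ) ^ 2) ^ 2 * (3 / 4) ^ ρ := by
    have : ∀ y, (A y - if y = z then 1 else 0) ^ 2 ≤
        (if G.dist z y ≤ ρ + 1 then (1 : ℝ) else 0) * (2 * ((D : ℝ)⁻¹) ^ (ρ - 1)) ^ 2 := fun y => by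
      rw [← sq_abs]
      have := vf_lap hD hc hreg hB hρ hz y
      refine (pow_le_pow_left₀ (abs_nonneg _) this 2).trans (le_of_eq ?_)
      split_ifs <;> simp
    refine (Finset.sum_le_sum fun y _ => this y).trans ?_
    rw [← Finset.sum_mul, Finset.sum_boole]
    have hb : ((Finset.univ.filter fun y => G.dist z y ≤ ρ + 1).card : ℝ) ≤ 2 * ((D : ℝ) + 1) ^ (ρ + 1) := by
      have := ball_card (D := D) hD hc hreg z (ρ + 1)
      have : (Finset.univ.filter fun y => G.dist z y ≤ ρ + 1).card ≤ 2 * (D + 1) ^ (ρ + 1) := by omega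
      exact_mod_cast this
    obtain ⟨m, rfl⟩ : ∃ m, ρ = m + 1 := ⟨ρ - 1, by omega⟩
    rw [Nat.add_sub_cancel]
    calc _ ≤ 2 * ((D : ℝ) + 1) ^ (m + 1 + 1) * (2 * ((D : ℝ)⁻¹) ^ m) ^ 2 := by gcongr
      _ ≤ 2 * (3 / 4 * (D : ℝ) ^ 2) ^ (m + 1 + 1) * (2 * ((D : ℝ)⁻¹) ^ m) ^ 2 := by
        gcongr
        nlinarith
      _ = 8 * (D : ℝ) ^ 4 * (3 / 4) ^ (m + 1 + 1) * ((D : ℝ) * (D : ℝ)⁻¹) ^ (2 * m) := by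
        rw [mul_pow, mul_pow, mul_pow]; ring
      _ = 6 * (D : ℝ) ^ 4 * (3 / 4) ^ (m + 1) := by
        rw [mul_inv_cancel₀ (by linarith), one_pow, pow_succ]; ring
      _ ≤ 16 * (D : ℝ) ^ 4 * (3 / 4) ^ (m + 1) := by gcongr; norm_num
      _ = _ := by ring
  have h5 : √(∑ y, (A y - if y = z then 1 else 0) ^ 2) ≤ 4 * (D : ℝ) ^ 2 * √((3 / 4) ^ ρ) := by
    refine (Real.sqrt_le_sqrt h4).trans (le_of_eq ?_)
    rw [Real.sqrt_mul (by positivity), Real.sqrt_sq (by positivity)]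
  have h6 : ∑ y, vf G D ρ z y ≤ 4 * ((D : ℝ) + 1) ^ ρ := by
    have : ∀ y, vf G D ρ z y ≤ (if G.dist z y ≤ ρ then (1 : ℝ) else 0) * 2 := fun y => by
      have := (vf_bound (G := G) hD ρ 0 z y (by omega)).2
      rw [pow_zero] at this
      by_cases h : G.dist z y ≤ ρ
      · rw [if_pos h]; linarith
      · rw [if_neg h, vf, if_neg h]; simp
    refine (Finset.sum_le_sum fun y _ => this y).trans ?_
    rw [← Finset.sum_mul, Finset.sum_boole]
    have hb : ((Finset.univ.filter fun y => G.dist z y ≤ ρ).card : ℝ) ≤ 2 * ((D : ℝ) + 1) ^ ρ := by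
      have := ball_card (D := D) hD hc hreg z ρ
      have : (Finset.univ.filter fun y => G.dist z y ≤ ρ).card ≤ 2 * (D + 1) ^ ρ := by omega
      exact_mod_cast this
    linarith
  have h7 : 0 ≤ ∑ y, vf G D ρ z y := Finset.sum_nonneg fun y _ => (vf_bound (G := G) hD ρ 0 z y (by omega)).1
  have h8 : (∑ y, vf G D ρ z y) / Nn ≤ 4 * ((D : ℝ) + 1) ^ ρ / Nn := by gcongr
  have h9 : 0 ≤ (∑ y, vf G D ρ z y) / Nn := by positivity
  have h10 : √(∑ y, (A y - if y = z then 1 else 0) ^ 2) / β ≤ 4 * (D : ℝ) ^ 2 / β * √((3 / 4) ^ ρ) := by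
    rw [div_mul_eq_mul_div]; gcongr
  rw [h3] at h2
  have h11 := abs_le.1 (h2.trans h10)
  rw [abs_le]
  constructor <;> linarith [h11.1, h11.2]

end
end SMC

namespace SMC

/-! ### Part 8: bad vertices -/

section
variable {V : Type} [Fintype V] {G : SimpleGraph V} {D : ℕ}

lemma ap_ge {S S' B : Set V} (hS : S ⊆ B) (hS' : S' ⊆ B) (hdisj : ∀ v ∈ S, v ∉ S')
    (hconn : (G.induce B).Connected) (h1 : ¬ (G.induce S).IsAcyclic)
    (h2 : ¬ (G.induce S').IsAcyclic) : 2 * B.ncard + 2 ≤ GFF.adjPairs G B := by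
  rw [SimpleGraph.isAcyclic_iff_forall_adj_isBridge] at h1 h2
  push Not at h1 h2
  obtain ⟨a, b, hab, hnb⟩ := h1
  obtain ⟨a', b', hab', hnb'⟩ := h2
  rw [SimpleGraph.isBridge_iff, not_not] at hnb hnb'
  set H := G.induce B with hH
  let f : S → B := fun v => ⟨v, hS v.2⟩
  let f' : S' → B := fun v => ⟨v, hS' v.2⟩
  have hf : Function.Injective f := fun u v h => Subtype.ext (congrArg (fun z : B => (z : V)) h)
  have hf' : Function.Injective f' := fun u v h => Subtype.ext (congrArg (fun z : B => (z : V)) h)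
  have c1 : (H.deleteEdges {s(f' a', f' b')}).Connected := by
    refine hconn.connected_delete_edge_of_not_isBridge ?_
    rw [SimpleGraph.isBridge_iff, not_not]
    let φ : ((G.induce S').deleteEdges {s(a', b')}) →g (H.deleteEdges {s(f' a', f' b')}) :=
      ⟨f', by
        intro u v huv
        rw [SimpleGraph.deleteEdges_adj] at huv ⊢
        refine ⟨huv.1, fun h => huv.2 ?_⟩
        have h := Set.mem_singleton_iff.1 h
        rw [← Sym2.map_mk, ← Sym2.map_mk] at h
        exact Sym2.map.injective hf' h⟩
    exact hnb'.map φ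
  have key : ∀ u v : S, s(f u, f v) ≠ s(f' a', f' b') := by
    intro u v h
    rcases Sym2.eq_iff.1 h with ⟨h1, h2⟩ | ⟨h1, h2⟩
    · exact hdisj _ u.2 (by rw [show (u : V) = a' from congrArg Subtype.val h1]; exact a'.2)
    · exact hdisj _ u.2 (by rw [show (u : V) = b' from congrArg Subtype.val h1]; exact b'.2)
  have c2 : ((H.deleteEdges {s(f' a', f' b')}).deleteEdges {s(f a, f b)}).Connected := by
    refine c1.connected_delete_edge_of_not_isBridge ?_
    rw [SimpleGraph.isBridge_iff, not_not]
    let φ : ((G.induce S).deleteEdges {s(a, b)}) →g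
        ((H.deleteEdges {s(f' a', f' b')}).deleteEdges {s(f a, f b)}) :=
      ⟨f, by
        intro u v huv
        rw [SimpleGraph.deleteEdges_adj] at huv
        rw [SimpleGraph.deleteEdges_adj, SimpleGraph.deleteEdges_adj]
        refine ⟨⟨huv.1, fun h => key u v (Set.mem_singleton_iff.1 h)⟩, fun h => huv.2 ?_⟩
        have h := Set.mem_singleton_iff.1 h
        rw [← Sym2.map_mk, ← Sym2.map_mk] at h
        exact Sym2.map.injective hf h⟩
    exact hnb.map φ
  have hcard := c2.card_vert_le_card_edgeSet_add_one
  rw [SimpleGraph.edgeSet_deleteEdges, SimpleGraph.edgeSet_deleteEdges, Nat.card_coe_set_eq,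
    Nat.card_coe_set_eq] at hcard
  have e1 : s(f' a', f' b') ∈ H.edgeSet := hab'
  have e2 : s(f a, f b) ∈ H.edgeSet \ {s(f' a', f' b')} := ⟨hab, fun h => key a b (Set.mem_singleton_iff.1 h)⟩
  have n1 := Set.ncard_sdiff_singleton_add_one e2 (Set.toFinite _)
  have n2 := Set.ncard_sdiff_singleton_add_one e1 (Set.toFinite _)
  have n3 : 2 * H.edgeSet.ncard = GFF.adjPairs G B := by
    rw [Set.ncard_eq_toFinset_card']
    have := H.two_mul_card_edgeFinset
    rw [SimpleGraph.edgeFinset] at this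
    rw [this, GFF.adjPairs, Set.ncard_eq_toFinset_card']
    refine Finset.card_bij (fun p _ => ((p.1 : V), (p.2 : V))) ?_ ?_ ?_
    · rintro ⟨u, v⟩ h
      have h : H.Adj u v := by simpa using h
      simp only [Set.mem_toFinset, Set.mem_ofPred_eq]
      exact ⟨u.2, v.2, h⟩
    · rintro ⟨u, v⟩ _ ⟨u', v'⟩ _ h
      simp only [Prod.mk.injEq] at h
      exact Prod.ext (Subtype.ext h.1) (Subtype.ext h.2)
    · rintro ⟨u, v⟩ h
      simp only [Set.mem_toFinset, Set.mem_ofPred_eq] at h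
      refine ⟨(⟨u, h.1⟩, ⟨v, h.2.1⟩), ?_, rfl⟩
      simp only [Finset.mem_filter, Finset.mem_univ, true_and]
      exact h.2.2
  omega

lemma gball_conn (hc : G.Connected) (x : V) (k : ℕ) : (G.induce (GFF.gball G x k)).Connected := by
  have hx : x ∈ GFF.gball G x k := by simp [GFF.gball]
  refine (SimpleGraph.connected_iff_exists_forall_reachable _).2 ⟨⟨x, hx⟩, ?_⟩
  have : ∀ n (y : V) (hy : y ∈ GFF.gball G x k), G.dist y x = n →
      (G.induce (GFF.gball G x k)).Reachable ⟨x, hx⟩ ⟨y, hy⟩ := by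
    intro n
    induction n with
    | zero =>
      intro y hy h
      have : y = x := (hc.dist_eq_zero_iff).1 h
      subst this; exact SimpleGraph.Reachable.refl _
    | succ n ih =>
      intro y hy h
      have hne : y ≠ x := by rintro rfl; simp at h
      obtain ⟨a, ha, had⟩ := exists_closer hc hne
      have hy2 : G.dist x y ≤ k := hy
      have ha' : a ∈ GFF.gball G x k := by
        show G.dist x a ≤ k
        rw [SimpleGraph.dist_comm] at hy2 ⊢; omega
      refine (ih a ha' (by omega)).trans (SimpleGraph.Adj.reachable ?_)
      exact ha.symm
  rintro ⟨y, hy⟩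
  exact this _ y hy rfl

lemma two_bad (hc : G.Connected) {y x x' : V} {R ρ r : ℕ} (hR : ρ + r ≤ R)
    (hcyc : GFF.adjPairs G (GFF.gball G y R) ≤ 2 * (GFF.gball G y R).ncard)
    (hx : G.dist y x ≤ ρ) (hx' : G.dist y x' ≤ ρ)
    (h1 : ¬ (G.induce (GFF.gball G x r)).IsAcyclic)
    (h2 : ¬ (G.induce (GFF.gball G x' r)).IsAcyclic) : G.dist x x' ≤ 2 * r := by
  by_contra hlt
  have := ap_ge (G := G) (S := GFF.gball G x r) (S' := GFF.gball G x' r) (B := GFF.gball G y R)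
    (fun v (hv : G.dist x v ≤ r) => show G.dist y v ≤ R by
      have := hc.dist_triangle (u := y) (v := x) (w := v); omega)
    (fun v (hv : G.dist x' v ≤ r) => show G.dist y v ≤ R by
      have := hc.dist_triangle (u := y) (v := x') (w := v); omega)
    (fun v (hv : G.dist x v ≤ r) (hv' : G.dist x' v ≤ r) => by
      have := hc.dist_triangle (u := x) (v := v) (w := x')
      rw [SimpleGraph.dist_comm (u := v)] at this; omega)
    (gball_conn hc y R) h1 h2
  omega

/-- number of vertices in a ball -/
noncomputable def bn (G : SimpleGraph V) (x : V) (k : ℕ) : ℕ :=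
  (Finset.univ.filter fun y => G.dist x y ≤ k).card

/-- number of ordered adjacent pairs in a ball -/
noncomputable def an (G : SimpleGraph V) (x : V) (k : ℕ) : ℕ :=
  (Finset.univ.filter fun p : V × V => G.dist x p.1 ≤ k ∧ G.dist x p.2 ≤ k ∧ G.Adj p.1 p.2).card

lemma bn_eq (x : V) (k : ℕ) : (GFF.gball G x k).ncard = bn G x k := by
  rw [Set.ncard_eq_toFinset_card', bn]; congr 1; ext y; rw [Set.mem_toFinset]; simp [GFF.gball]

lemma an_eq (x : V) (k : ℕ) : GFF.adjPairs G (GFF.gball G x k) = an G x k := by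
  rw [GFF.adjPairs, Set.ncard_eq_toFinset_card', an]; congr 1; ext y; rw [Set.mem_toFinset]; simp [GFF.gball]

lemma an_step (hc : G.Connected) (x : V) (k : ℕ) :
    an G x k + 2 * bn G x (k + 1) ≤ an G x (k + 1) + 2 * bn G x k := by
  set N := Finset.univ.filter fun y => G.dist x y = k + 1 with hN
  have hb : bn G x (k + 1) = bn G x k + N.card := by
    rw [bn, bn, ← Finset.card_union_of_disjoint]
    · congr 1; ext y; simp [hN]; omega
    · rw [Finset.disjoint_left]; intro y; simp [hN]; omega
  have hcl : ∀ y, ∃ a, y ∈ N → G.Adj y a ∧ G.dist x a = k := by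
    intro y
    by_cases hy : y ∈ N
    · have hy' : G.dist x y = k + 1 := by simpa [hN] using hy
      have hne : y ≠ x := by rintro rfl; simp at hy'
      obtain ⟨a, ha, had⟩ := exists_closer hc hne
      refine ⟨a, fun _ => ⟨ha, ?_⟩⟩
      rw [SimpleGraph.dist_comm] at hy' ⊢; omega
    · exact ⟨x, fun h => absurd h hy⟩
  choose c hcc using hcl
  set A1 := N.image fun y => (y, c y)
  set A2 := N.image fun y => (c y, y)
  have h1 : A1.card = N.card := Finset.card_image_of_injOn fun y _ z _ h => (Prod.mk.inj h).1
  have h2 : A2.card = N.card := Finset.card_image_of_injOn fun y _ z _ h => (Prod.mk.inj h).2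
  have hle : (Finset.univ.filter fun p : V × V => G.dist x p.1 ≤ k ∧ G.dist x p.2 ≤ k ∧ G.Adj p.1 p.2).card
      + (A1.card + A2.card) ≤ an G x (k + 1) := by
    rw [← Finset.card_union_of_disjoint, ← Finset.card_union_of_disjoint, an]
    · refine Finset.card_le_card ?_
      rintro ⟨u, v⟩ h
      simp only [Finset.mem_union, Finset.mem_filter, Finset.mem_univ, true_and, A1, A2,
        Finset.mem_image, Prod.mk.injEq] at h ⊢
      rcases h with h | ⟨y, hy, rfl, rfl⟩ | ⟨y, hy, rfl, rfl⟩
      · exact ⟨by omega, by omega, h.2.2⟩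
      · have := hcc y hy
        have hy : G.dist x y = k + 1 := by simpa [hN] using hy
        exact ⟨by omega, by omega, this.1⟩
      · have := hcc y hy
        have hy : G.dist x y = k + 1 := by simpa [hN] using hy
        exact ⟨by omega, by omega, this.1.symm⟩
    · rw [Finset.disjoint_left]
      rintro ⟨u, v⟩ h h'
      simp only [Finset.mem_union, Finset.mem_filter, Finset.mem_univ, true_and, A1, A2,
        Finset.mem_image, Prod.mk.injEq] at h h'
      rcases h' with ⟨y, hy, rfl, rfl⟩ | ⟨y, hy, rfl, rfl⟩ <;>
      · have hy : G.dist x y = k + 1 := by simpa [hN] using hy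
        omega
    · rw [Finset.disjoint_left]
      rintro ⟨u, v⟩ h h'
      simp only [A1, A2, Finset.mem_image, Prod.mk.injEq] at h h'
      obtain ⟨y, hy, rfl, rfl⟩ := h
      obtain ⟨z, hz, h3, h4⟩ := h'
      have e1 := (hcc y hy).2
      have hz : G.dist x z = k + 1 := by simpa [hN] using hz
      rw [← h4] at e1; omega
  have : an G x k = (Finset.univ.filter fun p : V × V => G.dist x p.1 ≤ k ∧ G.dist x p.2 ≤ k ∧ G.Adj p.1 p.2).card := rfl
  omega

lemma an_sub (hc : G.Connected) (x : V) {R k : ℕ} (hk : k ≤ R) (h : an G x R ≤ 2 * bn G x R) :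
    an G x k ≤ 2 * bn G x k := by
  induction R with
  | zero => obtain rfl : k = 0 := by omega
            exact h
  | succ R ih =>
    rcases Nat.lt_or_ge R k with h1 | h1
    · obtain rfl : k = R + 1 := by omega
      exact h
    · have := an_step hc x R
      exact ih h1 (by omega)

lemma bn_growth (hD : 2 ≤ D) (hc : G.Connected) (hreg : GFF.IsReg G (D + 1)) (x : V) {R k : ℕ} (hk : k ≤ R)
    (h : an G x R ≤ 2 * bn G x R) : ((3 : ℝ) / 2) ^ k ≤ bn G x k := by
  induction k with
  | zero =>
    have : 0 < bn G x 0 := Finset.card_pos.2 ⟨x, by simp⟩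
    simp only [pow_zero]; exact_mod_cast this
  | succ k ih =>
    have h1 := an_sub hc x hk h
    have h2 : (D + 1) * bn G x k ≤ an G x (k + 1) := by
      have : ((Finset.univ.filter fun y => G.dist x y ≤ k).sigma fun y => G.neighborFinset y).card
          = (D + 1) * bn G x k := by
        rw [Finset.card_sigma, Finset.sum_const_nat (m := D + 1), bn, mul_comm]
        intro y _
        have := hreg y
        rw [Nat.card_eq_fintype_card, SimpleGraph.card_neighborSet_eq_degree] at this
        exact this
      rw [← this, an]
      refine Finset.card_le_card_of_injOn (fun p => (p.1, p.2)) ?_ ?_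
      · rintro ⟨u, v⟩ h
        simp only [Finset.coe_sigma, Set.mem_sigma_iff, Finset.coe_filter, Finset.mem_univ, true_and,
          Set.mem_ofPred_eq, Finset.mem_coe, SimpleGraph.mem_neighborFinset] at h ⊢
        have := dist_adj hc x h.2
        exact ⟨by omega, by omega, h.2⟩
      · rintro ⟨u, v⟩ _ ⟨u', v'⟩ _ h
        simp only [Prod.mk.injEq] at h
        obtain ⟨rfl, rfl⟩ := h
        rfl
    have h3 : 3 * bn G x k ≤ 2 * bn G x (k + 1) :=
      le_trans (Nat.mul_le_mul_right _ (by omega)) (h2.trans h1)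
    have h3' : (3 : ℝ) * bn G x k ≤ 2 * bn G x (k + 1) := by exact_mod_cast h3
    have := ih (by omega)
    rw [pow_succ]; linarith

lemma bad_count (hD : 2 ≤ D) (hc : G.Connected) (hreg : GFF.IsReg G (D + 1)) {R ρ r : ℕ} (hR : ρ + r ≤ R)
    (hcyc : ∀ y, GFF.adjPairs G (GFF.gball G y R) ≤ 2 * (GFF.gball G y R).ncard) :
    ((Finset.univ.filter fun x => ¬ (G.induce (GFF.gball G x r)).IsAcyclic).card : ℝ) * (3 / 2) ^ ρ
      ≤ (Fintype.card V : ℝ) * (2 * ((D : ℝ) + 1) ^ (2 * r)) := by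
  set Bad := Finset.univ.filter fun x => ¬ (G.induce (GFF.gball G x r)).IsAcyclic with hBad
  have hx : ∀ x ∈ Bad, ((3 : ℝ) / 2) ^ ρ ≤ ∑ y : V, if G.dist x y ≤ ρ then (1 : ℝ) else 0 := by
    intro x _
    have h := hcyc x
    rw [an_eq, bn_eq] at h
    have := bn_growth hD hc hreg x (show ρ ≤ R by omega) h
    rw [Finset.sum_boole]
    exact this
  have hy : ∀ y : V, (∑ x ∈ Bad, if G.dist x y ≤ ρ then (1 : ℝ) else 0) ≤ 2 * ((D : ℝ) + 1) ^ (2 * r) := by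
    intro y
    rw [Finset.sum_boole]
    by_cases he : (Bad.filter fun x => G.dist x y ≤ ρ) = ∅
    · rw [he]; simp; positivity
    · obtain ⟨x0, hx0⟩ := Finset.nonempty_iff_ne_empty.2 he
      have hsub : (Bad.filter fun x => G.dist x y ≤ ρ) ⊆ Finset.univ.filter fun x => G.dist x0 x ≤ 2 * r := by
        intro x hx
        rw [Finset.mem_filter] at hx hx0
        simp only [Finset.mem_filter, Finset.mem_univ, true_and]
        refine two_bad hc hR (hcyc y) (by rw [SimpleGraph.dist_comm]; exact hx0.2)
          (by rw [SimpleGraph.dist_comm]; exact hx.2) ?_ ?_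
        · exact (Finset.mem_filter.1 hx0.1).2
        · exact (Finset.mem_filter.1 hx.1).2
      have h1 := Finset.card_le_card hsub
      have h2 := ball_card hD hc hreg x0 (2 * r)
      have : (Bad.filter fun x => G.dist x y ≤ ρ).card ≤ 2 * (D + 1) ^ (2 * r) := by omega
      exact_mod_cast this
  calc (Bad.card : ℝ) * (3 / 2) ^ ρ = ∑ x ∈ Bad, ((3 : ℝ) / 2) ^ ρ := by simp
    _ ≤ ∑ x ∈ Bad, ∑ y : V, if G.dist x y ≤ ρ then (1 : ℝ) else 0 := Finset.sum_le_sum hx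
    _ = ∑ y : V, ∑ x ∈ Bad, if G.dist x y ≤ ρ then (1 : ℝ) else 0 := Finset.sum_comm
    _ ≤ ∑ y : V, 2 * ((D : ℝ) + 1) ^ (2 * r) := Finset.sum_le_sum fun y _ => hy y
    _ = _ := by simp

end

end SMC

namespace SMC

/-! ### Part 9: test functions, covariance comparison, second moments -/

lemma exists_test {D : ℕ} (r : ℕ) (M : ℝ) {h h1 : ℝ} (hh : h < h1) :
    ∃ Φ : (WL D r → ℝ) → ℝ, LipB (1 / (h1 - h)) Φ ∧ (∀ a, 0 ≤ Φ a) ∧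
      (∀ a, M ≤ (Z r h1 (ext a) : ℝ) → Φ a = 1) ∧ (∀ a, 0 < Φ a → M ≤ (Z r h (ext a) : ℝ)) := by
  set S : Set (WL D r → ℝ) := {a | M ≤ (Z r h1 (ext a) : ℝ)} with hS
  have hε : 0 < h1 - h := by linarith
  have hL : 0 ≤ 1 / (h1 - h) := by positivity
  rcases S.eq_empty_or_nonempty with he | hne
  · refine ⟨fun _ => 0, ⟨hL, measurable_const, by simp, ?_⟩, by simp, ?_, by simp⟩
    · intro a b; simp only [sub_self, abs_zero]; positivity
    · intro a ha
      have : a ∈ S := ha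
      rw [he] at this; exact absurd this (by simp)
  · refine ⟨fun a => max 0 (1 - Metric.infDist a S / (h1 - h)), ⟨hL, ?_, ?_, ?_⟩,
      fun a => le_max_left _ _, ?_, ?_⟩
    · have : Continuous fun a => Metric.infDist a S := Metric.continuous_infDist_pt S
      exact (by fun_prop : Continuous fun a => max 0 (1 - Metric.infDist a S / (h1 - h))).measurable
    · intro a
      rw [abs_of_nonneg (le_max_left _ _)]
      refine max_le zero_le_one ?_
      have : 0 ≤ Metric.infDist a S / (h1 - h) := div_nonneg Metric.infDist_nonneg hε.le
      linarith
    · intro a b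
      have hd : dist a b ≤ ∑ i, |a i - b i| := by
        refine (dist_pi_le_iff (Finset.sum_nonneg fun i _ => abs_nonneg _)).2 fun i => ?_
        rw [Real.dist_eq]
        exact Finset.single_le_sum (f := fun i => |a i - b i|) (fun i _ => abs_nonneg _) (Finset.mem_univ i)
      have h1' : |Metric.infDist a S - Metric.infDist b S| ≤ dist a b := by
        have := (Metric.lipschitz_infDist_pt S).dist_le_mul a b
        simpa [Real.dist_eq] using this
      calc |max 0 (1 - Metric.infDist a S / (h1 - h)) - max 0 (1 - Metric.infDist b S / (h1 - h))|
          ≤ |(1 - Metric.infDist a S / (h1 - h)) - (1 - Metric.infDist b S / (h1 - h))| := by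
            have := abs_max_sub_max_le_max (0 : ℝ) (1 - Metric.infDist a S / (h1 - h)) 0
              (1 - Metric.infDist b S / (h1 - h))
            simpa using this
        _ = 1 / (h1 - h) * |Metric.infDist a S - Metric.infDist b S| := by
            rw [show (1 - Metric.infDist a S / (h1 - h)) - (1 - Metric.infDist b S / (h1 - h))
              = -(1 / (h1 - h) * (Metric.infDist a S - Metric.infDist b S)) by ring, abs_neg, abs_mul,
              abs_of_nonneg hL]
        _ ≤ _ := mul_le_mul_of_nonneg_left (h1'.trans hd) hL
    · intro a ha
      have : a ∈ S := ha
      simp [Metric.infDist_zero_of_mem this]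
    · intro a ha
      have h2 : Metric.infDist a S < h1 - h := by
        by_contra hcon
        have : 1 ≤ Metric.infDist a S / (h1 - h) := (one_le_div hε).2 (by linarith)
        have : max 0 (1 - Metric.infDist a S / (h1 - h)) = 0 := max_eq_left (by linarith)
        linarith
      obtain ⟨b, hb, hab⟩ := (Metric.infDist_lt_iff hne).1 h2
      have hb' : M ≤ (Z r h1 (ext b) : ℝ) := hb
      refine hb'.trans ?_
      have : Z r h1 (ext b) ≤ Z r h (ext a) := by
        refine Finset.card_le_card fun l hl => ?_
        rw [Finset.mem_filter] at hl ⊢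
        refine ⟨hl.1, alive_mono (fun m hm hbm => ?_) hl.2⟩
        have hlr : l.length = r := mem_words.1 hl.1
        have hmr : m ∈ WL D r := mem_WL.2 (by omega)
        unfold ext at hbm ⊢
        rw [dif_pos hmr] at hbm ⊢
        have := (dist_le_pi_dist a b ⟨m, hmr⟩).trans_lt hab
        rw [Real.dist_eq, abs_lt] at this
        linarith
      exact_mod_cast this

lemma cheb {Ω V : Type*} [MeasurableSpace Ω] {P : Measure Ω} [IsProbabilityMeasure P] (s : Finset V)
    {X : V → Ω → ℝ} (hX : ∀ x ∈ s, Measurable (X x)) (hb : ∀ x ∈ s, ∀ ω, |X x ω| ≤ 1) {m E : ℝ}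
    (hm : |m| ≤ 1) (hE : 0 ≤ E) (h1 : ∀ x ∈ s, |∫ ω, X x ω ∂P - m| ≤ E) (far : V → V → Prop)
    (h2 : ∀ x ∈ s, ∀ y ∈ s, far x y → |∫ ω, X x ω * X y ω ∂P - m * m| ≤ E) {K : ℝ}
    (hK0 : 0 ≤ K) (hK : ∀ x ∈ s, ((s.filter fun y => ¬ far x y).card : ℝ) ≤ K) {t N : ℝ} (ht : 0 < t) (hN : 0 < N)
    (hsN : (s.card : ℝ) ≤ N) :
    P.real {ω | ∑ x ∈ s, X x ω < s.card * m - t * N} ≤ (3 * E + 4 * K / N) / t ^ 2 := by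
  have iX : ∀ x ∈ s, Integrable (X x) P := fun x hx =>
    Integrable.of_bound (hX x hx).aestronglyMeasurable 1 (Eventually.of_forall (hb x hx))
  have iXX : ∀ x ∈ s, ∀ y ∈ s, Integrable (fun ω => X x ω * X y ω) P := fun x hx y hy =>
    Integrable.of_bound ((hX x hx).mul (hX y hy)).aestronglyMeasurable 1 (Eventually.of_forall fun ω => by
      rw [Real.norm_eq_abs, abs_mul]
      exact mul_le_one₀ (hb x hx ω) (abs_nonneg _) (hb y hy ω))
  have iY : ∀ x ∈ s, ∀ y ∈ s, Integrable (fun ω => (X x ω - m) * (X y ω - m)) P := fun x hx y hy => by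
    have : (fun ω => (X x ω - m) * (X y ω - m)) =
        fun ω => X x ω * X y ω - m * X x ω - m * X y ω + m * m := by funext ω; ring
    rw [this]
    exact (((iXX x hx y hy).sub ((iX x hx).const_mul m)).sub ((iX y hy).const_mul m)).add
      (integrable_const _)
  have eY : ∀ x ∈ s, ∀ y ∈ s, ∫ ω, (X x ω - m) * (X y ω - m) ∂P =
      ∫ ω, X x ω * X y ω ∂P - m * ∫ ω, X x ω ∂P - m * ∫ ω, X y ω ∂P + m * m := fun x hx y hy => by
    have : (fun ω => (X x ω - m) * (X y ω - m)) =
        fun ω => X x ω * X y ω - m * X x ω - m * X y ω + m * m := by funext ω; ring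
    rw [this, integral_add, integral_sub, integral_sub, integral_const_mul, integral_const_mul]
    · simp
    · exact iXX x hx y hy
    · exact (iX x hx).const_mul m
    · exact (iXX x hx y hy).sub ((iX x hx).const_mul m)
    · exact (iX y hy).const_mul m
    · exact ((iXX x hx y hy).sub ((iX x hx).const_mul m)).sub ((iX y hy).const_mul m)
    · exact integrable_const _
  have bY : ∀ x ∈ s, ∀ y ∈ s, ∫ ω, (X x ω - m) * (X y ω - m) ∂P ≤
      3 * E + 4 * if ¬ far x y then 1 else 0 := fun x hx y hy => by
    by_cases hf : far x y
    · rw [eY x hx y hy]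
      simp only [hf, not_true, if_false]
      have a1 := abs_le.1 (h2 x hx y hy hf)
      have a2 : |m * (∫ ω, X x ω ∂P - m)| ≤ E := by
        rw [abs_mul]
        calc _ ≤ 1 * E := mul_le_mul hm (h1 x hx) (abs_nonneg _) zero_le_one
          _ = E := one_mul E
      have a3 : |m * (∫ ω, X y ω ∂P - m)| ≤ E := by
        rw [abs_mul]
        calc _ ≤ 1 * E := mul_le_mul hm (h1 y hy) (abs_nonneg _) zero_le_one
          _ = E := one_mul E
      have a2 := abs_le.1 a2
      have a3 := abs_le.1 a3
      linarith
    · simp only [hf, not_false_iff, if_true]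
      have : ∫ ω, (X x ω - m) * (X y ω - m) ∂P ≤ ∫ ω, (4 : ℝ) ∂P := by
        refine integral_mono (iY x hx y hy) (integrable_const _) fun ω => ?_
        have e1 : |X x ω - m| ≤ 2 := (abs_sub _ _).trans (by linarith [hb x hx ω])
        have e2 : |X y ω - m| ≤ 2 := (abs_sub _ _).trans (by linarith [hb y hy ω])
        calc (X x ω - m) * (X y ω - m) ≤ |X x ω - m| * |X y ω - m| := by
              rw [← abs_mul]; exact le_abs_self _
          _ ≤ 2 * 2 := mul_le_mul e1 e2 (abs_nonneg _) (by norm_num)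
          _ = 4 := by norm_num
      rw [integral_const] at this
      simp at this
      linarith
  have sq : ∀ ω, (∑ x ∈ s, (X x ω - m)) ^ 2 = ∑ x ∈ s, ∑ y ∈ s, (X x ω - m) * (X y ω - m) := fun ω => by
    rw [pow_two, Finset.sum_mul_sum]
  have iSq : Integrable (fun ω => (∑ x ∈ s, (X x ω - m)) ^ 2) P := by
    simp_rw [sq]
    exact integrable_finsetSum _ fun x hx => integrable_finsetSum _ fun y hy => iY x hx y hy
  have hs0 : (0 : ℝ) ≤ s.card := by positivity
  have hvar : ∫ ω, (∑ x ∈ s, (X x ω - m)) ^ 2 ∂P ≤ N ^ 2 * (3 * E + 4 * K / N) := by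
    simp_rw [sq]
    rw [integral_finsetSum _ fun x hx => integrable_finsetSum _ fun y hy => iY x hx y hy]
    calc _ ≤ ∑ x ∈ s, (N * (3 * E) + 4 * K) := by
          refine Finset.sum_le_sum fun x hx => ?_
          rw [integral_finsetSum _ fun y hy => iY x hx y hy]
          refine (Finset.sum_le_sum fun y hy => bY x hx y hy).trans ?_
          rw [Finset.sum_add_distrib, Finset.sum_const, nsmul_eq_mul, ← Finset.mul_sum, Finset.sum_boole]
          have := hK x hx
          have : (s.card : ℝ) * (3 * E) ≤ N * (3 * E) := by gcongr
          linarith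
      _ = s.card * (N * (3 * E) + 4 * K) := by rw [Finset.sum_const, nsmul_eq_mul]
      _ ≤ N * (N * (3 * E) + 4 * K) := by
          gcongr
      _ = _ := by field_simp
  have hsub : {ω | ∑ x ∈ s, X x ω < s.card * m - t * N} ⊆
      {ω | (t * N) ^ 2 ≤ (∑ x ∈ s, (X x ω - m)) ^ 2} := fun ω hω => by
    have hω : ∑ x ∈ s, X x ω < s.card * m - t * N := hω
    have : ∑ x ∈ s, (X x ω - m) < - (t * N) := by
      rw [Finset.sum_sub_distrib, Finset.sum_const, nsmul_eq_mul]; linarith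
    have h0 : 0 < t * N := by positivity
    show (t * N) ^ 2 ≤ (∑ x ∈ s, (X x ω - m)) ^ 2
    nlinarith
  have hmark := mul_meas_ge_le_integral_of_nonneg (μ := P) (f := fun ω => (∑ x ∈ s, (X x ω - m)) ^ 2)
    (Eventually.of_forall fun ω => sq_nonneg _) iSq ((t * N) ^ 2)
  have h3 : P.real {ω | ∑ x ∈ s, X x ω < s.card * m - t * N} ≤
      P.real {ω | (t * N) ^ 2 ≤ (∑ x ∈ s, (X x ω - m)) ^ 2} := measureReal_mono hsub
  have h4 : (t * N) ^ 2 * P.real {ω | ∑ x ∈ s, X x ω < s.card * m - t * N} ≤ N ^ 2 * (3 * E + 4 * K / N) :=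
    (mul_le_mul_of_nonneg_left h3 (by positivity)).trans (hmark.trans hvar)
  rw [le_div_iff₀ (by positivity)]
  have hN2 : 0 < N ^ 2 := by positivity
  refine le_of_mul_le_mul_left ?_ hN2
  calc _ = (t * N) ^ 2 * P.real {ω | ∑ x ∈ s, X x ω < s.card * m - t * N} := by ring
    _ ≤ _ := h4

section
variable {V : Type} [Fintype V] {G : SimpleGraph V} {D : ℕ} {β : ℝ} {Nn : ℕ} {b : V → V → ℝ} {lam : V → ℝ}

lemma cov_same (hβ : 0 < β) (S : Spec G (D + 1) β Nn b lam) (hD : 2 ≤ D) (hc : G.Connected)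
    (hreg : GFF.IsReg G (D + 1)) {r ρ r2 : ℕ} (hρ : 1 ≤ ρ) (hρr : 2 * r ≤ ρ) (hr2 : r + 2 * ρ + 1 ≤ r2)
    {x : V} (hx : (G.induce (GFF.gball G x r2)).IsAcyclic) {c : List (Fin D) → V} (hC : Code G c)
    (hcx : c [] = x) {T : Type} {Gt : SimpleGraph T} (hct : Gt.Connected) (hat : Gt.IsAcyclic)
    {w : List (Fin D) → T} (hw : Code Gt w) (l m : List (Fin D)) (hl : l.length ≤ r) (hm : m.length ≤ r) :
    |GFF.zGreen G (D + 1) Nn (c l) (c m) - GFF.treeGreen Gt (D + 1) (w l) (w m)| ≤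
      4 * (D : ℝ) ^ 2 / β * √((3 / 4) ^ ρ) + 4 * ((D : ℝ) + 1) ^ ρ / Nn := by
  have hB := UP_of_acyclic hx
  have dl := hC.dist_le hc l
  have dm := hC.dist_le hc m
  rw [hcx] at dl dm
  have hd := hC.dist_eq hc hB (r := r) (fun v hv => show G.dist x v ≤ r2 by rw [hcx] at hv; omega)
    hct hw (UP_univ hat) (fun _ _ => trivial) _ l m le_rfl hl hm
  have := green_compare hβ S hD hc hreg hB hρ (z := c m) (fun v hv => show G.dist x v ≤ r2 by
    have := hc.dist_triangle (u := x) (v := c m) (w := v); omega) (c l)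
  have hle : G.dist (c m) (c l) ≤ ρ := by
    have := hc.dist_triangle (u := c m) (v := x) (w := c l)
    rw [SimpleGraph.dist_comm (u := c m) (v := x)] at this; omega
  rw [vf, if_pos hle, SimpleGraph.dist_comm, hd, ← treeGreen_eq] at this
  exact this

lemma cov_cross (hβ : 0 < β) (S : Spec G (D + 1) β Nn b lam) (hD : 2 ≤ D) (hc : G.Connected)
    (hreg : GFF.IsReg G (D + 1)) {r ρ r2 : ℕ} (hρ : 1 ≤ ρ) (hr2 : r + 2 * ρ + 1 ≤ r2)
    {x x' : V} (hx' : (G.induce (GFF.gball G x' r2)).IsAcyclic) {c c' : List (Fin D) → V} (hC : Code G c)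
    (hcx : c [] = x) (hC' : Code G c') (hcx' : c' [] = x') (hfar : ρ + 2 * r < G.dist x x')
    (l m : List (Fin D)) (hl : l.length ≤ r) (hm : m.length ≤ r) :
    |GFF.zGreen G (D + 1) Nn (c l) (c' m)| ≤
      4 * (D : ℝ) ^ 2 / β * √((3 / 4) ^ ρ) + 4 * ((D : ℝ) + 1) ^ ρ / Nn := by
  have dl := hC.dist_le hc l
  have dm := hC'.dist_le hc m
  rw [hcx] at dl
  rw [hcx'] at dm
  have := green_compare hβ S hD hc hreg (UP_of_acyclic hx') hρ (z := c' m) (fun v hv => show G.dist x' v ≤ r2 by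
    have := hc.dist_triangle (u := x') (v := c' m) (w := v); omega) (c l)
  have hle : ¬ G.dist (c' m) (c l) ≤ ρ := by
    have h1 := hc.dist_triangle (u := x) (v := c l) (w := x')
    have h2 := hc.dist_triangle (u := c l) (v := c' m) (w := x')
    rw [SimpleGraph.dist_comm (u := c' m) (v := x')] at h2
    rw [SimpleGraph.dist_comm (u := c' m)]
    omega
  rw [vf, if_neg hle, sub_zero] at this
  exact this

end

lemma LipB.pair {ι : Type} [Fintype ι] {L : ℝ} {Φ : (ι → ℝ) → ℝ} (hΦ : LipB L Φ) :
    LipB L (fun a : ι ⊕ ι → ℝ => Φ (fun i => a (Sum.inl i)) * Φ (fun i => a (Sum.inr i))) := by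
  refine ⟨hΦ.nonneg, ?_, fun a => ?_, fun a b => ?_⟩
  · exact (hΦ.meas.comp (by fun_prop)).mul (hΦ.meas.comp (by fun_prop))
  · rw [abs_mul]; exact mul_le_one₀ (hΦ.bdd _) (abs_nonneg _) (hΦ.bdd _)
  · rw [Fintype.sum_sum_type, mul_add]
    have h1 := hΦ.lip (fun i => a (Sum.inl i)) (fun i => b (Sum.inl i))
    have h2 := hΦ.lip (fun i => a (Sum.inr i)) (fun i => b (Sum.inr i))
    have b1 := hΦ.bdd (fun i => a (Sum.inr i))
    have b2 := hΦ.bdd (fun i => b (Sum.inl i))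
    generalize Φ (fun i => a (Sum.inl i)) = p at *
    generalize Φ (fun i => a (Sum.inr i)) = q at *
    generalize Φ (fun i => b (Sum.inl i)) = p' at *
    generalize Φ (fun i => b (Sum.inr i)) = q' at *
    calc |p * q - p' * q'| = |(p - p') * q + p' * (q - q')| := by congr 1; ring
      _ ≤ |p - p'| * |q| + |p'| * |q - q'| := by
        rw [← abs_mul, ← abs_mul]; exact abs_add_le _ _
      _ ≤ |p - p'| * 1 + 1 * |q - q'| := by gcongr
      _ ≤ _ := by linarith

/-- the error in the Gaussian comparison -/
noncomputable def Er (D : ℕ) (β : ℝ) (ρ Nn : ℕ) : ℝ :=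
  4 * (D : ℝ) ^ 2 / β * √((3 / 4) ^ ρ) + 4 * ((D : ℝ) + 1) ^ ρ / Nn

lemma Er_nonneg {D : ℕ} {β : ℝ} (hβ : 0 < β) (ρ Nn : ℕ) : 0 ≤ Er D β ρ Nn := by
  unfold Er; positivity

/-- the error in the comparison of expectations -/
noncomputable def Ee (L n e : ℝ) : ℝ := 4 * L * (n * √((2 * n + 1) * e))

lemma Ee_ge {L n e : ℝ} (hL : 0 ≤ L) (hn : 0 ≤ n) (he : 0 ≤ e) :
    2 * L * (n * √((n + 1) * e)) ≤ Ee L n e := by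
  unfold Ee
  have : √((n + 1) * e) ≤ √((2 * n + 1) * e) := by
    apply Real.sqrt_le_sqrt; gcongr; linarith
  have h0 : 0 ≤ √((n + 1) * e) := Real.sqrt_nonneg _
  calc 2 * L * (n * √((n + 1) * e)) ≤ 4 * L * (n * √((n + 1) * e)) := by
        gcongr; norm_num
    _ ≤ _ := by gcongr

section
variable {V : Type} [Fintype V] {G : SimpleGraph V} {D : ℕ} {β : ℝ} {Nn : ℕ} {b : V → V → ℝ} {lam : V → ℝ}

theorem finite_bound (hβ : 0 < β) (S : Spec G (D + 1) β Nn b lam) (hD : 2 ≤ D) (hc : G.Connected)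
    (hreg : GFF.IsReg G (D + 1)) (hcard : Nat.card V = Nn) {μ : Measure (V → ℝ)}
    (hμ : GFF.IsGaussianField μ (GFF.zGreen G (D + 1) Nn))
    {r ρ r2 : ℕ} (hρ : 1 ≤ ρ) (hρr : 2 * r ≤ ρ) (hr2 : r + 2 * ρ + 1 ≤ r2)
    {T : Type} {Gt : SimpleGraph T} (hct : Gt.Connected) (hat : Gt.IsAcyclic) {μT : Measure (T → ℝ)}
    {w : List (Fin D) → T} (hw : Code Gt w)
    (hT : TreeField D μT (fun l ω => ω (w l)) (fun l m => GFF.treeGreen Gt (D + 1) (w l) (w m)))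
    {c : V → List (Fin D) → V} (hC : ∀ x, Code G (c x)) (hcx : ∀ x, c x [] = x)
    {L : ℝ} {Φ : (WL D r → ℝ) → ℝ} (hΦ : LipB L Φ) {t : ℝ} (ht : 0 < t) :
    μ.real {ω | ∑ x with (G.induce (GFF.gball G x r2)).IsAcyclic, Φ (fun l => ω (c x l)) <
        ((Finset.univ.filter fun x => (G.induce (GFF.gball G x r2)).IsAcyclic).card : ℝ) *
          (∫ ω, Φ (fun l => ω (w l)) ∂μT) - t * Nn} ≤
      (3 * Ee L ((WL D r).card : ℝ) (Er D β ρ Nn) + 4 * (2 * ((D : ℝ) + 1) ^ (ρ + 2 * r)) / Nn) / t ^ 2 := by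
  have hp := hμ.1
  have hpT : IsProbabilityMeasure μT := (hT.gv (fun i : WL D r => (i : List (Fin D)))).prob
  have he := Er_nonneg (D := D) hβ ρ Nn
  have hcT : Fintype.card (WL D r) = (WL D r).card := Fintype.card_coe _
  have hGV : ∀ {ι : Type} [Fintype ι] (e : ι → V), GV μ (fun i ω => ω (e i))
      (fun i j => GFF.zGreen G (D + 1) Nn (e i) (e j)) := fun e =>
    gf_GV hμ (fun i j => S.green_symm hβ i j) (fun i => S.green_diag hβ i) (fun i j => S.green_psd hβ i j) e
  have gT := hT.gv (fun i : WL D r => (i : List (Fin D)))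
  have hV : Nonempty V := hc.nonempty
  have hNpos : 0 < Nn := by rw [← hcard]; exact Nat.card_pos
  refine cheb (P := μ) (Finset.univ.filter fun x => (G.induce (GFF.gball G x r2)).IsAcyclic)
    (X := fun x ω => Φ (fun l => ω (c x l))) (fun x _ => hΦ.meas.comp (by fun_prop)) (fun x _ ω => hΦ.bdd _)
    ?_ ?_ ?_ (fun x y => ρ + 2 * r < G.dist x y) ?_ (by positivity) ?_ ht (by exact_mod_cast hNpos) ?_
  · have : ‖∫ ω, Φ (fun l => ω (w l)) ∂μT‖ ≤ 1 * μT.real univ :=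
      norm_integral_le_of_norm_le_const (Eventually.of_forall fun ω => hΦ.bdd _)
    simpa using this
  · unfold Ee; have := hΦ.nonneg; positivity
  · intro x hx
    have hx : (G.induce (GFF.gball G x r2)).IsAcyclic := (Finset.mem_filter.1 hx).2
    have := gauss_compare (hGV (fun l : WL D r => c x l)) gT he (fun l m =>
      cov_same hβ S hD hc hreg hρ hρr hr2 hx (hC x) (hcx x) hct hat hw l m (mem_WL.1 l.2) (mem_WL.1 m.2)) hΦ
    refine this.trans ?_
    rw [hcT]
    exact Ee_ge hΦ.nonneg (by positivity) he
  · intro x hx y hy hf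
    have hx : (G.induce (GFF.gball G x r2)).IsAcyclic := (Finset.mem_filter.1 hx).2
    have hy : (G.induce (GFF.gball G y r2)).IsAcyclic := (Finset.mem_filter.1 hy).2
    have hf' : ρ + 2 * r < G.dist y x := by rw [SimpleGraph.dist_comm]; exact hf
    have := gauss_compare (hGV (Sum.elim (fun l : WL D r => c x l) (fun l : WL D r => c y l))) (gT.pair gT) he
      (by
        rintro (l | l) (m | m)
        · exact cov_same hβ S hD hc hreg hρ hρr hr2 hx (hC x) (hcx x) hct hat hw l m (mem_WL.1 l.2) (mem_WL.1 m.2)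
        · simp only [Sum.elim_inl, Sum.elim_inr, sub_zero]
          exact cov_cross hβ S hD hc hreg hρ hr2 hy (hC x) (hcx x) (hC y) (hcx y) hf l m (mem_WL.1 l.2) (mem_WL.1 m.2)
        · simp only [Sum.elim_inl, Sum.elim_inr, sub_zero]
          exact cov_cross hβ S hD hc hreg hρ hr2 hx (hC y) (hcx y) (hC x) (hcx x) hf' l m (mem_WL.1 l.2) (mem_WL.1 m.2)
        · exact cov_same hβ S hD hc hreg hρ hρr hr2 hy (hC y) (hcx y) hct hat hw l m (mem_WL.1 l.2) (mem_WL.1 m.2))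
      hΦ.pair
    simp only [Sum.elim_inl, Sum.elim_inr] at this
    rw [integral_prod_mul (μ := μT) (ν := μT) (fun ω => Φ (fun i : WL D r => ω (w i)))
      (fun ω => Φ (fun i : WL D r => ω (w i)))] at this
    refine this.trans (le_of_eq ?_)
    rw [Fintype.card_sum, hcT, Ee]
    push_cast
    rw [← two_mul]; ring
  · intro x hx
    have h1 := ball_card hD hc hreg x (ρ + 2 * r)
    have h2 : ((Finset.univ.filter fun x => (G.induce (GFF.gball G x r2)).IsAcyclic).filter
        fun y => ¬ ρ + 2 * r < G.dist x y).card ≤ (Finset.univ.filter fun y => G.dist x y ≤ ρ + 2 * r).card :=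
      Finset.card_le_card fun y hy => by
        have := (Finset.mem_filter.1 hy).2
        simp only [Finset.mem_filter, Finset.mem_univ, true_and]; omega
    have h3 : ((Finset.univ.filter fun x => (G.induce (GFF.gball G x r2)).IsAcyclic).filter
        fun y => ¬ ρ + 2 * r < G.dist x y).card ≤ 2 * (D + 1) ^ (ρ + 2 * r) := by omega
    have h5 : ∀ k : ℕ, k ≤ 2 * (D + 1) ^ (ρ + 2 * r) → (k : ℝ) ≤ 2 * ((D : ℝ) + 1) ^ (ρ + 2 * r) :=
      fun k hk => by exact_mod_cast hk
    refine h5 _ ?_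
    convert h3
  · rw [← hcard, Nat.card_eq_fintype_card]
    exact_mod_cast Finset.card_le_univ _

end

end SMC

namespace SMC

/-! ### Part 10: assembly -/

section
variable {V : Type} [Fintype V] {G : SimpleGraph V} {D : ℕ} {β : ℝ} {Nn : ℕ} {b : V → V → ℝ} {lam : V → ℝ}

lemma exists_codes (hc : G.Connected) (hreg : GFF.IsReg G (D + 1)) :
    ∃ c : V → List (Fin D) → V, (∀ x, Code G (c x)) ∧ ∀ x, c x [] = x := by
  have : ∀ x : V, ∃ c : List (Fin D) → V, Code G c ∧ c [] = x := fun x => by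
    have h1 := hreg x
    have : Nonempty (G.neighborSet x) := by
      by_contra hcon
      rw [not_nonempty_iff] at hcon
      rw [Nat.card_of_isEmpty] at h1; omega
    obtain ⟨⟨x', hx'⟩⟩ := this
    obtain ⟨c, h1, h2, _⟩ := exists_code hreg (show G.Adj x x' from hx')
    exact ⟨c, h1, h2⟩
  choose c h1 h2 using this
  exact ⟨c, h1, h2⟩

theorem per_graph (hβ : 0 < β) (hgap : GFF.SpectralGapLB G (D + 1) β) (hD : 2 ≤ D) (hc : G.Connected)
    (hreg : GFF.IsReg G (D + 1)) (hcard : Nat.card V = Nn) {μ : Measure (V → ℝ)}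
    (hμ : GFF.IsGaussianField μ (GFF.zGreen G (D + 1) Nn))
    {r ρ r2 : ℕ} (hρ : 1 ≤ ρ) (hρr : 2 * r ≤ ρ) (hr2 : r + 2 * ρ + 1 ≤ r2)
    {T : Type} {Gt : SimpleGraph T} (hct : Gt.Connected) (hat : Gt.IsAcyclic) {μT : Measure (T → ℝ)}
    {w : List (Fin D) → T} (hw : Code Gt w)
    (hT : TreeField D μT (fun l ω => ω (w l)) (fun l m => GFF.treeGreen Gt (D + 1) (w l) (w m)))
    {h h1 M η q : ℝ} (hh : h < h1) (hη0 : 0 < η) (hη1 : η ≤ 1)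
    (hM : 3 / 4 * η ≤ μT.real {ω | M ≤ (Z r h1 (fun l => ω (w l)) : ℝ)}) (hq : q ≤ M)
    (hbad : ((Finset.univ.filter fun x => ¬ (G.induce (GFF.gball G x r2)).IsAcyclic).card : ℝ) ≤ η / 8 * Nn) :
    1 - (3 * Ee (1 / (h1 - h)) ((WL D r).card : ℝ) (Er D β ρ Nn) +
        4 * (2 * ((D : ℝ) + 1) ^ (ρ + 2 * r)) / Nn) / (η / 8) ^ 2 ≤
      μ.real {ω | η / 2 * (Nn : ℝ) ≤ (({x : V | q ≤ ((GFF.levelComp G h ω x).ncard : ℝ)}).ncard : ℝ)} := by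
  obtain ⟨b, lam, S⟩ := exists_spec (Nat.succ_pos D) hc hreg hgap hcard
  obtain ⟨c, hC, hcx⟩ := exists_codes hc hreg
  obtain ⟨Φ, hΦ, hΦ0, hΦ1, hΦ2⟩ := exists_test (D := D) r M hh
  have hp := hμ.1
  have hpT : IsProbabilityMeasure μT := (hT.gv (fun i : WL D r => (i : List (Fin D)))).prob
  have hfb := finite_bound hβ S hD hc hreg hcard hμ hρ hρr hr2 hct hat hw hT hC hcx hΦ
    (t := η / 8) (by positivity)
  set m := ∫ ω, Φ (fun l : WL D r => ω (w l)) ∂μT with hm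
  set good := Finset.univ.filter fun x => (G.induce (GFF.gball G x r2)).IsAcyclic with hgood
  have hΦle : ∀ a, Φ a ≤ 1 := fun a => (abs_le.1 (hΦ.bdd a)).2
  have hmm : 3 / 4 * η ≤ m := by
    refine hM.trans ?_
    have hms : MeasurableSet {ω : T → ℝ | M ≤ (Z r h1 (fun l => ω (w l)) : ℝ)} := by
      have : Measurable fun ω : T → ℝ => (Z r h1 (fun l => ω (w l)) : ℝ) :=
        (meas_Z r h1).comp (measurable_pi_lambda _ fun l => measurable_pi_apply _)
      exact measurableSet_le measurable_const this
    rw [← integral_indicator_one hms]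
    refine integral_mono ((integrable_const (1 : ℝ)).indicator hms) ?_ fun ω => ?_
    · exact Integrable.of_bound (hΦ.meas.comp (by fun_prop)).aestronglyMeasurable 1
        (Eventually.of_forall fun ω => hΦ.bdd _)
    · by_cases hω : M ≤ (Z r h1 (fun l => ω (w l)) : ℝ)
      · have e : Z r h1 (ext (fun l : WL D r => ω (w l))) = Z r h1 (fun l => ω (w l)) := by
          refine congrArg Finset.card (Finset.filter_congr fun l hl => ?_)
          exact alive_ext (η := fun l => ω (w l)) (mem_words.1 hl).le
        have := hΦ1 (fun l : WL D r => ω (w l)) (by rw [e]; exact hω)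
        show _ ≤ Φ (fun l : WL D r => ω (w l))
        rw [this]
        rw [Set.indicator_of_mem (show ω ∈ {ω : T → ℝ | M ≤ (Z r h1 (fun l => ω (w l)) : ℝ)} from hω)]
        simp
      · rw [Set.indicator_of_notMem (show ω ∉ {ω : T → ℝ | M ≤ (Z r h1 (fun l => ω (w l)) : ℝ)} from hω)]
        exact hΦ0 _
  have hm0 : 0 ≤ m := by linarith [hη0]
  have hm1 : m ≤ 1 := by
    have : ‖m‖ ≤ 1 * μT.real univ :=
      norm_integral_le_of_norm_le_const (Eventually.of_forall fun ω => hΦ.bdd _)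
    simp at this
    exact (abs_le.1 this).2
  have hgc : (good.card : ℝ) ≥ Nn - η / 8 * Nn := by
    have := Finset.card_filter_add_card_filter_not (s := (Finset.univ : Finset V))
      (fun x => (G.induce (GFF.gball G x r2)).IsAcyclic)
    rw [Finset.card_univ, ← Nat.card_eq_fintype_card, hcard] at this
    have h2 : (good.card : ℝ) + ((Finset.univ.filter fun x => ¬ (G.induce (GFF.gball G x r2)).IsAcyclic).card : ℝ) = Nn := by
      exact_mod_cast this
    linarith
  have hincl : {ω | ∑ x ∈ good, Φ (fun l => ω (c x l)) < (good.card : ℝ) * m - η / 8 * Nn}ᶜ ⊆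
      {ω | η / 2 * (Nn : ℝ) ≤ (({x : V | q ≤ ((GFF.levelComp G h ω x).ncard : ℝ)}).ncard : ℝ)} := by
    intro ω hω
    have hω : (good.card : ℝ) * m - η / 8 * Nn ≤ ∑ x ∈ good, Φ (fun l => ω (c x l)) := not_lt.1 hω
    show η / 2 * (Nn : ℝ) ≤ (({x : V | q ≤ ((GFF.levelComp G h ω x).ncard : ℝ)}).ncard : ℝ)
    have hN0 : (0 : ℝ) ≤ Nn := by positivity
    have e1 : ∑ x ∈ good, Φ (fun l => ω (c x l)) ≤
        ∑ x ∈ good, if q ≤ ((GFF.levelComp G h ω x).ncard : ℝ) then (1 : ℝ) else 0 := by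
      refine Finset.sum_le_sum fun x hx => ?_
      split_ifs with hqx
      · exact hΦle _
      · refine not_lt.1 fun hpos => hqx ?_
        have hx : (G.induce (GFF.gball G x r2)).IsAcyclic := (Finset.mem_filter.1 hx).2
        have h2 := hΦ2 _ hpos
        have e : Z r h (ext (fun l : WL D r => ω (c x l))) = Z r h (fun l => ω (c x l)) := by
          refine congrArg Finset.card (Finset.filter_congr fun l hl => ?_)
          exact alive_ext (η := fun l => ω (c x l)) (mem_words.1 hl).le
        rw [e] at h2
        have h3 := (hC x).Z_le hc (UP_of_acyclic hx) (r := r)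
          (fun v hv => show G.dist x v ≤ r2 by rw [hcx] at hv; omega) h ω
        rw [hcx] at h3
        have h3' : (Z r h (fun l => ω (c x l)) : ℝ) ≤ ((GFF.levelComp G h ω x).ncard : ℝ) := by
          exact_mod_cast h3
        linarith
    have e2 : (∑ x ∈ good, if q ≤ ((GFF.levelComp G h ω x).ncard : ℝ) then (1 : ℝ) else 0) ≤
        (({x : V | q ≤ ((GFF.levelComp G h ω x).ncard : ℝ)}).ncard : ℝ) := by
      rw [Finset.sum_boole, Set.ncard_eq_toFinset_card']
      have : ((good.filter fun x => q ≤ ((GFF.levelComp G h ω x).ncard : ℝ)).card) ≤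
          ({x : V | q ≤ ((GFF.levelComp G h ω x).ncard : ℝ)}).toFinset.card :=
        Finset.card_le_card fun x hx => by
          rw [Set.mem_toFinset]; exact (Finset.mem_filter.1 hx).2
      exact_mod_cast this
    have e3 : (Nn - η / 8 * Nn) * m ≤ good.card * m := mul_le_mul_of_nonneg_right hgc hm0
    have e4 : η / 8 * Nn * m ≤ η / 8 * Nn * 1 := mul_le_mul_of_nonneg_left hm1 (by positivity)
    have e5 : (Nn : ℝ) * (3 / 4 * η) ≤ Nn * m := mul_le_mul_of_nonneg_left hmm hN0
    nlinarith
  have hmsA : MeasurableSet {ω : V → ℝ | ∑ x ∈ good, Φ (fun l => ω (c x l)) < (good.card : ℝ) * m - η / 8 * Nn} := by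
    refine measurableSet_lt (Finset.measurable_sum _ fun x _ => ?_) measurable_const
    exact hΦ.meas.comp (by fun_prop)
  have h4 := measureReal_mono (μ := μ) hincl
  rw [probReal_compl_eq_one_sub hmsA] at h4
  refine le_trans ?_ h4
  exact sub_le_sub_left hfb 1

end

lemma sqrt_pow' {a : ℝ} (ha : 0 ≤ a) (n : ℕ) : √(a ^ n) = √a ^ n := by
  rw [Real.sqrt_eq_iff_mul_self_eq (by positivity) (by positivity), ← mul_pow, Real.mul_self_sqrt ha]

/-- final error -/
noncomputable def Fe (D : ℕ) (β L : ℝ) (s : ℕ) : ℝ :=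
  12 * L * √(3 * ((4 * (D : ℝ) ^ 2 / β + 4) * (1 / 2) ^ s)) + 8 * (1 / 2) ^ s

lemma Fe_tendsto (D : ℕ) (β L : ℝ) : Tendsto (Fe D β L) atTop (nhds 0) := by
  have h1 : Tendsto (fun s : ℕ => ((1 : ℝ) / 2) ^ s) atTop (nhds 0) :=
    tendsto_pow_atTop_nhds_zero_of_lt_one (by norm_num) (by norm_num)
  have h2 : Tendsto (fun s : ℕ => 12 * L * √(3 * ((4 * (D : ℝ) ^ 2 / β + 4) * (1 / 2) ^ s)) + 8 * ((1 : ℝ) / 2) ^ s)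
      atTop (nhds (12 * L * √(3 * ((4 * (D : ℝ) ^ 2 / β + 4) * 0)) + 8 * 0)) :=
    ((((h1.const_mul _).const_mul _).sqrt).const_mul _).add (h1.const_mul _)
  rw [mul_zero, mul_zero, mul_zero, Real.sqrt_zero, mul_zero, add_zero] at h2
  exact h2

lemma err_bound {D k s r ρ N : ℕ} {β L n : ℝ} (hβ : 0 < β) (hL : 0 ≤ L) (hD : 2 ≤ D)
    (hk : (D : ℝ) ^ 3 * √(3 / 4) ^ k ≤ 1 / 2) (hN0 : 0 < N)
    (hN : (2 * ((D : ℝ) + 1) ^ (k + 3)) ^ s ≤ N) (hs : r + 1 = s) (hρ : ρ = k * s) (hn0 : 0 ≤ n)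
    (hn1 : 1 ≤ (D : ℝ) ^ s) (hn : n ≤ (D : ℝ) ^ s) :
    3 * Ee L n (Er D β ρ N) + 4 * (2 * ((D : ℝ) + 1) ^ (ρ + 2 * r)) / N ≤ Fe D β L s := by
  have hN' : (0 : ℝ) < N := by exact_mod_cast hN0
  have hEr := Er_nonneg (D := D) hβ ρ N
  have hpow : ((D : ℝ) + 1) ^ ((k + 3) * s) / N ≤ (1 / 2) ^ s := by
    rw [div_le_iff₀ hN', one_div, inv_pow, pow_mul, ← div_eq_inv_mul, le_div_iff₀ (by positivity), ← mul_pow, mul_comm]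
    exact hN
  have hD1 : (1 : ℝ) ≤ (D : ℝ) + 1 := by have : (0 : ℝ) ≤ D := by positivity
                                         linarith
  have key : ((D : ℝ) ^ s) ^ 3 * Er D β ρ N ≤ (4 * (D : ℝ) ^ 2 / β + 4) * (1 / 2) ^ s := by
    rw [Er, mul_add, add_mul]
    refine add_le_add ?_ ?_
    · calc ((D : ℝ) ^ s) ^ 3 * (4 * (D : ℝ) ^ 2 / β * √((3 / 4) ^ ρ))
          = 4 * (D : ℝ) ^ 2 / β * ((D : ℝ) ^ 3 * √(3 / 4) ^ k) ^ s := by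
            rw [sqrt_pow' (by norm_num), hρ, mul_pow, ← pow_mul, ← pow_mul, ← pow_mul, mul_comm s 3]; ring
        _ ≤ _ := by gcongr
    · calc ((D : ℝ) ^ s) ^ 3 * (4 * ((D : ℝ) + 1) ^ ρ / N)
          ≤ (((D : ℝ) + 1) ^ s) ^ 3 * (4 * ((D : ℝ) + 1) ^ ρ / N) := by gcongr; linarith
        _ = 4 * (((D : ℝ) + 1) ^ ((k + 3) * s) / N) := by rw [hρ]; ring
        _ ≤ _ := by gcongr
  refine add_le_add ?_ ?_
  · have h1 : n * √((2 * n + 1) * Er D β ρ N) ≤ √(3 * ((4 * (D : ℝ) ^ 2 / β + 4) * (1 / 2) ^ s)) := by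
      refine Real.le_sqrt_of_sq_le ?_
      rw [mul_pow, Real.sq_sqrt (by positivity)]
      calc n ^ 2 * ((2 * n + 1) * Er D β ρ N)
          ≤ ((D : ℝ) ^ s) ^ 2 * ((2 * (D : ℝ) ^ s + (D : ℝ) ^ s) * Er D β ρ N) := by gcongr
        _ = 3 * (((D : ℝ) ^ s) ^ 3 * Er D β ρ N) := by ring
        _ ≤ _ := by gcongr
    unfold Ee
    calc _ = 12 * L * (n * √((2 * n + 1) * Er D β ρ N)) := by ring
      _ ≤ _ := by gcongr
  · calc 4 * (2 * ((D : ℝ) + 1) ^ (ρ + 2 * r)) / N = 8 * (((D : ℝ) + 1) ^ (ρ + 2 * r) / N) := by ring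
      _ ≤ 8 * (((D : ℝ) + 1) ^ ((k + 3) * s) / N) := by
          gcongr
          rw [hρ, add_mul]; omega
      _ ≤ _ := by gcongr

end SMC

namespace SMC

lemma params {D : ℕ} (hD : 2 ≤ D) {α δ Q : ℝ} (hα : 0 < α) (hδ : 0 < δ) (hQ : 1 ≤ Q) (j n0 A : ℕ) (hj : 1 ≤ j) :
    ∃ c : ℝ, 0 < c ∧ ∃ i : ℕ → ℕ, Tendsto i atTop atTop ∧ ∀ᶠ N : ℕ in atTop,
      A * (n0 + j * i N + 1) ≤ ⌊α * Real.logb (D : ℝ) (N : ℝ)⌋₊ ∧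
      Q ^ (n0 + j * i N + 1) ≤ (N : ℝ) ∧ (N : ℝ) ^ c ≤ δ * (3 / 2) ^ (i N) := by
  have hD2 : (2 : ℝ) ≤ D := by exact_mod_cast hD
  have hlD : 0 < Real.log D := Real.log_pos (by linarith)
  have hj' : (1 : ℝ) ≤ j := by exact_mod_cast hj
  have hlQ : 0 ≤ Real.log Q := Real.log_nonneg hQ
  have hg : 0 < Real.log (3 / 2) := Real.log_pos (by norm_num)
  set Λ : ℝ := A * Real.log D / α + Real.log Q + 1 with hΛ
  have hΛ1 : A * Real.log D / α ≤ Λ := by rw [hΛ]; linarith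
  have hΛ2 : Real.log Q ≤ Λ := by
    have : 0 ≤ A * Real.log D / α := by positivity
    rw [hΛ]; linarith
  have hΛ0 : 0 < Λ := by rw [hΛ]; positivity
  have hB : 0 < 2 * j * Λ := by positivity
  have hx : Tendsto (fun N : ℕ => Real.log (N : ℝ)) atTop atTop :=
    Real.tendsto_log_atTop.comp tendsto_natCast_atTop_atTop
  refine ⟨Real.log (3 / 2) / (4 * j * Λ), by positivity, fun N => ⌊Real.log N / (2 * j * Λ)⌋₊, ?_, ?_⟩
  · exact tendsto_nat_floor_atTop.comp (hx.atTop_div_const hB)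
  · filter_upwards [hx.eventually_ge_atTop (2 * Λ * (n0 + 1)), hx.eventually_ge_atTop 0,
      hx.eventually_ge_atTop ((Real.log (3 / 2) - Real.log δ) * (4 * j * Λ) / Real.log (3 / 2)),
      eventually_ge_atTop 1] with N h1 h2 h3 h4
    have hN : (0 : ℝ) < N := by exact_mod_cast h4
    set x := Real.log (N : ℝ) with hxd
    set i := ⌊x / (2 * j * Λ)⌋₊ with hi
    have i1 : (i : ℝ) ≤ x / (2 * j * Λ) := Nat.floor_le (by positivity)
    have i2 : x / (2 * j * Λ) < i + 1 := Nat.lt_floor_add_one _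
    have hs : ((n0 + j * i + 1 : ℕ) : ℝ) * Λ ≤ x := by
      rw [le_div_iff₀ hB] at i1
      push_cast
      nlinarith
    refine ⟨?_, ?_, ?_⟩
    · refine Nat.le_floor ?_
      rw [Real.logb, ← hxd]
      have h5 : (A * Real.log D / α) * ((n0 + j * i + 1 : ℕ) : ℝ) ≤ x :=
        (mul_le_mul_of_nonneg_right hΛ1 (by positivity)).trans (by linarith)
      rw [div_mul_eq_mul_div, div_le_iff₀ hα] at h5
      rw [Nat.cast_mul, ← mul_div_assoc, le_div_iff₀ hlD]
      linarith
    · have hQ0 : 0 < Q := by linarith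
      rw [← Real.log_le_log_iff (by positivity) hN, Real.log_pow, ← hxd]
      exact (mul_le_mul_of_nonneg_left hΛ2 (by positivity)).trans hs
    · rw [← Real.log_le_log_iff (by positivity) (by positivity), Real.log_rpow hN, Real.log_mul hδ.ne' (by positivity),
        Real.log_pow, ← hxd]
      rw [div_lt_iff₀ hB] at i2
      rw [div_le_iff₀ hg] at h3
      have h4B : 0 < 4 * j * Λ := by positivity
      rw [div_mul_eq_mul_div, div_le_iff₀ h4B]
      nlinarith

theorem main_pos (D : ℕ) (hD : 2 ≤ D)
    (V : ℕ → Type) [∀ n, Fintype (V n)]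
    (G : ∀ n, SimpleGraph (V n)) (N : ℕ → ℕ) (α β : ℝ) (hα : 0 < α) (hβ : 0 < β)
    (hNmono : StrictMono N) (hNpos : ∀ n, 1 ≤ N n)
    (hcard : ∀ n, Nat.card (V n) = N n)
    (hconn : ∀ n, (G n).Connected)
    (hreg : ∀ n, GFF.IsReg (G n) (D + 1))
    (hcyc : ∀ n (x : V n),
      GFF.adjPairs (G n) (GFF.gball (G n) x ⌊α * Real.logb (D : ℝ) (N n : ℝ)⌋₊) ≤
        2 * (GFF.gball (G n) x ⌊α * Real.logb (D : ℝ) (N n : ℝ)⌋₊).ncard)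
    (hgap : ∀ n, GFF.SpectralGapLB (G n) (D + 1) β)
    (μ : ∀ n, Measure (V n → ℝ))
    (hμ : ∀ n, GFF.IsGaussianField (μ n) (GFF.zGreen (G n) (D + 1) (N n)))
    (T : Type) (Gt : SimpleGraph T) (o obar : T) (hobar : Gt.Adj o obar)
    (htree : GFF.IsRegTree Gt (D + 1))
    (μT : Measure (T → ℝ)) (hμT : GFF.IsGaussianField μT (GFF.treeGreen Gt (D + 1)))
    (h η : ℝ) (hη : GFF.etaPlus Gt o obar μT h = η) (hη0 : 0 < η) (hη1 : η ≤ 1) :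
    ∃ c : ℝ, 0 < c ∧
      Tendsto (fun n => (μ n).real {ω | η / 2 * (N n : ℝ) ≤
            (({x : V n | (N n : ℝ) ^ c ≤
              ((GFF.levelComp (G n) h ω x).ncard : ℝ)}).ncard : ℝ)}) atTop (nhds 1) := by
  have hD2 : (2 : ℝ) ≤ D := by exact_mod_cast hD
  obtain ⟨w, hw, hT, hsurv⟩ := tree_part hD hobar htree hμT
  obtain ⟨h1, hh, j, n0, δ, hj, hδ, hgrow⟩ := tree_growth hD hT (h := h) hη0 (show 3 / 4 * η < η by linarith)
    (fun n => by have := hsurv h n; rw [hη] at this; exact this)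
  have hsq1 : √(3 / 4 : ℝ) < 1 := by rw [Real.sqrt_lt' one_pos]; norm_num
  have hsq0 : 0 ≤ √(3 / 4 : ℝ) := Real.sqrt_nonneg _
  obtain ⟨k0, hk0⟩ := exists_pow_lt_of_lt_one (show (0 : ℝ) < 1 / 2 / (D : ℝ) ^ 3 by positivity) hsq1
  obtain ⟨k, hk2, hk⟩ : ∃ k, 2 ≤ k ∧ (D : ℝ) ^ 3 * √(3 / 4) ^ k ≤ 1 / 2 := by
    refine ⟨k0 + 2, by omega, ?_⟩
    rw [lt_div_iff₀ (by positivity)] at hk0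
    have : √(3 / 4 : ℝ) ^ (k0 + 2) ≤ √(3 / 4) ^ k0 := pow_le_pow_of_le_one hsq0 hsq1.le (by omega)
    have : √(3 / 4 : ℝ) ^ (k0 + 2) * (D : ℝ) ^ 3 ≤ √(3 / 4) ^ k0 * (D : ℝ) ^ 3 := by gcongr
    linarith
  obtain ⟨k', hk'⟩ := pow_unbounded_of_one_lt (2 * ((D : ℝ) + 1) ^ (2 * (2 * k + 1))) (show (1 : ℝ) < 3 / 2 by norm_num)
  have hQ : (1 : ℝ) ≤ 2 * ((D : ℝ) + 1) ^ (k + 3) := by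
    have : (1 : ℝ) ≤ ((D : ℝ) + 1) ^ (k + 3) := one_le_pow₀ (by linarith)
    linarith
  obtain ⟨c, hc, i, hi, hev⟩ := params hD hα hδ hQ j n0 (k' + (2 * k + 1)) hj
  refine ⟨c, hc, ?_⟩
  have hNt : Tendsto N atTop atTop := hNmono.tendsto_atTop
  set s : ℕ → ℕ := fun n => n0 + j * i (N n) + 1 with hsdef
  have hst : Tendsto s atTop atTop := by
    refine tendsto_atTop_mono (fun n => ?_) (hi.comp hNt)
    have : i (N n) ≤ j * i (N n) := Nat.le_mul_of_pos_left _ (by omega)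
    simp only [hsdef, Function.comp]; omega
  have hFe : Tendsto (fun n => 1 - Fe D β (1 / (h1 - h)) (s n) / (η / 8) ^ 2) atTop (nhds 1) := by
    have := (((Fe_tendsto D β (1 / (h1 - h))).comp hst).div_const ((η / 8) ^ 2)).const_sub 1
    simpa using this
  refine tendsto_of_tendsto_of_tendsto_of_le_of_le' hFe tendsto_const_nhds ?_
    (Eventually.of_forall fun n => by have := (hμ n).1; exact measureReal_le_one)
  have hpow0 : Tendsto (fun n => 2 * ((1 : ℝ) / 2) ^ (s n)) atTop (nhds 0) := by
    have := ((tendsto_pow_atTop_nhds_zero_of_lt_one (r := (1 : ℝ) / 2) (by norm_num) (by norm_num)).comp hst).const_mul 2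
    simpa using this
  filter_upwards [hNt.eventually hev, hpow0.eventually_lt_const (show 0 < η / 8 by positivity)] with n ⟨hR, hQN, hcN⟩ hsm
  have hsn : n0 + j * i (N n) + 1 = s n := rfl
  rw [hsn] at hR hQN
  have hN0 : 0 < N n := hNpos n
  have hN0' : (0 : ℝ) < N n := by exact_mod_cast hN0
  have hR' : k' * s n + (2 * k + 1) * s n ≤ ⌊α * Real.logb (D : ℝ) (N n : ℝ)⌋₊ := by rw [← add_mul]; exact hR
  have hbad0 := bad_count hD (hconn n) (hreg n) hR' (hcyc n)
  have hbad : ((Finset.univ.filter fun x => ¬ ((G n).induce (GFF.gball (G n) x ((2 * k + 1) * s n))).IsAcyclic).card : ℝ)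
      ≤ η / 8 * N n := by
    rw [← Nat.card_eq_fintype_card, hcard n] at hbad0
    set Bd : ℝ := ((Finset.univ.filter fun x => ¬ ((G n).induce (GFF.gball (G n) x ((2 * k + 1) * s n))).IsAcyclic).card : ℝ)
    have hBd : 0 ≤ Bd := by positivity
    set y : ℝ := ((D : ℝ) + 1) ^ (2 * (2 * k + 1)) with hy
    have hy0 : 0 < y := by positivity
    have e1 : ((D : ℝ) + 1) ^ (2 * ((2 * k + 1) * s n)) = y ^ s n := by rw [hy, ← pow_mul]; ring
    have e2 : (2 * y) ^ s n ≤ ((3 : ℝ) / 2) ^ (k' * s n) := by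
      rw [pow_mul]; gcongr
    rw [e1] at hbad0
    have e3 : Bd * (2 * y) ^ s n ≤ N n * (2 * y ^ s n) := (mul_le_mul_of_nonneg_left e2 hBd).trans hbad0
    have e4 : Bd * 2 ^ s n ≤ N n * 2 := by
      rw [mul_pow] at e3
      refine le_of_mul_le_mul_right ?_ (pow_pos hy0 (s n))
      linarith
    have e5 : Bd ≤ N n * (2 * (1 / 2) ^ s n) := by
      rw [one_div, inv_pow, ← div_eq_mul_inv, ← mul_div_assoc, le_div_iff₀ (by positivity)]
      exact e4
    have e6 : (N n : ℝ) * (2 * (1 / 2) ^ s n) ≤ N n * (η / 8) := by gcongr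
    linarith
  have hs1 : 1 ≤ s n := by omega
  have hks : 2 * s n ≤ k * s n := Nat.mul_le_mul_right _ hk2
  have hmain := per_graph hβ (hgap n) hD (hconn n) (hreg n) (hcard n) (hμ n)
    (r := n0 + j * i (N n)) (ρ := k * s n) (r2 := (2 * k + 1) * s n) (by omega) (by omega)
    (by rw [add_mul, mul_assoc]; omega)
    htree.1 htree.2.1 hw hT hh hη0 hη1 (hgrow (i (N n))) hcN hbad
  refine le_trans ?_ hmain
  have hL : 0 ≤ 1 / (h1 - h) := by
    have : 0 < h1 - h := by linarith [show h < h1 from hh]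
    positivity
  have hcW : ((WL D (n0 + j * i (N n))).card : ℝ) ≤ (D : ℝ) ^ (s n) := by
    exact_mod_cast card_WL hD (n0 + j * i (N n))
  have heb := err_bound (r := n0 + j * i (N n)) (ρ := k * s n) (s := s n) hβ hL hD hk hN0 hQN rfl rfl (by positivity)
    (one_le_pow₀ (by linarith)) hcW
  gcongr

end SMC

/-- in the supercritical phase `h < h_star`, with high probability a linear
fraction of the vertices lies in mesoscopic components of the level set. -/
theorem supercritical_mesoscopic_components
    (d : ℕ) (hd : 3 ≤ d)
    (V : ℕ → Type) [∀ n, Fintype (V n)]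
    (G : ∀ n, SimpleGraph (V n)) (N : ℕ → ℕ) (α β : ℝ)
    (hα : 0 < α ∧ α ≤ 1) (hβ : 0 < β ∧ β ≤ 2)
    (hNmono : StrictMono N) (hNpos : ∀ n, 1 ≤ N n)
    (hcard : ∀ n, Nat.card (V n) = N n)
    (hconn : ∀ n, (G n).Connected)
    (hreg : ∀ n, GFF.IsReg (G n) d)
    (hcyc : ∀ n (x : V n),
      GFF.adjPairs (G n) (GFF.gball (G n) x ⌊α * Real.logb ((d : ℝ) - 1) (N n : ℝ)⌋₊) ≤
        2 * (GFF.gball (G n) x ⌊α * Real.logb ((d : ℝ) - 1) (N n : ℝ)⌋₊).ncard)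
    (hgap : ∀ n, GFF.SpectralGapLB (G n) d β)
    (μ : ∀ n, Measure (V n → ℝ))
    (hμ : ∀ n, GFF.IsGaussianField (μ n) (GFF.zGreen (G n) d (N n)))
    (T : Type) (Gt : SimpleGraph T) (o obar : T) (hobar : Gt.Adj o obar)
    (htree : GFF.IsRegTree Gt d)
    (μT : Measure (T → ℝ)) (hμT : GFF.IsGaussianField μT (GFF.treeGreen Gt d))
    (h : ℝ) (hh : h < GFF.hstar Gt o μT) :
    ∃ c : ℝ, 0 < c ∧
      Filter.Tendsto
        (fun n => μ n {ω |
          GFF.etaPlus Gt o obar μT h / 2 * (N n : ℝ) ≤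
            (({x : V n | (N n : ℝ) ^ c ≤
              ((GFF.levelComp (G n) h ω x).ncard : ℝ)}).ncard : ℝ)})
        Filter.atTop (nhds 1) := by
  obtain ⟨D, rfl⟩ : ∃ D, d = D + 1 := ⟨d - 1, by omega⟩
  have hcast : ((D + 1 : ℕ) : ℝ) - 1 = (D : ℝ) := by push_cast; ring
  simp only [hcast] at hcyc
  have hpT := hμT.1
  have hη0 : 0 ≤ GFF.etaPlus Gt o obar μT h := ENNReal.toReal_nonneg
  have hη1 : GFF.etaPlus Gt o obar μT h ≤ 1 := measureReal_le_one
  rcases hη0.eq_or_lt with h0 | h0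
  · refine ⟨1, one_pos, ?_⟩
    rw [← h0]
    refine tendsto_const_nhds.congr fun n => ?_
    have hp := (hμ n).1
    have : {ω : V n → ℝ | (0 : ℝ) / 2 * (N n : ℝ) ≤ (({x : V n | (N n : ℝ) ^ (1 : ℝ) ≤
              ((GFF.levelComp (G n) h ω x).ncard : ℝ)}).ncard : ℝ)} = Set.univ := by
      refine Set.eq_univ_of_forall fun ω => ?_
      show (0 : ℝ) / 2 * (N n : ℝ) ≤ _
      rw [zero_div, zero_mul]
      exact Nat.cast_nonneg _
    rw [this, measure_univ]
  · obtain ⟨c, hc, ht⟩ := SMC.main_pos D (by omega) V G N α β hα.1 hβ.1 hNmono hNpos hcard hconn hreg hcyc hgap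
      μ hμ T Gt o obar hobar htree μT hμT h _ rfl h0 hη1
    refine ⟨c, hc, ?_⟩
    refine (ENNReal.tendsto_toReal_iff (fun n => ?_) ENNReal.one_ne_top).1 (by rw [ENNReal.toReal_one]; exact ht)
    have hp := (hμ n).1
    exact measure_ne_top _ _
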